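/- The dual space X_iw^* has the following properties: (i) every normalized weakly null sequence in X_iw^* has a subsequence that generates a spreading model that is 4-equivalent to the unit vector basis of c0; (ii) every infinite dimensional closed subspace of X_iw^* contains an array of normalized weakly null sequences that generates the unit vector basis of ℓ1 as an asymptotic model. -/

import Mathlib

/-!
Every functional of norm one on `X_iw` is a limit of elements of the convex hull of `W_iw`; since the
basis is shrinking (`shrinking`), a functional that almost vanishes on an initial segment is close
to the convex hull `K P a b` of the functionals of `W_iw` supported in a later interval `[a, b]`
(`near_K`).

The main estimate is `admissible_sum_le`: a block sequence `f_k ∈ K P (a k) (b k)` has a subsequence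
with `∑_{k ∈ F} |f_k(x)| ≤ 2 m_j + o(1)` whenever `‖x‖ ≤ 1` and the left endpoints of the blocks
in `F` form an `S_{n_j}` set. A functional of `W_iw` supported in `[a, b]` is its first piece,
divided by a weight at least `2`, plus a functional with the same vector weight whose pieces all have
weight larger than `a`. Iterating on convex combinations (`Dec_iter`) writes `f_k` as a series
`∑_s 2^{-s} (…)` of convex combinations of functionals of the second kind, sorted by vector weight.
Along a subsequence the coefficients of each vector weight converge. Functionals of one common vector
weight `js` add up to `m_j` times an element of `W_iw` of vector weight `j :: js` (`same_key`), and
functionals whose weights escape to infinity are very fast growing, so they also add up to `m_j` times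
an element of `W_iw` (`op_of_seq`). Each level `s` thus contributes at most `m_j`, up to a small
error, and summing `2^{-s}` over the levels gives `2 m_j`.

Part (i). A normalized weakly null sequence is a small perturbation of such a block sequence, up to
a subsequence. Finitely many far out terms are `S_{n_1}`-admissible and `m_1 = 2`, so the estimate
gives an upper `c_0` bound with constant `4`; the lower bound `1` follows from unconditionality. A
further subsequence generates a spreading model (`exists_spreadingModel`).

Part (ii). In an infinite dimensional subspace `Y` of the dual a James-type argument (`james`) produces
norm one `h ∈ Y` almost normed by an averaged vector `y`, on which functionals of weight `w < m_J` act
by at most about `1 / w`: otherwise the norms of `S_{n_J p}`-admissible sums in `Y` would grow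
exponentially in `p`, against `admissible_sum_le` and `C^{n_j} / m_j → ∞`. A separation argument
(`heavy_dom`) shows that such an `h` is dominated by functionals of weight at least `m_J`. Hence, for
rapidly increasing `J`, the functionals `h_p` behave as a very fast growing sequence: the functional
`m_j⁻¹ ∑ h_p` has norm about one, and it is almost normed by the exact vector
`z = m_j ∑ c_p y_p` built on a special convex combination (`RIS.exists_goodZ`, `exists_pair`).
Signed sums of exact vectors with increasing indices `j` have norm about one (`sum_norm_le`),
so functionals in `Y` of different indices `j`, one index for each row of the array, generate `ℓ_1`.
-/
open Filter Topology
open scoped ENNReal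

noncomputable section

/-! ### Abstract Banach space notions -/

section Abstract

variable {X : Type*} [NormedAddCommGroup X] [NormedSpace ℝ X]

/-- A sequence is normalized if every term has norm one. -/
def Normalized (x : ℕ → X) : Prop := ∀ i, ‖x i‖ = 1

/-- A sequence is weakly null if it tends to `0` in the weak topology. -/
def WeaklyNull (x : ℕ → X) : Prop :=
  ∀ f : X →L[ℝ] ℝ, Tendsto (fun i => f (x i)) atTop (𝓝 (0 : ℝ))

end Abstract

/-- The ℓ₁ norm of finite coefficient vectors (the norms of finite linear
combinations of the unit vector basis of ℓ₁). -/
def l1Norm : ∀ m : ℕ, (Fin m → ℝ) → ℝ := fun _ a => ∑ i, |a i|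

/-- The sup norm of finite coefficient vectors (the norms of finite linear
combinations of the unit vector basis of c₀). -/
def supNorm : ∀ m : ℕ, (Fin m → ℝ) → ℝ := fun _ a => ⨆ i, |a i|

/-- The ℓ_p norm of finite coefficient vectors, `1 ≤ p < ∞`. -/
def lpNormFin (p : ℝ) : ∀ m : ℕ, (Fin m → ℝ) → ℝ := fun _ a => (∑ i, |a i| ^ p) ^ (1 / p)

/-- The ℓ_q norms of finite coefficient vectors, `q ∈ [1,∞]`, where `q = ∞`
corresponds to `c₀`. -/
def finLqNorm (q : ℝ≥0∞) : ∀ m : ℕ, (Fin m → ℝ) → ℝ := fun m a =>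
  if q = ⊤ then supNorm m a else lpNormFin q.toReal m a

/-- The family of seminorms `ν` (of finite combinations of a sequence in a seminormed
space) is `C`-equivalent to the family `μ`:  there are `A B > 0` with `A * B ≤ C` and
`(1/A) * μ ≤ ν ≤ B * μ`. -/
def NormFamEquiv (C : ℝ) (μ ν : ∀ m : ℕ, (Fin m → ℝ) → ℝ) : Prop :=
  ∃ A B : ℝ, 0 < A ∧ 0 < B ∧ A * B ≤ C ∧
    ∀ (m : ℕ) (a : Fin m → ℝ), (1 / A) * μ m a ≤ ν m a ∧ ν m a ≤ B * μ m a

section Abstract2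

variable {X : Type*} [NormedAddCommGroup X] [NormedSpace ℝ X]

/-- The sequence `x` generates the spreading model whose finite-combination
seminorms are given by the family `ν`. -/
def GeneratesSpreadingModel (x : ℕ → X) (ν : ∀ m : ℕ, (Fin m → ℝ) → ℝ) : Prop :=
  ∀ (m : ℕ) (a : Fin m → ℝ), ∀ ε > (0 : ℝ), ∃ N : ℕ, ∀ j : Fin m → ℕ,
    StrictMono j → (∀ i, N ≤ j i) → |‖∑ i, a i • x (j i)‖ - ν m a| < ε

/-- The array of sequences `A` (row `A i` is the `i`-th sequence) generates the
asymptotic model whose finite-combination seminorms are given by `ν`. -/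
def GeneratesAsymptoticModel (A : ℕ → ℕ → X) (ν : ∀ l : ℕ, (Fin l → ℝ) → ℝ) : Prop :=
  ∀ (l : ℕ) (a : Fin l → ℝ), ∀ ε > (0 : ℝ), ∃ N : ℕ, ∀ j : Fin l → ℕ,
    StrictMono j → (∀ i, N ≤ j i) → |‖∑ i, a i • A i (j i)‖ - ν l a| < ε

/-- `e` is a Schauder basis of `X`. -/
def IsSchauderBasis (e : ℕ → X) : Prop :=
  ∀ x : X, ∃! a : ℕ → ℝ,
    Tendsto (fun n => ∑ i ∈ Finset.range n, a i • e i) atTop (𝓝 x)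

/-- The basis `e` is 1-unconditional. -/
def OneUnconditional (e : ℕ → X) : Prop :=
  ∀ (F : Finset ℕ) (a ε : ℕ → ℝ), (∀ i, ε i = 1 ∨ ε i = -1) →
    ‖∑ i ∈ F, (ε i * a i) • e i‖ = ‖∑ i ∈ F, a i • e i‖

/-- `x` is a block sequence with respect to the basis `e`. -/
def IsBlockSeq (e : ℕ → X) (x : ℕ → X) : Prop :=
  ∃ F : ℕ → Finset ℕ, (∀ k, (F k).Nonempty) ∧
    (∀ k l : ℕ, k < l → ∀ i ∈ F k, ∀ j ∈ F l, i < j) ∧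
    ∀ k, x k ≠ 0 ∧ x k ∈ Submodule.span ℝ (e '' ↑(F k))

/-- `z` is a finite block sequence with respect to the basis `e`. -/
def IsFinBlockSeq (e : ℕ → X) {n : ℕ} (z : Fin n → X) : Prop :=
  ∃ F : Fin n → Finset ℕ, (∀ k, (F k).Nonempty) ∧
    (∀ k l : Fin n, k < l → ∀ i ∈ F k, ∀ j ∈ F l, i < j) ∧
    ∀ k, z k ≠ 0 ∧ z k ∈ Submodule.span ℝ (e '' ↑(F k))

/-- `Y` is a block subspace of `X` (with respect to the basis `e`): the closed
linear span of an infinite normalized block sequence. -/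
def IsBlockSubspace (e : ℕ → X) (Y : Set X) : Prop :=
  ∃ y : ℕ → X, IsBlockSeq e y ∧ Normalized y ∧
    Y = closure (↑(Submodule.span ℝ (Set.range y)) : Set X)

/-- The finite sequence `z` is `C`-equivalent to a finite basic sequence whose
finite-combination norms are given by `μ`. -/
def FinSeqEquiv (C : ℝ) {n : ℕ} (μ : (Fin n → ℝ) → ℝ) (z : Fin n → X) : Prop :=
  ∃ A B : ℝ, 0 < A ∧ 0 < B ∧ A * B ≤ C ∧
    ∀ a : Fin n → ℝ, (1 / A) * μ a ≤ ‖∑ i, a i • z i‖ ∧ ‖∑ i, a i • z i‖ ≤ B * μ a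

/-- The finite basic sequence with combination norms `μ` is block representable
in `Y ⊆ X`. -/
def BlockRepresentableIn (e : ℕ → X) (Y : Set X) {n : ℕ} (μ : (Fin n → ℝ) → ℝ) : Prop :=
  ∀ ε > (0 : ℝ), ∃ z : Fin n → X, (∀ i, z i ∈ Y) ∧ IsFinBlockSeq e z ∧
    FinSeqEquiv (1 + ε) μ z

/-- `x` is a (Schauder) basic sequence. -/
def IsBasicSeq (x : ℕ → X) : Prop :=
  (∀ i, x i ≠ 0) ∧ ∃ K : ℝ, 0 < K ∧ ∀ (a : ℕ → ℝ) (m n : ℕ), m ≤ n →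
    ‖∑ i ∈ Finset.range m, a i • x i‖ ≤ K * ‖∑ i ∈ Finset.range n, a i • x i‖

end Abstract2

/-- A plegma of `k` strictly increasing `l`-tuples of naturals. -/
def IsPlegma (k l : ℕ) (s : Fin k → Fin l → ℕ) : Prop :=
  (∀ i, StrictMono (s i)) ∧
  (∀ i₁ i₂ : Fin k, ∀ j₁ j₂ : Fin l, j₁ < j₂ → s i₁ j₁ < s i₂ j₂) ∧
  (∀ i₁ i₂ : Fin k, i₁ < i₂ → ∀ j, s i₁ j ≤ s i₂ j)

/-- A strict plegma: a plegma with pairwise disjoint tuples. -/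
def IsStrictPlegma (k l : ℕ) (s : Fin k → Fin l → ℕ) : Prop :=
  IsPlegma k l s ∧ ∀ i₁ i₂ : Fin k, i₁ ≠ i₂ → ∀ j₁ j₂ : Fin l, s i₁ j₁ ≠ s i₂ j₂

section Abstract3

variable {X : Type*} [NormedAddCommGroup X] [NormedSpace ℝ X]

/-- The `l`-array `x` generates the joint spreading model with finite-combination
seminorms `ν`. -/
def GeneratesJSM (l : ℕ) (x : Fin l → ℕ → X)
    (ν : ∀ k : ℕ, (Fin l → Fin k → ℝ) → ℝ) : Prop :=
  ∀ (k : ℕ) (a : Fin l → Fin k → ℝ), ∀ ε > (0 : ℝ), ∃ N : ℕ,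
    ∀ s : Fin l → Fin k → ℕ, IsStrictPlegma l k s → (∀ i j, N ≤ s i j) →
      |‖∑ i, ∑ j, a i j • x i (s i j)‖ - ν k a| < ε

/-- `X` admits a unique joint spreading model with respect to the family of
sequences `F`. -/
def UniqueJSM (F : Set (ℕ → X)) : Prop :=
  ∃ C : ℝ, 1 ≤ C ∧ ∀ (l : ℕ) (x y : Fin l → ℕ → X),
    (∀ i, x i ∈ F) → (∀ i, y i ∈ F) →
    ∀ ν μ, GeneratesJSM l x ν → GeneratesJSM l y μ →
      ∃ A B : ℝ, 0 < A ∧ 0 < B ∧ A * B ≤ C ∧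
        ∀ (k : ℕ) (a : Fin l → Fin k → ℝ),
          (1 / A) * μ k a ≤ ν k a ∧ ν k a ≤ B * μ k a

/-- `X` admits a unique asymptotic model with respect to the family of
sequences `F`. -/
def UniqueAM (F : Set (ℕ → X)) : Prop :=
  ∀ x y : ℕ → ℕ → X, (∀ i, x i ∈ F) → (∀ i, y i ∈ F) →
    ∀ ν μ, GeneratesAsymptoticModel x ν → GeneratesAsymptoticModel y μ →
      ∃ C : ℝ, 1 ≤ C ∧ NormFamEquiv C μ ν

end Abstract3

/-- A bundled Banach-space candidate. -/
structure BanachPkg : Type 1 where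
  X : Type
  [grp : NormedAddCommGroup X]
  [mod : NormedSpace ℝ X]

attribute [instance] BanachPkg.grp BanachPkg.mod

/-! ### c₀₀ and the norming sets -/

/-- The finitely supported real sequences. -/
abbrev c00 : Type := ℕ →₀ ℝ

/-- Minimum of the support (0 for the zero vector). -/
def minSupp (x : c00) : ℕ := if h : x.support.Nonempty then x.support.min' h else 0

/-- Maximum of the support (0 for the zero vector). -/
def maxSupp (x : c00) : ℕ := if h : x.support.Nonempty then x.support.max' h else 0

/-- Minimum of a finset of naturals (0 if empty). -/
def finsetMin (F : Finset ℕ) : ℕ := if h : F.Nonempty then F.min' h else 0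

/-- `x < y` as successive (block) vectors. -/
def Blocks (x y : c00) : Prop := maxSupp x < minSupp y

/-- The Schreier families. -/
def Schreier : ℕ → Set (Finset ℕ)
  | 0 => {F | ∃ i : ℕ, F = {i}}
  | n + 1 => {F | ∃ (d : ℕ) (G : Fin d → Finset ℕ),
      (∀ k, G k ∈ Schreier n) ∧
      (∀ k l : Fin d, k < l → ∀ i ∈ G k, ∀ j ∈ G l, i < j) ∧
      (∀ i ∈ F, d ≤ i) ∧ F = Finset.univ.biUnion G}

/-- The family `A_m` of sets of cardinality at most `m`. -/
def SchreierA (m : ℕ) : Set (Finset ℕ) := {F | F.card ≤ m}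

/-- The operation `A * B` on families of finite sets. -/
def famStar (A B : Set (Finset ℕ)) : Set (Finset ℕ) :=
  {F | ∃ (d : ℕ) (G : Fin d → Finset ℕ),
      (∀ k, G k ∈ B) ∧ (∀ k, (G k).Nonempty) ∧
      (∀ k l : Fin d, k < l → ∀ i ∈ G k, ∀ j ∈ G l, i < j) ∧
      (Finset.univ.image fun k => finsetMin (G k)) ∈ A ∧ F = Finset.univ.biUnion G}

/-- A finite block sequence in `c00` is `S`-admissible. -/
def Admissible (S : Set (Finset ℕ)) {d : ℕ} (f : Fin d → c00) : Prop :=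
  (∀ q, (f q).support.Nonempty) ∧
  (∀ q r : Fin d, q < r → Blocks (f q) (f r)) ∧
  (Finset.univ.image fun q => minSupp (f q)) ∈ S

/-- The two fixed sequences `(m_j)`, `(n_j)` (indexed here starting at `0`, so that
`m 0` plays the role of `m_1` etc.) together with their growth conditions. -/
structure IWParams where
  m : ℕ → ℕ
  n : ℕ → ℕ
  m_mono : StrictMono m
  n_mono : StrictMono n
  m_first : m 0 = 2
  n_first : n 0 = 1
  growth_exp : ∀ C : ℝ, 1 < C → Tendsto (fun j => C ^ (n j) / (m j : ℝ)) atTop atTop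
  growth_ratio : Tendsto (fun j => (m j : ℝ) / (m (j + 1) : ℝ)) atTop (𝓝 0)
  growth_sum : ∀ (l : ℕ) (js : Fin l → ℕ) (j : ℕ), (∀ i, js i ≤ j) →
    (∏ i, m (js i)) < m (j + 1) ^ 2 → (∑ i, n (js i)) + 1 < n (j + 1)

/-- The action of a functional `f ∈ c00` on a vector `x ∈ c00`. -/
def evalPair (f x : c00) : ℝ := f.sum fun i a => a * x i

/-- The norming set `W_iw`, together with admissible weights: `WIW P f w` means
that `f` belongs to the norming set and `w` is a weight of (one representation of)
`f`; the unit functionals `±e_i^*` have weight `∞`. -/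
inductive WIW (P : IWParams) : c00 → ℕ∞ → Prop
  | unit (i : ℕ) (s : ℝ) (hs : s = 1 ∨ s = -1) : WIW P (Finsupp.single i s) ⊤
  | op (l : ℕ) (hl : 0 < l) (js : Fin l → ℕ) (d : ℕ) (f : Fin d → c00) (w : Fin d → ℕ∞)
      (hf : ∀ q, WIW P (f q) (w q))
      (hadm : Admissible (Schreier (∑ i, P.n (js i))) f)
      (hvfg : ∀ q r : Fin d, (q : ℕ) + 1 = (r : ℕ) → (maxSupp (f q) : ℕ∞) < w r) :
      WIW P (((∏ i, P.m (js i) : ℕ) : ℝ)⁻¹ • ∑ q, f q) ((∏ i, P.m (js i) : ℕ) : ℕ∞)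

/-- Membership in the norming set `W_iw`. -/
def memWIW (P : IWParams) (f : c00) : Prop := ∃ w, WIW P f w

/-- The norm of `X_iw`, on finitely supported vectors. -/
def iwNorm (P : IWParams) (x : c00) : ℝ :=
  sSup {r | ∃ f, memWIW P f ∧ r = evalPair f x}

/-- The dual norm of a finitely supported functional, as an element of `X_iw^*`. -/
def iwDualNorm (P : IWParams) (f : c00) : ℝ :=
  sSup {r | ∃ x : c00, iwNorm P x ≤ 1 ∧ r = evalPair f x}

/-- The auxiliary norming set `W_aux^N` together with admissible weights. -/
inductive WAux (P : IWParams) (N : ℕ) : c00 → ℕ∞ → Prop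
  | unit (i : ℕ) (s : ℝ) (hs : s = 1 ∨ s = -1) : WAux P N (Finsupp.single i s) ⊤
  | op (l : ℕ) (hl : 0 < l) (js : Fin l → ℕ) (d : ℕ) (f : Fin d → c00) (w : Fin d → ℕ∞)
      (hf : ∀ q, WAux P N (f q) (w q))
      (hadm : Admissible (famStar (Schreier (∑ i, P.n (js i))) (SchreierA 3)) f)
      (hlarge : ∀ q : Fin d, 0 < (q : ℕ) → (N : ℕ∞) < w q) :
      WAux P N (((∏ i, P.m (js i) : ℕ) : ℝ)⁻¹ • ∑ q, f q) ((∏ i, P.m (js i) : ℕ) : ℕ∞)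

/-- An `(n, ε)` basic special convex combination. -/
def IsBasicSCC (n : ℕ) (ε : ℝ) (x : c00) : Prop :=
  ∃ F : Finset ℕ, x.support ⊆ F ∧ F ∈ Schreier n ∧ (∀ i, 0 ≤ x i) ∧
    (∑ i ∈ F, x i) = 1 ∧ ∀ G ⊆ F, G ∈ Schreier (n - 1) → (∑ i ∈ G, x i) < ε

/-- An `(n, ε)` special convex combination `∑ c i • x i`. -/
def IsSCC (n : ℕ) (ε : ℝ) {m : ℕ} (c : Fin m → ℝ) (x : Fin m → c00) : Prop :=
  (∀ i, (x i).support.Nonempty) ∧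
  (∀ i j : Fin m, i < j → Blocks (x i) (x j)) ∧
  IsBasicSCC n ε (∑ i, c i • Finsupp.single (minSupp (x i)) (1 : ℝ))

/-- `x` generates, with respect to the norm function `Nrm` on `c00`, the spreading
model whose finite-combination seminorms are `ν`. -/
def GeneratesSMwith (Nrm : c00 → ℝ) (x : ℕ → c00) (ν : ∀ m : ℕ, (Fin m → ℝ) → ℝ) : Prop :=
  ∀ (m : ℕ) (a : Fin m → ℝ), ∀ ε > (0 : ℝ), ∃ N : ℕ, ∀ j : Fin m → ℕ,
    StrictMono j → (∀ i, N ≤ j i) → |Nrm (∑ i, a i • x (j i)) - ν m a| < ε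

/-- The array `A` generates, with respect to the norm function `Nrm` on `c00`, the
asymptotic model whose finite-combination seminorms are `ν`. -/
def GeneratesAMwith (Nrm : c00 → ℝ) (A : ℕ → ℕ → c00) (ν : ∀ l : ℕ, (Fin l → ℝ) → ℝ) : Prop :=
  ∀ (l : ℕ) (a : Fin l → ℝ), ∀ ε > (0 : ℝ), ∃ N : ℕ, ∀ j : Fin l → ℕ,
    StrictMono j → (∀ i, N ≤ j i) → |Nrm (∑ i, a i • A i (j i)) - ν l a| < ε

/-- A normalized block sequence in `c00` with respect to a norm function. -/
def IsNormBlockSeq (Nrm : c00 → ℝ) (y : ℕ → c00) : Prop :=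
  (∀ k, (y k).support.Nonempty) ∧ (∀ k, Blocks (y k) (y (k + 1))) ∧ ∀ k, Nrm (y k) = 1

/-- A `(C, (j_i)_{i ∈ I})` rapidly increasing sequence, `I` a (finite) interval. -/
def IsRIS (P : IWParams) (C : ℝ) (I : Finset ℕ) (j : ℕ → ℕ) (x : ℕ → c00) : Prop :=
  (∀ a ∈ I, ∀ b ∈ I, ∀ c : ℕ, a ≤ c → c ≤ b → c ∈ I) ∧
  (∀ a ∈ I, ∀ b ∈ I, a < b → j a < j b) ∧
  (∀ i ∈ I, (x i).support.Nonempty) ∧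
  (∀ a ∈ I, ∀ b ∈ I, a < b → Blocks (x a) (x b)) ∧
  (∀ i ∈ I, iwNorm P (x i) ≤ C) ∧
  (∀ i ∈ I, ∀ i' ∈ I, i' + 1 = i → (maxSupp (x i') : ℝ) < Real.sqrt (P.m (j i))) ∧
  (∀ i ∈ I, ∀ f w, WIW P f w → w < ((P.m (j i) : ℕ) : ℕ∞) →
    |evalPair f (x i)| ≤ C / (w.toNat : ℝ))

/-- An infinite `(C, (j_i)_i)` rapidly increasing sequence. -/
def IsRISNat (P : IWParams) (C : ℝ) (j : ℕ → ℕ) (x : ℕ → c00) : Prop :=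
  StrictMono j ∧ (∀ i, (x i).support.Nonempty) ∧ (∀ i, Blocks (x i) (x (i + 1))) ∧
  (∀ i, iwNorm P (x i) ≤ C) ∧
  (∀ i, (maxSupp (x i) : ℝ) < Real.sqrt (P.m (j (i + 1)))) ∧
  (∀ i, ∀ f w, WIW P f w → w < ((P.m (j i) : ℕ) : ℕ∞) →
    |evalPair f (x i)| ≤ C / (w.toNat : ℝ))

/-- `X` together with the basis `e` is a realization of the space `X_iw`: a Banach
space in which `c00` sits isometrically (w.r.t. `iwNorm`) and densely. -/
structure IsIWRealization (P : IWParams) (X : Type*) [NormedAddCommGroup X]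
    [NormedSpace ℝ X] (e : ℕ → X) : Prop where
  complete : CompleteSpace X
  dense : DenseRange fun a : c00 => ∑ i ∈ a.support, a i • e i
  norm_eq : ∀ a : c00, ‖∑ i ∈ a.support, a i • e i‖ = iwNorm P a

/-- The conjugate exponent of `p`. -/
def conjExp (p : ℝ) : ℝ := p / (p - 1)

/-- The norming set `W_iw^p` together with admissible weights. -/
inductive WIWp (P : IWParams) (p : ℝ) : c00 → ℕ∞ → Prop
  | unit (i : ℕ) (s : ℝ) (hs : s = 1 ∨ s = -1) : WIWp P p (Finsupp.single i s) ⊤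
  | op (l : ℕ) (hl : 0 < l) (js : Fin l → ℕ) (d : ℕ) (f : Fin d → c00) (w : Fin d → ℕ∞)
      (lam : Fin d → ℝ) (hlam : (∑ q, |lam q| ^ conjExp p) ≤ 1)
      (hf : ∀ q, WIWp P p (f q) (w q))
      (hadm : Admissible (Schreier (∑ i, P.n (js i))) f)
      (hvfg : ∀ q r : Fin d, (q : ℕ) + 1 = (r : ℕ) → (maxSupp (f q) : ℕ∞) < w r) :
      WIWp P p (((∏ i, P.m (js i) : ℕ) : ℝ)⁻¹ • ∑ q, lam q • f q)
        ((∏ i, P.m (js i) : ℕ) : ℕ∞)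

/-- The norm of `X_iw^p` on finitely supported vectors. -/
def iwpNorm (P : IWParams) (p : ℝ) (x : c00) : ℝ :=
  sSup {r | ∃ f, (∃ w, WIWp P p f w) ∧ r = evalPair f x}

/-- The norming set of the space `X̃_iw`, together with admissible weights. -/
inductive WT (P : IWParams) : c00 → ℕ∞ → Prop
  | unit (i : ℕ) (s : ℝ) (hs : s = 1 ∨ s = -1) : WT P (Finsupp.single i s) ⊤
  | op (j : ℕ) (d : ℕ) (f : Fin d → c00) (w : Fin d → ℕ∞)
      (hf : ∀ q, WT P (f q) (w q))
      (hadm : Admissible (Schreier (P.n j)) f)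
      (hvfg : ∀ q r : Fin d, (q : ℕ) + 1 = (r : ℕ) → (maxSupp (f q) : ℕ∞) < w r) :
      WT P ((P.m j : ℝ)⁻¹ • ∑ q, f q) ((P.m j : ℕ) : ℕ∞)

/-- The norm of `X̃_iw` on finitely supported vectors. -/
def tNorm (P : IWParams) (x : c00) : ℝ :=
  sSup {r | ∃ f, (∃ w, WT P f w) ∧ r = evalPair f x}

end

namespace IWDual

/-! ### Schreier families -/

/-- A hereditary version of the Schreier families. The successive pieces of a set are recorded
by a monotone colouring `κ` with fewer than `d` colours, where `d` is at most every element. -/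
def SF : ℕ → Finset ℕ → Prop
  | 0, F => F.card ≤ 1
  | n + 1, F => ∃ (d : ℕ) (κ : ℕ → ℕ), (∀ i ∈ F, ∀ j ∈ F, i ≤ j → κ i ≤ κ j) ∧
      (∀ i ∈ F, κ i < d ∧ d ≤ i) ∧ ∀ k, SF n (F.filter (fun i => κ i = k))

/-- Schreier families are hereditary and closed under spreading to the right. -/
lemma SF_spread {n : ℕ} : ∀ {F F' : Finset ℕ} (ψ : ℕ → ℕ), (∀ i ∈ F', ψ i ∈ F) →
    (∀ i ∈ F', ∀ j ∈ F', i < j → ψ i < ψ j) → (∀ i ∈ F', ψ i ≤ i) → SF n F → SF n F' := by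
  induction n with
  | zero =>
    intro F F' ψ h1 h2 h3 h
    refine le_trans (Finset.card_le_card_of_injOn ψ h1 ?_) h
    intro i hi j hj hij
    rcases lt_trichotomy i j with h | h | h
    · have := h2 i hi j hj h; omega
    · exact h
    · have := h2 j hj i hi h; omega
  | succ n ih =>
    rintro F F' ψ h1 h2 h3 ⟨d, κ, k1, k2, k3⟩
    refine ⟨d, fun i => κ (ψ i), ?_, ?_, ?_⟩
    · intro i hi j hj hij
      apply k1 _ (h1 i hi) _ (h1 j hj)
      rcases hij.lt_or_eq with h | h
      · exact (h2 i hi j hj h).le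
      · rw [h]
    · intro i hi
      exact ⟨(k2 _ (h1 i hi)).1, (k2 _ (h1 i hi)).2.trans (h3 i hi)⟩
    · intro k
      refine ih (F := F.filter (fun i => κ i = k)) ψ ?_ ?_ ?_ (k3 k)
      · intro i hi
        simp only [Finset.mem_filter] at hi ⊢
        exact ⟨h1 i hi.1, hi.2⟩
      · intro i hi j hj
        exact h2 i (Finset.mem_filter.1 hi).1 j (Finset.mem_filter.1 hj).1
      · intro i hi
        exact h3 i (Finset.mem_filter.1 hi).1

lemma SF_subset {n : ℕ} {F F' : Finset ℕ} (h : F' ⊆ F) (hF : SF n F) : SF n F' :=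
  SF_spread id (fun _ hi => h hi) (fun _ _ _ _ h => h) (fun _ _ => le_rfl) hF

lemma SF_empty (n : ℕ) : SF n ∅ := by
  cases n with
  | zero => simp [SF]
  | succ n =>
    refine ⟨0, fun _ => 0, by simp, by simp, ?_⟩
    intro k
    induction n with
    | zero => simp [SF]
    | succ n ih =>
      refine ⟨0, fun _ => 0, by simp, by simp, ?_⟩
      intro k'
      simpa using ih

lemma SF_succ {n : ℕ} {F : Finset ℕ} (h0 : ∀ i ∈ F, 1 ≤ i) (h : SF n F) : SF (n + 1) F :=
  ⟨1, fun _ => 0, by simp, fun i hi => ⟨by simp, h0 i hi⟩,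
    fun _ => SF_subset (Finset.filter_subset _ _) h⟩

lemma SF_mono {n n' : ℕ} (hn : n ≤ n') {F : Finset ℕ} (h0 : ∀ i ∈ F, 1 ≤ i) (h : SF n F) :
    SF n' F := by
  induction n', hn using Nat.le_induction with
  | base => exact h
  | succ k _ ih => exact SF_succ h0 ih

lemma SF_card_le_one {n : ℕ} {F : Finset ℕ} (h0 : ∀ i ∈ F, 1 ≤ i) (h : F.card ≤ 1) : SF n F :=
  SF_mono (Nat.zero_le n) h0 h

lemma SF_pos {n : ℕ} {F : Finset ℕ} (h : SF (n + 1) F) {i : ℕ} (hi : i ∈ F) : 1 ≤ i := by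
  obtain ⟨d, κ, -, h2, -⟩ := h
  have := h2 i hi
  omega

lemma SF_small {F : Finset ℕ} (h : ∀ i ∈ F, F.card ≤ i) : SF 1 F := by
  have key : ∀ i ∈ F, ∀ j ∈ F, i < j →
      (F.filter (fun a => a < i)).card < (F.filter (fun a => a < j)).card := by
    intro i hi j hj hij
    apply Finset.card_lt_card
    rw [Finset.ssubset_iff]
    refine ⟨i, by simp, ?_⟩
    intro a ha
    rw [Finset.mem_insert, Finset.mem_filter] at ha
    rw [Finset.mem_filter]
    rcases ha with rfl | ha
    · exact ⟨hi, hij⟩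
    · exact ⟨ha.1, ha.2.trans hij⟩
  refine ⟨F.card, fun i => (F.filter (fun a => a < i)).card, ?_, ?_, ?_⟩
  · intro i hi j hj hij
    rcases hij.lt_or_eq with h | h
    · exact (key i hi j hj h).le
    · rw [h]
  · intro i hi
    refine ⟨?_, h i hi⟩
    apply Finset.card_lt_card
    rw [Finset.ssubset_iff]
    refine ⟨i, by simp, ?_⟩
    intro a ha
    rw [Finset.mem_insert, Finset.mem_filter] at ha
    rcases ha with rfl | ha
    · exact hi
    · exact ha.1
  · intro k
    change Finset.card _ ≤ 1
    rw [Finset.card_le_one]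
    intro i hi j hj
    simp only [Finset.mem_filter] at hi hj
    rcases lt_trichotomy i j with h | h | h
    · have := key i hi.1 j hj.1 h; omega
    · exact h
    · have := key j hj.1 i hi.1 h; omega

/-- The convolution property `S_m [S_n] ⊆ S_{m+n}`. -/
lemma SF_comp {m n : ℕ} : ∀ {F G : Finset ℕ} (π : ℕ → ℕ), (∀ i ∈ G, π i ∈ F) →
    (∀ i ∈ G, ∀ j ∈ G, i ≤ j → π i ≤ π j) → (∀ i ∈ G, π i ≤ i) → SF n F →
    (∀ k ∈ F, SF m (G.filter (fun i => π i = k))) → SF (m + n) G := by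
  induction n with
  | zero =>
    intro F G π h1 h2 h3 h h4
    rcases Finset.card_le_one_iff_subset_singleton.1 h with ⟨k, hk⟩
    rcases G.eq_empty_or_nonempty with rfl | ⟨g, hg⟩
    · exact SF_empty _
    have hgk : ∀ i ∈ G, π i = k := fun i hi => Finset.mem_singleton.1 (hk (h1 i hi))
    have := h4 k (by rw [← hgk g hg]; exact h1 g hg)
    rwa [Finset.filter_true_of_mem hgk] at this
  | succ n ih =>
    rintro F G π h1 h2 h3 ⟨d, κ, k1, k2, k3⟩ h4
    refine ⟨d, fun i => κ (π i), ?_, ?_, ?_⟩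
    · intro i hi j hj hij
      exact k1 _ (h1 i hi) _ (h1 j hj) (h2 i hi j hj hij)
    · intro i hi
      exact ⟨(k2 _ (h1 i hi)).1, (k2 _ (h1 i hi)).2.trans (h3 i hi)⟩
    · intro k
      refine ih (F := F.filter (fun i => κ i = k)) π ?_ ?_ ?_ (k3 k) ?_
      · intro i hi
        simp only [Finset.mem_filter] at hi ⊢
        exact ⟨h1 i hi.1, hi.2⟩
      · intro i hi j hj
        exact h2 i (Finset.mem_filter.1 hi).1 j (Finset.mem_filter.1 hj).1
      · intro i hi
        exact h3 i (Finset.mem_filter.1 hi).1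
      · intro l hl
        refine SF_subset ?_ (h4 l (Finset.mem_filter.1 hl).1)
        intro i hi
        simp only [Finset.mem_filter] at hi ⊢
        exact ⟨hi.1.1, hi.2⟩

lemma SF_of_Schreier {n : ℕ} : ∀ {F : Finset ℕ}, F ∈ Schreier n → SF n F := by
  induction n with
  | zero =>
    rintro F ⟨i, rfl⟩
    simp [SF]
  | succ n ih =>
    rintro F ⟨d, G, h1, h2, h3, h4⟩
    classical
    have hex : ∀ i ∈ F, ∃ k, i ∈ G k := by
      intro i hi
      rw [h4] at hi
      simpa using hi
    have huniq : ∀ i k l, i ∈ G k → i ∈ G l → k = l := by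
      intro i k l hk hl
      rcases lt_trichotomy k l with h | h | h
      · exact absurd (h2 k l h i hk i hl) (lt_irrefl _)
      · exact h
      · exact absurd (h2 l k h i hl i hk) (lt_irrefl _)
    let κ : ℕ → ℕ := fun i => if h : ∃ k, i ∈ G k then (h.choose : ℕ) else 0
    have hκ : ∀ i k, i ∈ G k → κ i = k := by
      intro i k hk
      have h : ∃ k, i ∈ G k := ⟨k, hk⟩
      simp only [κ, dif_pos h]
      rw [huniq i _ _ h.choose_spec hk]
    refine ⟨d, κ, ?_, ?_, ?_⟩
    · intro i hi j hj hij
      obtain ⟨k, hk⟩ := hex i hi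
      obtain ⟨l, hl⟩ := hex j hj
      rw [hκ i k hk, hκ j l hl]
      by_contra hcon
      have := h2 l k (by simpa using hcon) j hl i hk
      omega
    · intro i hi
      obtain ⟨k, hk⟩ := hex i hi
      rw [hκ i k hk]
      exact ⟨k.2, h3 i hi⟩
    · intro k
      rcases (F.filter (fun i => κ i = k)).eq_empty_or_nonempty with h | ⟨i, hi⟩
      · rw [h]; exact SF_empty _
      rw [Finset.mem_filter] at hi
      obtain ⟨k', hk'⟩ := hex i hi.1
      refine SF_subset ?_ (ih (h1 k'))
      intro j hj
      rw [Finset.mem_filter] at hj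
      obtain ⟨l, hl⟩ := hex j hj.1
      have e1 := hκ i k' hk'
      have e2 := hκ j l hl
      have : l = k' := by apply Fin.ext; omega
      rwa [← this]

lemma Schreier_of_SF {n : ℕ} : ∀ {F : Finset ℕ}, SF n F → F.Nonempty → F ∈ Schreier n := by
  induction n with
  | zero =>
    intro F h hF
    have : F.card = 1 := le_antisymm h hF.card_pos
    obtain ⟨i, hi⟩ := Finset.card_eq_one.1 this
    exact ⟨i, hi⟩
  | succ n ih =>
    rintro F ⟨d, κ, k1, k2, k3⟩ hF
    let V := F.image κ
    let E := V.orderEmbOfFin rfl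
    have hV : V.card ≤ d := by
      have : V ⊆ Finset.range d := by
        intro v hv
        obtain ⟨i, hi, rfl⟩ := Finset.mem_image.1 hv
        exact Finset.mem_range.2 (k2 i hi).1
      simpa using Finset.card_le_card this
    refine ⟨V.card, fun k => F.filter (fun i => κ i = E k), ?_, ?_, ?_, ?_⟩
    · intro k
      apply ih (k3 _)
      obtain ⟨i, hi, h⟩ := Finset.mem_image.1 (V.orderEmbOfFin_mem rfl k)
      exact ⟨i, Finset.mem_filter.2 ⟨hi, h⟩⟩
    · intro k l hkl i hi j hj
      rw [Finset.mem_filter] at hi hj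
      by_contra hcon
      have h1 := k1 j hj.1 i hi.1 (by omega)
      have h2 : E k < E l := E.strictMono hkl
      omega
    · intro i hi
      exact hV.trans (k2 i hi).2
    · ext i
      simp only [Finset.mem_biUnion, Finset.mem_univ, true_and, Finset.mem_filter]
      constructor
      · intro hi
        have : κ i ∈ Set.range E := by
          rw [Finset.range_orderEmbOfFin]
          exact Finset.mem_image_of_mem κ hi
        obtain ⟨k, hk⟩ := this
        exact ⟨k, hi, hk.symm⟩
      · rintro ⟨k, hi, -⟩
        exact hi

lemma Schreier_empty (n : ℕ) : (∅ : Finset ℕ) ∈ Schreier (n + 1) :=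
  ⟨0, fun k => k.elim0, fun k => k.elim0, fun k => k.elim0, by simp, by simp⟩

/-! ### Special convex combinations -/

/-- `c` is a convex weight on the `S_{n+1}` set `R` giving mass at most `ε` to every
`S_n` subset of `R`. -/
structure SCC (n : ℕ) (ε : ℝ) (R : Finset ℕ) (c : ℕ → ℝ) : Prop where
  nonneg : ∀ p, 0 ≤ c p
  sum_eq : ∑ p ∈ R, c p = 1
  adm : SF (n + 1) R
  small : ∀ B ⊆ R, SF n B → ∑ p ∈ B, c p ≤ ε

lemma exists_finset_above (L : Set ℕ) (hL : L.Infinite) (D N : ℕ) :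
    ∃ R : Finset ℕ, R.card = D ∧ (↑R ⊆ L) ∧ ∀ p ∈ R, N < p := by
  have h : (L \ ↑(Finset.range (N + 1))).Infinite := hL.sdiff (Finset.finite_toSet _)
  obtain ⟨R, hR, hc⟩ := h.exists_subset_card_eq D
  refine ⟨R, hc, fun p hp => (hR hp).1, fun p hp => ?_⟩
  have := (hR hp).2
  simp at this
  omega

/-- Special convex combinations exist on every infinite set: a combination of order `n + 1` is an
average of many successive ones of order `n`. -/
theorem exists_SCC (L : Set ℕ) (hL : L.Infinite) (n : ℕ) : ∀ (ε : ℝ), 0 < ε → ∀ N : ℕ,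
    ∃ R c, SCC n ε R c ∧ (↑R ⊆ L) ∧ ∀ p ∈ R, N < p := by
  induction n with
  | zero =>
    intro ε hε N
    obtain ⟨D, hD⟩ := exists_nat_gt (1 / ε)
    have hD0 : (0 : ℝ) < D := lt_trans (by positivity) hD
    obtain ⟨R, hc, hRL, hR⟩ := exists_finset_above L hL D (max N D)
    refine ⟨R, fun _ => (D : ℝ)⁻¹, ⟨fun _ => by positivity, ?_, ?_, ?_⟩, hRL,
      fun p hp => lt_of_le_of_lt (le_max_left _ _) (hR p hp)⟩
    · rw [Finset.sum_const, hc, nsmul_eq_mul, mul_inv_cancel₀ hD0.ne']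
    · apply SF_small
      intro i hi
      rw [hc]
      exact ((le_max_right N D).trans_lt (hR i hi)).le
    · intro B hB hS
      rw [Finset.sum_const, nsmul_eq_mul]
      have h1 : (B.card : ℝ) ≤ 1 := by exact_mod_cast hS
      have h2 : (D : ℝ)⁻¹ ≤ ε := by
        rw [inv_le_comm₀ hD0 hε]
        rw [one_div] at hD
        exact hD.le
      have h3 : (0 : ℝ) ≤ (D : ℝ)⁻¹ := by positivity
      nlinarith
  | succ n ih =>
    intro ε hε N
    obtain ⟨D, hD⟩ := exists_nat_gt (2 / ε)
    have hD0 : (0 : ℝ) < D := lt_trans (by positivity) hD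
    have hDi : (D : ℝ)⁻¹ ≤ ε / 2 := by
      rw [inv_le_comm₀ hD0 (by positivity)]
      rw [inv_div]; exact hD.le
    have ih' : ∀ N' : ℕ, ∃ R c, SCC n (ε / (2 * (N' + 1))) R c ∧ (↑R ⊆ L) ∧ ∀ p ∈ R, N' < p :=
      fun N' => ih _ (by positivity) N'
    choose R0 c0 h0 hL0 hN0 using ih'
    obtain ⟨Nn, hNz, hNs⟩ : ∃ Nn : ℕ → ℕ, Nn 0 = max N D ∧
        ∀ i, Nn (i + 1) = max (Nn i) ((R0 (Nn i)).sup id) :=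
      ⟨fun i => Nat.rec (max N D) (fun _ x => max x ((R0 x).sup id)) i, rfl, fun _ => rfl⟩
    have hNmono : Monotone Nn := monotone_nat_of_le_succ fun i => by rw [hNs]; exact le_max_left _ _
    have hRlo : ∀ i, ∀ p ∈ R0 (Nn i), Nn i < p := fun i p hp => hN0 _ p hp
    have hRhi : ∀ i, ∀ p ∈ R0 (Nn i), p ≤ Nn (i + 1) := fun i p hp => by
      rw [hNs]; exact le_max_of_le_right (Finset.le_sup (f := id) hp)
    let R := (Finset.range D).biUnion fun i => R0 (Nn i)
    let c : ℕ → ℝ := fun p => (D : ℝ)⁻¹ * ∑ i ∈ Finset.range D,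
      if p ∈ R0 (Nn i) then c0 (Nn i) p else 0
    have hN00 : ∀ i, max N D ≤ Nn i := fun i => hNz ▸ hNmono (Nat.zero_le i)
    have hsum : ∀ B ⊆ R, ∑ p ∈ B, c p =
        (D : ℝ)⁻¹ * ∑ i ∈ Finset.range D, ∑ p ∈ B.filter (· ∈ R0 (Nn i)), c0 (Nn i) p := by
      intro B hB
      rw [← Finset.mul_sum, Finset.sum_comm]
      congr 1
      refine Finset.sum_congr rfl fun i _ => ?_
      rw [Finset.sum_filter]
    have hle1 : ∀ (B : Finset ℕ) (i : ℕ), ∑ p ∈ B.filter (· ∈ R0 (Nn i)), c0 (Nn i) p ≤ 1 := by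
      intro B i
      rw [← (h0 (Nn i)).sum_eq]
      apply Finset.sum_le_sum_of_subset_of_nonneg
      · intro p hp
        exact (Finset.mem_filter.1 hp).2
      · intro p _ _; exact (h0 _).nonneg p
    refine ⟨R, c, ⟨?_, ?_, ?_, ?_⟩, ?_, ?_⟩
    · intro p
      refine mul_nonneg (by positivity) (Finset.sum_nonneg fun i _ => ?_)
      split_ifs
      · exact (h0 _).nonneg p
      · exact le_rfl
    · rw [hsum R subset_rfl]
      have : ∀ i ∈ Finset.range D, ∑ p ∈ R.filter (· ∈ R0 (Nn i)), c0 (Nn i) p = 1 := by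
        intro i hi
        rw [← (h0 (Nn i)).sum_eq]
        congr 1
        ext p
        rw [Finset.mem_filter]
        refine ⟨fun h => h.2, fun h => ⟨?_, h⟩⟩
        exact Finset.mem_biUnion.2 ⟨i, hi, h⟩
      rw [Finset.sum_congr rfl this]
      simp [hD0.ne']
    · have hκ : ∀ i < D, ∀ p ∈ R0 (Nn i),
          ((Finset.range D).filter (fun i => Nn (i + 1) < p)).card = i := by
        intro i hi p hp
        have : (Finset.range D).filter (fun i => Nn (i + 1) < p) = Finset.range i := by
          ext k
          simp only [Finset.mem_filter, Finset.mem_range]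
          constructor
          · rintro ⟨hk, hk'⟩
            by_contra hcon
            have h1 := hRhi i p hp
            have h2 : Nn (i + 1) ≤ Nn (k + 1) := hNmono (by omega)
            omega
          · intro hk
            refine ⟨by omega, ?_⟩
            have h1 := hRlo i p hp
            have h2 : Nn (k + 1) ≤ Nn i := hNmono (by omega)
            omega
        rw [this, Finset.card_range]
      refine ⟨D, fun p => ((Finset.range D).filter (fun i => Nn (i + 1) < p)).card, ?_, ?_, ?_⟩
      · intro p _ p' _ hpp
        apply Finset.card_le_card
        intro k hk
        rw [Finset.mem_filter] at hk ⊢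
        exact ⟨hk.1, hk.2.trans_le hpp⟩
      · intro p hp
        obtain ⟨i, hi, hp⟩ := Finset.mem_biUnion.1 hp
        simp only [hκ i (Finset.mem_range.1 hi) p hp]
        refine ⟨Finset.mem_range.1 hi, ?_⟩
        have h1 := hRlo i p hp
        have h2 := hN00 i
        have h3 := le_max_right N D
        omega
      · intro k
        refine SF_subset ?_ (h0 (Nn k)).adm
        intro p hp
        simp only [Finset.mem_filter] at hp
        obtain ⟨i, hi, hp'⟩ := Finset.mem_biUnion.1 hp.1
        have := hκ i (Finset.mem_range.1 hi) p hp'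
        rw [hp.2] at this
        rwa [this]
    · rintro B hB ⟨d, κ, k1, k2, k3⟩
      rw [hsum B hB]
      rcases B.eq_empty_or_nonempty with rfl | hne
      · simp [hε.le]
      obtain ⟨i0, hi0, hp0⟩ := Finset.mem_biUnion.1 (hB (B.min'_mem hne))
      have hd := (k2 _ (B.min'_mem hne)).2
      have hd0 := hRhi i0 _ hp0
      have key : ∀ i ∈ Finset.range D, ∑ p ∈ B.filter (· ∈ R0 (Nn i)), c0 (Nn i) p ≤
          ε / 2 + if i = i0 then 1 else 0 := by
        intro i hi
        split_ifs with hii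
        · linarith [hle1 B i]
        rw [add_zero]
        rcases lt_or_gt_of_ne hii with hlt | hgt
        · have : B.filter (· ∈ R0 (Nn i)) = ∅ := by
            apply Finset.filter_false_of_mem
            intro p hp hp'
            have h1 := hRhi i p hp'
            have h2 := hRlo i0 _ hp0
            have h3 : Nn (i + 1) ≤ Nn i0 := hNmono (by omega)
            have h4 := B.min'_le p hp
            omega
          rw [this, Finset.sum_empty]; positivity
        · have e : ∑ p ∈ B.filter (· ∈ R0 (Nn i)), c0 (Nn i) p =
              ∑ k ∈ Finset.range d, ∑ p ∈ (B.filter (· ∈ R0 (Nn i))).filter (fun p => κ p = k),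
                c0 (Nn i) p := by
            rw [Finset.sum_fiberwise_of_maps_to]
            intro p hp
            exact Finset.mem_range.2 (k2 p (Finset.mem_filter.1 hp).1).1
          rw [e]
          have h1 : ∀ k ∈ Finset.range d, ∑ p ∈ (B.filter (· ∈ R0 (Nn i))).filter
              (fun p => κ p = k), c0 (Nn i) p ≤ ε / (2 * (Nn i + 1)) := by
            intro k _
            apply (h0 (Nn i)).small
            · intro p hp
              exact (Finset.mem_filter.1 (Finset.mem_filter.1 hp).1).2
            · refine SF_subset ?_ (k3 k)
              intro p hp
              simp only [Finset.mem_filter] at hp ⊢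
              exact ⟨hp.1.1, hp.2⟩
          refine (Finset.sum_le_sum h1).trans ?_
          rw [Finset.sum_const, Finset.card_range, nsmul_eq_mul]
          have h2 : d ≤ Nn i := hd.trans (hd0.trans (hNmono (by omega)))
          have h3 : (d : ℝ) ≤ (Nn i : ℝ) + 1 := by
            have : (d : ℝ) ≤ Nn i := by exact_mod_cast h2
            linarith
          calc (d : ℝ) * (ε / (2 * (Nn i + 1))) ≤ (Nn i + 1) * (ε / (2 * (Nn i + 1))) := by gcongr
            _ = ε / 2 := by field_simp
      calc (D : ℝ)⁻¹ * ∑ i ∈ Finset.range D, ∑ p ∈ B.filter (· ∈ R0 (Nn i)), c0 (Nn i) p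
          ≤ (D : ℝ)⁻¹ * ∑ i ∈ Finset.range D, (ε / 2 + if i = i0 then 1 else 0) := by
            gcongr with i hi
            exact key i hi
        _ = ε / 2 + (D : ℝ)⁻¹ := by
            rw [Finset.sum_add_distrib, Finset.sum_const, Finset.card_range, nsmul_eq_mul,
              Finset.sum_ite_eq', if_pos hi0]
            field_simp
        _ ≤ ε := by linarith
    · intro p hp
      obtain ⟨i, _, hp⟩ := Finset.mem_biUnion.1 hp
      exact hL0 _ hp
    · intro p hp
      obtain ⟨i, _, hp⟩ := Finset.mem_biUnion.1 hp
      have h1 := hRlo i p hp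
      have h2 := hN00 i
      have h3 := le_max_left N D
      omega

end IWDual

namespace IWDual

/-! ### The pairing between functionals and vectors -/

lemma ev_eq_sum (f x : c00) (s : Finset ℕ) (hs : f.support ⊆ s) :
    evalPair f x = ∑ i ∈ s, f i * x i := by
  unfold evalPair Finsupp.sum
  apply Finset.sum_subset hs
  intro i _ hi
  simp only [Finsupp.mem_support_iff, not_not] at hi
  simp [hi]

lemma ev_eq_sum' (f x : c00) (s : Finset ℕ) (hs : x.support ⊆ s) :
    evalPair f x = ∑ i ∈ s, f i * x i := by
  rw [ev_eq_sum f x (f.support ∪ s) Finset.subset_union_left]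
  symm
  apply Finset.sum_subset Finset.subset_union_right
  intro i _ hi
  have : x i = 0 := by
    by_contra h
    exact hi (hs (Finsupp.mem_support_iff.2 h))
  rw [this, mul_zero]

/-- The pairing as a bilinear map. -/
noncomputable def evL : c00 →ₗ[ℝ] c00 →ₗ[ℝ] ℝ :=
  LinearMap.mk₂ ℝ evalPair
    (fun f g x => by
      rw [ev_eq_sum' _ x x.support subset_rfl, ev_eq_sum' f x x.support subset_rfl,
        ev_eq_sum' g x x.support subset_rfl, ← Finset.sum_add_distrib]
      exact Finset.sum_congr rfl fun i _ => by rw [Finsupp.add_apply, add_mul])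
    (fun a f x => by
      rw [ev_eq_sum' _ x x.support subset_rfl, ev_eq_sum' f x x.support subset_rfl,
        smul_eq_mul, Finset.mul_sum]
      exact Finset.sum_congr rfl fun i _ => by rw [Finsupp.smul_apply, smul_eq_mul, mul_assoc])
    (fun f x y => by
      rw [ev_eq_sum f _ f.support subset_rfl, ev_eq_sum f x f.support subset_rfl,
        ev_eq_sum f y f.support subset_rfl, ← Finset.sum_add_distrib]
      exact Finset.sum_congr rfl fun i _ => by rw [Finsupp.add_apply, mul_add])
    (fun a f x => by
      rw [ev_eq_sum f _ f.support subset_rfl, ev_eq_sum f x f.support subset_rfl,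
        smul_eq_mul, Finset.mul_sum]
      exact Finset.sum_congr rfl fun i _ => by
        rw [Finsupp.smul_apply, smul_eq_mul]; ring)

lemma evL_apply (f x : c00) : evL f x = evalPair f x := rfl

lemma ev_zero_left (x : c00) : evalPair 0 x = 0 := by simp [← evL_apply]
lemma ev_zero_right (f : c00) : evalPair f 0 = 0 := by simp [← evL_apply]
lemma ev_add_left (f g x : c00) : evalPair (f + g) x = evalPair f x + evalPair g x := by
  simp [← evL_apply]
lemma ev_sub_left (f g x : c00) : evalPair (f - g) x = evalPair f x - evalPair g x := by
  simp [← evL_apply]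
lemma ev_neg_left (f x : c00) : evalPair (-f) x = -evalPair f x := by simp [← evL_apply]
lemma ev_smul_left (a : ℝ) (f x : c00) : evalPair (a • f) x = a * evalPair f x := by
  simp [← evL_apply]
lemma ev_sum_left {ι : Type*} (s : Finset ι) (f : ι → c00) (x : c00) :
    evalPair (∑ i ∈ s, f i) x = ∑ i ∈ s, evalPair (f i) x := by
  simp only [← evL_apply, map_sum, LinearMap.sum_apply]
lemma ev_add_right (f x y : c00) : evalPair f (x + y) = evalPair f x + evalPair f y := by
  simp [← evL_apply]
lemma ev_sub_right (f x y : c00) : evalPair f (x - y) = evalPair f x - evalPair f y := by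
  simp [← evL_apply]
lemma ev_neg_right (f x : c00) : evalPair f (-x) = -evalPair f x := by simp [← evL_apply]
lemma ev_smul_right (a : ℝ) (f x : c00) : evalPair f (a • x) = a * evalPair f x := by
  simp [← evL_apply]
lemma ev_sum_right {ι : Type*} (s : Finset ι) (f : c00) (x : ι → c00) :
    evalPair f (∑ i ∈ s, x i) = ∑ i ∈ s, evalPair f (x i) := by
  simp only [← evL_apply, map_sum]

lemma ev_single_left (i : ℕ) (s : ℝ) (x : c00) : evalPair (Finsupp.single i s) x = s * x i := by
  simp [evalPair, Finsupp.sum_single_index]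

lemma ev_single_right (i : ℕ) (s : ℝ) (f : c00) :
    evalPair f (Finsupp.single i s) = f i * s := by
  rw [ev_eq_sum' f _ {i} Finsupp.support_single_subset]
  simp

/-- Vectors with disjoint supports pair to zero. -/
lemma ev_eq_zero {f x : c00} (h : ∀ i, f i ≠ 0 → x i = 0) : evalPair f x = 0 := by
  rw [ev_eq_sum f x f.support subset_rfl]
  apply Finset.sum_eq_zero
  intro i hi
  rw [h i (Finsupp.mem_support_iff.1 hi), mul_zero]

/-! ### Multiplication by bounded sequences -/

/-- Pointwise multiplication of `f` by the sequence `σ`. -/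
noncomputable def sg (σ : ℕ → ℝ) : c00 →ₗ[ℝ] c00 where
  toFun f := Finsupp.onFinset f.support (fun i => σ i * f i) (fun i hi => by
    rw [Finsupp.mem_support_iff]; exact right_ne_zero_of_mul hi)
  map_add' f g := by ext i; simp [mul_add]
  map_smul' a f := by ext i; simp; ring

@[simp] lemma sg_apply (σ : ℕ → ℝ) (f : c00) (i : ℕ) : sg σ f i = σ i * f i := rfl

lemma sg_ne_zero {σ : ℕ → ℝ} {f : c00} {i : ℕ} (h : sg σ f i ≠ 0) : f i ≠ 0 :=
  right_ne_zero_of_mul (by simpa using h)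

lemma ev_sg (σ : ℕ → ℝ) (f x : c00) : evalPair (sg σ f) x = evalPair f (sg σ x) := by
  rw [ev_eq_sum (sg σ f) x f.support, ev_eq_sum f _ f.support subset_rfl]
  · exact Finset.sum_congr rfl fun i _ => by simp; ring
  · intro i hi
    exact Finsupp.mem_support_iff.2 (sg_ne_zero (Finsupp.mem_support_iff.1 hi))

open Classical in
/-- Restriction of `x` to the set `E`. -/
noncomputable def rst (E : Set ℕ) : c00 →ₗ[ℝ] c00 := sg (E.indicator 1)

lemma rst_apply_mem {E : Set ℕ} {i : ℕ} (h : i ∈ E) (x : c00) : rst E x i = x i := by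
  simp [rst, h]
lemma rst_apply_not_mem {E : Set ℕ} {i : ℕ} (h : i ∉ E) (x : c00) : rst E x i = 0 := by
  simp [rst, h]
lemma rst_ne_zero {E : Set ℕ} {i : ℕ} {x : c00} (h : rst E x i ≠ 0) : i ∈ E ∧ x i ≠ 0 := by
  by_cases hi : i ∈ E
  · exact ⟨hi, by rwa [rst_apply_mem hi] at h⟩
  · exact absurd (rst_apply_not_mem hi x) h
lemma ev_rst (E : Set ℕ) (f x : c00) : evalPair (rst E f) x = evalPair f (rst E x) := ev_sg _ _ _
lemma rst_eq_self {E : Set ℕ} {x : c00} (h : ∀ i, x i ≠ 0 → i ∈ E) : rst E x = x := by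
  ext i
  by_cases hi : i ∈ E
  · exact rst_apply_mem hi x
  · rw [rst_apply_not_mem hi]
    by_contra hc
    exact hi (h i (Ne.symm hc))

/-! ### The norming set -/

/-- The weight `m_{j_1} ⋯ m_{j_l}` of a vector weight. -/
def wgt (P : IWParams) (js : List ℕ) : ℕ := (js.map P.m).prod

/-- The order `n_{j_1} + ⋯ + n_{j_l}` of the Schreier family attached to a vector weight. -/
def ord (P : IWParams) (js : List ℕ) : ℕ := (js.map P.n).sum

/-- The reciprocal of a weight, with `1/∞ = 0`. -/
noncomputable def wr (w : ℕ∞) : ℝ := (w.toNat : ℝ)⁻¹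

/-- `f` is zero or belongs to the norming set with weight `w`. -/
def W0 (P : IWParams) (f : c00) (w : ℕ∞) : Prop := f = 0 ∨ WIW P f w

/-- `g` and `v` are the pieces and their weights of a (generalized) weighted functional with
vector weight `js`. The pieces are indexed by naturals `p ∈ M` bounding their supports from
below; pieces may vanish. -/
structure IsOp (P : IWParams) (js : List ℕ) (M : Finset ℕ) (g : ℕ → c00) (v : ℕ → ℕ∞) :
    Prop where
  mem : ∀ p ∈ M, W0 P (g p) (v p)
  lo : ∀ p ∈ M, ∀ i, g p i ≠ 0 → p ≤ i
  sep : ∀ p ∈ M, ∀ p' ∈ M, p < p' → ∀ i, g p i ≠ 0 → i < p' ∧ (i : ℕ∞) < v p'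
  adm : SF (ord P js) M

/-- The weighted functional with vector weight `js` and pieces `g p`, `p ∈ M`. -/
noncomputable def opF (P : IWParams) (js : List ℕ) (M : Finset ℕ) (g : ℕ → c00) : c00 :=
  (wgt P js : ℝ)⁻¹ • ∑ p ∈ M, g p

variable {P : IWParams}

lemma m_ge_two (P : IWParams) (j : ℕ) : 2 ≤ P.m j := by
  have := P.m_mono.monotone (Nat.zero_le j)
  rwa [P.m_first] at this

lemma n_ge_one (P : IWParams) (j : ℕ) : 1 ≤ P.n j := by
  have := P.n_mono.monotone (Nat.zero_le j)
  rwa [P.n_first] at this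

lemma m_pos (P : IWParams) (j : ℕ) : (0 : ℝ) < P.m j := by
  have := m_ge_two P j
  exact_mod_cast (by omega : 0 < P.m j)

@[simp] lemma wgt_nil : wgt P [] = 1 := rfl
@[simp] lemma ord_nil : ord P [] = 0 := rfl
@[simp] lemma wgt_cons (j : ℕ) (js : List ℕ) : wgt P (j :: js) = P.m j * wgt P js := by
  simp [wgt]
@[simp] lemma ord_cons (j : ℕ) (js : List ℕ) : ord P (j :: js) = P.n j + ord P js := by
  simp [ord]

lemma wgt_pos (P : IWParams) (js : List ℕ) : 1 ≤ wgt P js := by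
  induction js with
  | nil => simp
  | cons j js ih =>
    rw [wgt_cons]
    exact Nat.mul_pos (by have := m_ge_two P j; omega) ih

lemma wgt_pos' (P : IWParams) (js : List ℕ) : (0 : ℝ) < wgt P js := by
  exact_mod_cast wgt_pos P js

lemma wgt_ge_two {js : List ℕ} (h : js ≠ []) : 2 ≤ wgt P js := by
  cases js with
  | nil => exact absurd rfl h
  | cons j js =>
    rw [wgt_cons]
    have h1 := m_ge_two P j
    have h2 := wgt_pos P js
    nlinarith

lemma ord_pos {js : List ℕ} (h : js ≠ []) : 1 ≤ ord P js := by
  cases js with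
  | nil => exact absurd rfl h
  | cons j js =>
    rw [ord_cons]
    have h1 := n_ge_one P j
    omega

lemma wr_nat (n : ℕ) : wr (n : ℕ∞) = (n : ℝ)⁻¹ := by simp [wr]
@[simp] lemma wr_top : wr ⊤ = 0 := by simp [wr]
lemma wr_nonneg (w : ℕ∞) : 0 ≤ wr w := by unfold wr; positivity

lemma SF_image {n : ℕ} {F : Finset ℕ} (φ : ℕ → ℕ) (h1 : ∀ i ∈ F, ∀ j ∈ F, i < j → φ i < φ j)
    (h2 : ∀ i ∈ F, i ≤ φ i) (h : SF n F) : SF n (F.image φ) := by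
  have inv : ∀ i ∈ F.image φ, ∃ k ∈ F, φ k = i := fun i hi => Finset.mem_image.1 hi
  choose! ψ hψ1 hψ2 using inv
  refine SF_spread ψ hψ1 ?_ ?_ h
  · intro i hi j hj hij
    by_contra hcon
    rcases (not_lt.1 hcon).lt_or_eq with h | h
    · have := h1 _ (hψ1 j hj) _ (hψ1 i hi) h
      rw [hψ2 i hi, hψ2 j hj] at this
      omega
    · rw [← hψ2 i hi, ← hψ2 j hj, h] at hij
      omega
  · intro i hi
    have := h2 _ (hψ1 i hi)
    rwa [hψ2 i hi] at this

lemma minSupp_mem {f : c00} (h : f ≠ 0) : f (minSupp f) ≠ 0 := by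
  have hs : f.support.Nonempty := Finsupp.support_nonempty_iff.2 h
  rw [minSupp, dif_pos hs]
  exact Finsupp.mem_support_iff.1 (f.support.min'_mem hs)

lemma maxSupp_mem {f : c00} (h : f ≠ 0) : f (maxSupp f) ≠ 0 := by
  have hs : f.support.Nonempty := Finsupp.support_nonempty_iff.2 h
  rw [maxSupp, dif_pos hs]
  exact Finsupp.mem_support_iff.1 (f.support.max'_mem hs)

lemma minSupp_le {f : c00} {i : ℕ} (h : f i ≠ 0) : minSupp f ≤ i := by
  have hm := Finsupp.mem_support_iff.2 h
  have hs : f.support.Nonempty := ⟨i, hm⟩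
  rw [minSupp, dif_pos hs]
  exact f.support.min'_le i hm

lemma le_maxSupp {f : c00} {i : ℕ} (h : f i ≠ 0) : i ≤ maxSupp f := by
  have hm := Finsupp.mem_support_iff.2 h
  have hs : f.support.Nonempty := ⟨i, hm⟩
  rw [maxSupp, dif_pos hs]
  exact f.support.le_max' i hm

/-- Closure of the norming set under the weighted operations, in terms of `IsOp`. -/
theorem mkOp {js : List ℕ} {M : Finset ℕ} {g : ℕ → c00} {v : ℕ → ℕ∞} (hjs : js ≠ [])
    (h : IsOp P js M g v) : WIW P (opF P js M g) (wgt P js : ℕ) := by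
  classical
  let M' := M.filter (fun p => g p ≠ 0)
  let E := M'.orderEmbOfFin rfl
  have hE : ∀ q, E q ∈ M ∧ g (E q) ≠ 0 := fun q =>
    Finset.mem_filter.1 (M'.orderEmbOfFin_mem rfl q)
  have hsumE : ∑ q, g (E q) = ∑ p ∈ M, g p := by
    have h1 : ∑ p ∈ M', g p = ∑ p ∈ M, g p := by
      rw [Finset.sum_filter_ne_zero]
    rw [← h1]
    have h2 : M' = Finset.univ.image E := by
      ext p
      rw [Finset.mem_image]
      constructor
      · intro hp
        have : p ∈ Set.range E := by rw [Finset.range_orderEmbOfFin]; exact hp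
        obtain ⟨k, hk⟩ := this
        exact ⟨k, Finset.mem_univ _, hk⟩
      · rintro ⟨k, -, rfl⟩
        exact M'.orderEmbOfFin_mem rfl k
    rw [Finset.sum_congr h2 (fun _ _ => rfl)]
    rw [Finset.sum_image fun a _ b _ hab => E.injective hab]
  have hord : ∑ i : Fin js.length, P.n (js.get i) = ord P js := by
    rw [ord, ← List.sum_ofFn, ]
    congr 1
    apply List.ext_get <;> simp
  have hwgt : ∏ i : Fin js.length, P.m (js.get i) = wgt P js := by
    rw [wgt, ← List.prod_ofFn]
    congr 1
    apply List.ext_get <;> simp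
  have hblocks : ∀ q r, q < r → maxSupp (g (E q)) < E r ∧ ((maxSupp (g (E q)) : ℕ∞) < v (E r)) := by
    intro q r hqr
    exact h.sep _ (hE q).1 _ (hE r).1 (E.strictMono hqr) _ (maxSupp_mem (hE q).2)
  have hmin : ∀ q, E q ≤ minSupp (g (E q)) := fun q =>
    h.lo _ (hE q).1 _ (minSupp_mem (hE q).2)
  have key := WIW.op (P := P) js.length (List.length_pos_iff.2 hjs) js.get M'.card
    (fun q => g (E q)) (fun q => v (E q)) ?_ ?_ ?_
  · rw [hsumE, hwgt] at key
    exact key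
  · intro q
    rcases h.mem _ (hE q).1 with h0 | h0
    · exact absurd h0 (hE q).2
    · exact h0
  · refine ⟨fun q => Finsupp.support_nonempty_iff.2 (hE q).2, ?_, ?_⟩
    · intro q r hqr
      exact (hblocks q r hqr).1.trans_le (hmin r)
    · rw [hord]
      have him : (Finset.univ.image fun q => minSupp (g (E q))) =
          M'.image (fun p => minSupp (g p)) := by
        ext p
        simp only [Finset.mem_image, Finset.mem_univ, true_and]
        constructor
        · rintro ⟨q, rfl⟩
          exact ⟨E q, M'.orderEmbOfFin_mem rfl q, rfl⟩
        · rintro ⟨p', hp', rfl⟩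
          have : p' ∈ Set.range E := by rw [Finset.range_orderEmbOfFin]; exact hp'
          obtain ⟨k, rfl⟩ := this
          exact ⟨k, rfl⟩
      rw [him]
      rcases (M'.image (fun p => minSupp (g p))).eq_empty_or_nonempty with h0 | h0
      · rw [h0]
        have := ord_pos (P := P) hjs
        obtain ⟨n, hn⟩ := Nat.exists_eq_add_of_le' this
        rw [hn]
        exact Schreier_empty n
      · refine Schreier_of_SF ?_ h0
        refine SF_image _ ?_ ?_ (SF_subset (Finset.filter_subset _ _) h.adm)
        · intro i hi j hj hij
          rw [Finset.mem_filter] at hi hj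
          have h1 := (h.sep i hi.1 j hj.1 hij _ (minSupp_mem hi.2)).1
          have h2 := h.lo j hj.1 _ (minSupp_mem hj.2)
          omega
        · intro i hi
          rw [Finset.mem_filter] at hi
          exact h.lo i hi.1 _ (minSupp_mem hi.2)
  · intro q r hqr
    exact (hblocks q r (by rw [Fin.lt_def]; omega)).2

/-- Induction over the norming set, with weighted functionals presented through `IsOp`. -/
theorem W_induct {C : c00 → ℕ∞ → Prop}
    (unit : ∀ i s, (s = 1 ∨ s = -1) → C (Finsupp.single i s) ⊤)
    (op : ∀ (js : List ℕ) (M : Finset ℕ) (g : ℕ → c00) (v : ℕ → ℕ∞), js ≠ [] → IsOp P js M g v →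
      (∀ p ∈ M, WIW P (g p) (v p) ∧ C (g p) (v p)) → C (opF P js M g) (wgt P js : ℕ))
    {f : c00} {w : ℕ∞} (hf : WIW P f w) : C f w := by
  classical
  induction hf with
  | unit i s hs => exact unit i s hs
  | op l hl js d f w hf hadm hvfg ih =>
    have hne : ∀ q, f q ≠ 0 := fun q => Finsupp.support_nonempty_iff.1 (hadm.1 q)
    have hmm : ∀ q, minSupp (f q) ≤ maxSupp (f q) := fun q => minSupp_le (maxSupp_mem (hne q))
    have hmono : StrictMono (fun q => minSupp (f q)) := fun q r hqr =>
      (hmm q).trans_lt (hadm.2.1 q r hqr)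
    have hmax : StrictMono (fun q => maxSupp (f q)) := fun q r hqr =>
      (hadm.2.1 q r hqr).trans_le (hmm r)
    let inv : ℕ → Option (Fin d) := fun p =>
      if h : ∃ q, minSupp (f q) = p then some h.choose else none
    have hinv : ∀ q, inv (minSupp (f q)) = some q := by
      intro q
      have h : ∃ q', minSupp (f q') = minSupp (f q) := ⟨q, rfl⟩
      simp only [inv, dif_pos h]
      congr 1
      exact hmono.injective h.choose_spec
    let g : ℕ → c00 := fun p => (inv p).elim 0 f
    let v : ℕ → ℕ∞ := fun p => (inv p).elim 0 w
    have hg : ∀ q, g (minSupp (f q)) = f q := fun q => by simp [g, hinv]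
    have hv : ∀ q, v (minSupp (f q)) = w q := fun q => by simp [v, hinv]
    let M := Finset.univ.image fun q => minSupp (f q)
    have hsum : ∑ p ∈ M, g p = ∑ q, f q := by
      rw [Finset.sum_image fun a _ b _ hab => hmono.injective hab]
      exact Finset.sum_congr rfl fun q _ => hg q
    have hM : ∀ p ∈ M, ∃ q, p = minSupp (f q) := by
      intro p hp
      obtain ⟨q, -, rfl⟩ := Finset.mem_image.1 hp
      exact ⟨q, rfl⟩
    have hord : ord P (List.ofFn js) = ∑ i, P.n (js i) := by
      rw [ord, List.map_ofFn, List.sum_ofFn]; rfl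
    have hwgt : wgt P (List.ofFn js) = ∏ i, P.m (js i) := by
      rw [wgt, List.map_ofFn, List.prod_ofFn]; rfl
    have key := op (List.ofFn js) M g v ?_ ?_ ?_
    · rw [opF, hsum, hwgt] at key
      exact key
    · intro h
      have := congrArg List.length h
      simp at this
      omega
    · refine ⟨?_, ?_, ?_, ?_⟩
      · intro p hp
        obtain ⟨q, rfl⟩ := hM p hp
        rw [hg, hv]
        exact Or.inr (hf q)
      · intro p hp i hi
        obtain ⟨q, rfl⟩ := hM p hp
        rw [hg] at hi
        exact minSupp_le hi
      · intro p hp p' hp' hlt i hi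
        obtain ⟨q, rfl⟩ := hM p hp
        obtain ⟨r, rfl⟩ := hM p' hp'
        rw [hg] at hi
        rw [hv]
        have hqr : q < r := hmono.lt_iff_lt.1 hlt
        have h1 := le_maxSupp hi
        refine ⟨h1.trans_lt (hadm.2.1 q r hqr), ?_⟩
        have hr : 0 < (r : ℕ) := lt_of_le_of_lt (Nat.zero_le _) hqr
        let r' : Fin d := ⟨r - 1, by omega⟩
        have h2 := hvfg r' r (by simp [r']; omega)
        have h3 : maxSupp (f q) ≤ maxSupp (f r') := by
          apply hmax.monotone
          rw [Fin.le_def]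
          simp only [r']
          rw [Fin.lt_def] at hqr
          omega
        exact lt_of_le_of_lt (by exact_mod_cast h1.trans h3) h2
      · rw [hord]
        exact SF_of_Schreier hadm.2.2
    · intro p hp
      obtain ⟨q, rfl⟩ := hM p hp
      rw [hg, hv]
      exact ⟨hf q, ih q⟩

theorem W_cases {f : c00} {w : ℕ∞} (hf : WIW P f w) :
    (w = ⊤ ∧ ∃ i s, (s = 1 ∨ s = -1) ∧ f = Finsupp.single i s) ∨
    ∃ (js : List ℕ) (M : Finset ℕ) (g : ℕ → c00) (v : ℕ → ℕ∞), js ≠ [] ∧ IsOp P js M g v ∧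
      (∀ p ∈ M, WIW P (g p) (v p)) ∧ f = opF P js M g ∧ w = (wgt P js : ℕ) := by
  refine W_induct (C := fun f w => (w = ⊤ ∧ ∃ i s, (s = 1 ∨ s = -1) ∧ f = Finsupp.single i s) ∨
    ∃ (js : List ℕ) (M : Finset ℕ) (g : ℕ → c00) (v : ℕ → ℕ∞), js ≠ [] ∧ IsOp P js M g v ∧
      (∀ p ∈ M, WIW P (g p) (v p)) ∧ f = opF P js M g ∧ w = (wgt P js : ℕ)) ?_ ?_ hf
  · intro i s hs
    exact Or.inl ⟨rfl, i, s, hs, rfl⟩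
  · intro js M g v hjs h h2
    exact Or.inr ⟨js, M, g, v, hjs, h, fun p hp => (h2 p hp).1, rfl, rfl⟩

lemma IsOp.subset {js : List ℕ} {M M' : Finset ℕ} {g : ℕ → c00} {v : ℕ → ℕ∞}
    (h : IsOp P js M g v) (hM : M' ⊆ M) : IsOp P js M' g v :=
  ⟨fun p hp => h.mem p (hM hp), fun p hp => h.lo p (hM hp),
    fun p hp p' hp' => h.sep p (hM hp) p' (hM hp'), SF_subset hM h.adm⟩

lemma W_zero (j : ℕ) : WIW P 0 (P.m j : ℕ) := by
  have := mkOp (P := P) (js := [j]) (M := ∅) (g := fun _ => 0) (v := fun _ => 0) (by simp)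
    ⟨by simp, by simp, by simp, SF_empty _⟩
  simpa [opF] using this

lemma W0.mem {f : c00} {w : ℕ∞} (h : W0 P f w) : memWIW P f := by
  rcases h with rfl | h
  · exact ⟨_, W_zero 0⟩
  · exact ⟨w, h⟩

/-- The norming set is closed under multiplication by sequences with values in `{-1,0,1}`. -/
lemma W_sg {σ : ℕ → ℝ} (hσ : ∀ i, σ i = 1 ∨ σ i = -1 ∨ σ i = 0) {f : c00} {w : ℕ∞}
    (hf : WIW P f w) : W0 P (sg σ f) w := by
  refine W_induct (C := fun f w => W0 P (sg σ f) w) ?_ ?_ hf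
  · intro i s hs
    have : sg σ (Finsupp.single i s) = Finsupp.single i (σ i * s) := by
      ext k
      rw [sg_apply, Finsupp.single_apply, Finsupp.single_apply]
      split_ifs with h
      · rw [h]
      · simp
    rw [this]
    rcases hσ i with h | h | h
    · right; rw [h]; apply WIW.unit; simpa using hs
    · right; rw [h]; apply WIW.unit; rcases hs with rfl | rfl <;> simp
    · left; simp [h]
  · intro js M g v hjs h ih
    right
    have h' : IsOp P js M (fun p => sg σ (g p)) v :=
      ⟨fun p hp => (ih p hp).2, fun p hp i hi => h.lo p hp i (sg_ne_zero hi),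
        fun p hp p' hp' hlt i hi => h.sep p hp p' hp' hlt i (sg_ne_zero hi), h.adm⟩
    have := mkOp hjs h'
    rwa [opF, ← map_sum, ← map_smul] at this

lemma W0_sg {σ : ℕ → ℝ} (hσ : ∀ i, σ i = 1 ∨ σ i = -1 ∨ σ i = 0) {f : c00} {w : ℕ∞}
    (hf : W0 P f w) : W0 P (sg σ f) w := by
  rcases hf with rfl | hf
  · left; simp
  · exact W_sg hσ hf

lemma W0_rst (E : Set ℕ) {f : c00} {w : ℕ∞} (hf : W0 P f w) : W0 P (rst E f) w := by
  refine W0_sg ?_ hf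
  intro i
  by_cases h : i ∈ E <;> simp [h]

lemma W0_neg {f : c00} {w : ℕ∞} (hf : W0 P f w) : W0 P (-f) w := by
  have := W0_sg (σ := fun _ => -1) (by simp) hf
  convert this using 1
  ext i; simp

lemma W_neg {f : c00} {w : ℕ∞} (hf : WIW P f w) : WIW P (-f) w := by
  rcases W_cases hf with ⟨rfl, i, s, hs, rfl⟩ | ⟨js, M, g, v, hjs, h, h2, rfl, rfl⟩
  · rw [← Finsupp.single_neg]
    apply WIW.unit
    rcases hs with rfl | rfl <;> simp
  · have h' : IsOp P js M (fun p => -g p) v :=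
      ⟨fun p hp => W0_neg (h.mem p hp), fun p hp i hi => h.lo p hp i (by simpa using hi),
        fun p hp p' hp' hlt i hi => h.sep p hp p' hp' hlt i (by simpa using hi), h.adm⟩
    have := mkOp hjs h'
    rwa [opF, Finset.sum_neg_distrib, smul_neg] at this

lemma mem_neg {f : c00} (hf : memWIW P f) : memWIW P (-f) := hf.imp fun _ h => W_neg h

lemma mem_rst (E : Set ℕ) {f : c00} (hf : memWIW P f) : memWIW P (rst E f) := by
  obtain ⟨w, h⟩ := hf
  exact (W0_rst E (Or.inr h)).mem

/-- In a weighted functional at most one piece is non-zero at a given coordinate. -/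
lemma IsOp.unique {js : List ℕ} {M : Finset ℕ} {g : ℕ → c00} {v : ℕ → ℕ∞}
    (h : IsOp P js M g v) {p p' i : ℕ} (hp : p ∈ M) (hp' : p' ∈ M) (hi : g p i ≠ 0)
    (hi' : g p' i ≠ 0) : p = p' := by
  rcases lt_trichotomy p p' with hlt | rfl | hlt
  · have := (h.sep p hp p' hp' hlt i hi).1
    have := h.lo p' hp' i hi'
    omega
  · rfl
  · have := (h.sep p' hp' p hp hlt i hi').1
    have := h.lo p hp i hi
    omega

lemma IsOp.abs_sum_le {js : List ℕ} {M : Finset ℕ} {g : ℕ → c00} {v : ℕ → ℕ∞}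
    (h : IsOp P js M g v) (h1 : ∀ p ∈ M, ∀ i, |g p i| ≤ 1) (i : ℕ) :
    |(∑ p ∈ M, g p) i| ≤ 1 := by
  rw [Finsupp.finsetSum_apply]
  by_cases hex : ∃ p ∈ M, g p i ≠ 0
  · obtain ⟨p, hp, hi⟩ := hex
    rw [Finset.sum_eq_single p]
    · exact h1 p hp i
    · intro p' hp' hne
      by_contra hc
      exact hne (h.unique hp' hp hc hi)
    · intro hc; exact absurd hp hc
  · push Not at hex
    rw [Finset.sum_eq_zero hex]
    simp

lemma W_abs_le_one {f : c00} {w : ℕ∞} (hf : WIW P f w) (i : ℕ) : |f i| ≤ 1 := by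
  refine W_induct (C := fun f _ => ∀ i, |f i| ≤ 1) ?_ ?_ hf i
  · intro i s hs k
    rw [Finsupp.single_apply]
    rcases hs with rfl | rfl <;> split_ifs <;> simp
  · intro js M g v hjs h ih i
    rw [opF, Finsupp.smul_apply, smul_eq_mul, abs_mul, abs_of_pos (inv_pos.2 (wgt_pos' P js))]
    have h1 := h.abs_sum_le (fun p hp => (ih p hp).2) i
    have h2 : (wgt P js : ℝ)⁻¹ ≤ 1 := inv_le_one_of_one_le₀ (by exact_mod_cast wgt_pos P js)
    exact mul_le_one₀ h2 (abs_nonneg _) h1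

lemma W_abs_le_wr {f : c00} {w : ℕ∞} (hf : WIW P f w) (hw : w ≠ ⊤) (i : ℕ) : |f i| ≤ wr w := by
  rcases W_cases hf with ⟨rfl, -⟩ | ⟨js, M, g, v, hjs, h, h2, rfl, rfl⟩
  · exact absurd rfl hw
  · rw [opF, Finsupp.smul_apply, smul_eq_mul, abs_mul, abs_of_pos (inv_pos.2 (wgt_pos' P js)),
      wr_nat]
    have h1 := h.abs_sum_le (fun p hp => W_abs_le_one (h2 p hp)) i
    have : (0 : ℝ) ≤ (wgt P js : ℝ)⁻¹ := by positivity
    nlinarith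

/-! ### The norm -/

lemma bdd_norm (P : IWParams) (x : c00) : BddAbove {r | ∃ f, memWIW P f ∧ r = evalPair f x} := by
  refine ⟨∑ i ∈ x.support, |x i|, ?_⟩
  rintro r ⟨f, ⟨w, hf⟩, rfl⟩
  rw [ev_eq_sum' f x _ subset_rfl]
  refine (le_abs_self _).trans ((Finset.abs_sum_le_sum_abs _ _).trans ?_)
  apply Finset.sum_le_sum
  intro i _
  rw [abs_mul]
  have := W_abs_le_one hf i
  have := abs_nonneg (x i)
  nlinarith

lemma ev_le {f : c00} (hf : memWIW P f) (x : c00) : evalPair f x ≤ iwNorm P x :=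
  le_csSup (bdd_norm P x) ⟨f, hf, rfl⟩

lemma abs_ev_le {f : c00} (hf : memWIW P f) (x : c00) : |evalPair f x| ≤ iwNorm P x := by
  rw [abs_le']
  refine ⟨ev_le hf x, ?_⟩
  rw [← ev_neg_left]
  exact ev_le (mem_neg hf) x

lemma iwNorm_le {x : c00} {C : ℝ} (h : ∀ f w, WIW P f w → evalPair f x ≤ C) :
    iwNorm P x ≤ C := by
  apply csSup_le
  · exact ⟨_, 0, ⟨_, W_zero 0⟩, rfl⟩
  · rintro r ⟨f, ⟨w, hf⟩, rfl⟩
    exact h f w hf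

lemma iwNorm_nonneg (x : c00) : 0 ≤ iwNorm P x := (abs_nonneg _).trans (abs_ev_le ⟨_, W_zero 0⟩ x)

lemma iwNorm_add_le (x y : c00) : iwNorm P (x + y) ≤ iwNorm P x + iwNorm P y := by
  apply iwNorm_le
  intro f w hf
  rw [ev_add_right]
  exact add_le_add (ev_le ⟨w, hf⟩ x) (ev_le ⟨w, hf⟩ y)

lemma iwNorm_smul_le (a : ℝ) (x : c00) : iwNorm P (a • x) ≤ |a| * iwNorm P x := by
  apply iwNorm_le
  intro f w hf
  rw [ev_smul_right]
  refine (le_abs_self _).trans ?_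
  rw [abs_mul]
  exact mul_le_mul_of_nonneg_left (abs_ev_le ⟨w, hf⟩ x) (abs_nonneg a)

lemma iwNorm_sum_le {ι : Type*} (s : Finset ι) (x : ι → c00) :
    iwNorm P (∑ i ∈ s, x i) ≤ ∑ i ∈ s, iwNorm P (x i) := by
  apply iwNorm_le
  intro f w hf
  rw [ev_sum_right]
  exact Finset.sum_le_sum fun i _ => ev_le ⟨w, hf⟩ (x i)

lemma abs_apply_le (x : c00) (i : ℕ) : |x i| ≤ iwNorm P x := by
  have h : memWIW P (Finsupp.single i 1) := ⟨_, WIW.unit i 1 (Or.inl rfl)⟩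
  have := abs_ev_le h x
  rwa [ev_single_left, one_mul] at this

lemma iwNorm_rst_le (E : Set ℕ) (x : c00) : iwNorm P (rst E x) ≤ iwNorm P x := by
  apply iwNorm_le
  intro f w hf
  rw [← ev_rst]
  exact ev_le (mem_rst E ⟨w, hf⟩) x

@[simp] lemma iwNorm_zero : iwNorm P 0 = 0 := by
  apply le_antisymm
  · exact iwNorm_le fun f w _ => (ev_zero_right f).le
  · exact iwNorm_nonneg _

lemma abs_op_ev_le {js : List ℕ} {M : Finset ℕ} {g : ℕ → c00} {v : ℕ → ℕ∞} (hjs : js ≠ [])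
    (h : IsOp P js M g v) (x : c00) :
    |(wgt P js : ℝ)⁻¹ * ∑ p ∈ M, evalPair (g p) x| ≤ iwNorm P x := by
  have := abs_ev_le ⟨_, mkOp hjs h⟩ x
  rwa [opF, ev_smul_left, ev_sum_left] at this

/-! ### Comparison of weights and orders -/

lemma m_le_wgt {js : List ℕ} {j : ℕ} (h : j ∈ js) : P.m j ≤ wgt P js := by
  induction js with
  | nil => simp at h
  | cons k js ih =>
    rw [wgt_cons]
    have h1 := m_ge_two P k
    have h2 := wgt_pos P js
    rcases List.mem_cons.1 h with rfl | h
    · nlinarith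
    · have := ih h
      nlinarith

lemma ord_lt_of_wgt_lt {js : List ℕ} {j : ℕ} (hj : 1 ≤ j) (h1 : ∀ k ∈ js, k < j)
    (h : wgt P js < P.m j ^ 2) : ord P js + 1 < P.n j := by
  obtain ⟨i, rfl⟩ := Nat.exists_eq_add_of_le' hj
  have hord : ∑ i : Fin js.length, P.n (js.get i) = ord P js := by
    rw [ord, ← List.sum_ofFn]
    congr 1
    apply List.ext_get <;> simp
  have hwgt : ∏ i : Fin js.length, P.m (js.get i) = wgt P js := by
    rw [wgt, ← List.prod_ofFn]
    congr 1
    apply List.ext_get <;> simp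
  have := P.growth_sum js.length js.get i (fun k => by
    have := h1 _ (List.get_mem js k); omega) (by rw [hwgt]; exact h)
  rwa [hord] at this

lemma ord_lt_of_wgt_lt' {js : List ℕ} {j : ℕ} (hj : 1 ≤ j) (h : wgt P js < P.m j) :
    ord P js + 1 < P.n j := by
  apply ord_lt_of_wgt_lt hj
  · intro k hk
    exact P.m_mono.lt_iff_lt.1 ((m_le_wgt hk).trans_lt h)
  · have := m_ge_two P j
    nlinarith

/-- Orders beyond `n_j` force weights at least `2 m_j`: either all indices are below `j` and the
growth condition on `n_j` applies, or `j` occurs together with another index. -/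
lemma le_wgt_of_ord_gt {js : List ℕ} {j : ℕ} (hj : 1 ≤ j) (hm : 2 * P.m j ≤ P.m (j + 1))
    (h : P.n j < ord P js) : 2 * P.m j ≤ wgt P js := by
  by_contra hcon
  push Not at hcon
  have hle : ∀ k ∈ js, k ≤ j := by
    intro k hk
    have := P.m_mono.lt_iff_lt.1 ((m_le_wgt hk).trans_lt (hcon.trans_le hm))
    omega
  by_cases hmem : j ∈ js
  · obtain ⟨s, t, rfl⟩ := List.append_of_mem hmem
    have hw : wgt P (s ++ j :: t) = P.m j * (wgt P s * wgt P t) := by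
      simp [wgt]; ring
    rw [hw] at hcon
    have h2 : wgt P s * wgt P t < 2 := by
      have := m_ge_two P j
      nlinarith
    have hs : s = [] := by
      by_contra hs
      have := wgt_ge_two (P := P) hs
      have := wgt_pos P t
      nlinarith
    have ht : t = [] := by
      by_contra ht
      have := wgt_ge_two (P := P) ht
      have := wgt_pos P s
      nlinarith
    subst hs ht
    simp at h
  · have : ord P js + 1 < P.n j := by
      apply ord_lt_of_wgt_lt hj
      · intro k hk
        have h1 := hle k hk
        have : k ≠ j := fun h => hmem (h ▸ hk)
        omega
      · have := m_ge_two P j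
        nlinarith
    omega

end IWDual

namespace IWDual

variable {P : IWParams}

/-! ### Averages of block vectors -/

/-- The largest element of `M` not exceeding `p`. -/
def qm (M : Finset ℕ) (p : ℕ) : ℕ := (M.filter (fun q => q ≤ p)).sup id

lemma qm_spec {M : Finset ℕ} {p : ℕ} (h : ∃ q ∈ M, q ≤ p) :
    qm M p ∈ M ∧ qm M p ≤ p ∧ ∀ q ∈ M, q ≤ p → q ≤ qm M p := by
  have hne : (M.filter (fun q => q ≤ p)).Nonempty := by
    obtain ⟨q, hq, hqp⟩ := h
    exact ⟨q, Finset.mem_filter.2 ⟨hq, hqp⟩⟩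
  obtain ⟨q, hq, he⟩ := Finset.exists_mem_eq_sup _ hne id
  have hq' := Finset.mem_filter.1 hq
  have e : qm M p = q := he
  rw [e]
  refine ⟨hq'.1, hq'.2, fun q' h1 h2 => ?_⟩
  rw [← e]
  exact Finset.le_sup (f := id) (Finset.mem_filter.2 ⟨h1, h2⟩)

/-- Subsets of `R` that are spreads of subsets of `M` have small mass. -/
def Small (R : Finset ℕ) (c : ℕ → ℝ) (M : Finset ℕ) (ε : ℝ) : Prop :=
  ∀ B ⊆ R, ∀ ψ : ℕ → ℕ, (∀ p ∈ B, ψ p ∈ M) → (∀ p ∈ B, ∀ p' ∈ B, p < p' → ψ p < ψ p') →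
    (∀ p ∈ B, ψ p ≤ p) → ∑ p ∈ B, c p ≤ ε

/-- The indices `p` for which some element of `M` lies strictly inside `[p, b p]`. -/
def bad (R : Finset ℕ) (b : ℕ → ℕ) (M : Finset ℕ) : Finset ℕ :=
  R.filter (fun p => ∃ q ∈ M, p < q ∧ q ≤ b p)

lemma bad_le {R : Finset ℕ} {c : ℕ → ℝ} {b : ℕ → ℕ} {M : Finset ℕ} {ε : ℝ}
    (hsep : ∀ p ∈ R, ∀ p' ∈ R, p < p' → b p < p') (hε : 0 ≤ ε)
    (h1 : Small R c M ε) (h2 : ∀ p ∈ R, c p ≤ ε) : ∑ p ∈ bad R b M, c p ≤ 2 * ε := by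
  rcases (bad R b M).eq_empty_or_nonempty with h0 | hne
  · rw [h0, Finset.sum_empty]; positivity
  set B := bad R b M with hB
  have hBR : ∀ p ∈ B, p ∈ R ∧ ∃ q ∈ M, p < q ∧ q ≤ b p := fun p hp => Finset.mem_filter.1 hp
  set p0 := B.min' hne
  have hp0 := B.min'_mem hne
  rw [← Finset.add_sum_erase B c hp0, two_mul]
  refine add_le_add (h2 _ (hBR _ hp0).1) ?_
  have hlt : ∀ p ∈ B, ∀ p' ∈ B, p < p' → ∃ q ∈ M, p < q ∧ q ≤ p' := by
    intro p hp p' hp' hpp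
    obtain ⟨q, hq, h3, h4⟩ := (hBR p hp).2
    have := hsep p (hBR p hp).1 p' (hBR p' hp').1 hpp
    exact ⟨q, hq, h3, by omega⟩
  have hex : ∀ p ∈ B.erase p0, ∃ q ∈ M, q ≤ p := by
    intro p hp
    rw [Finset.mem_erase] at hp
    have : p0 < p := lt_of_le_of_ne (B.min'_le p hp.2) (Ne.symm hp.1)
    obtain ⟨q, hq, -, h4⟩ := hlt _ hp0 p hp.2 this
    exact ⟨q, hq, h4⟩
  refine h1 _ (fun p hp => (hBR p (Finset.mem_erase.1 hp).2).1) (qm M)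
    (fun p hp => (qm_spec (hex p hp)).1) ?_ (fun p hp => (qm_spec (hex p hp)).2.1)
  intro p hp p' hp' hpp
  obtain ⟨q, hq, h3, h4⟩ := hlt p (Finset.mem_erase.1 hp).2 p' (Finset.mem_erase.1 hp').2 hpp
  have h5 := (qm_spec (hex p' hp')).2.2 q hq h4
  have h6 := (qm_spec (hex p hp)).2.1
  omega

/-- For a good index only the piece indexed by `qm M p` can act. -/
lemma good_ev {js : List ℕ} {M : Finset ℕ} {g : ℕ → c00} {v : ℕ → ℕ∞} (h : IsOp P js M g v)
    {p b : ℕ} {x : c00} (hx : ∀ i, x i ≠ 0 → p ≤ i ∧ i ≤ b)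
    (hgood : ∀ q ∈ M, q ≤ p ∨ b < q) {q : ℕ} (hq : q ∈ M) (hne : ¬ (q = qm M p ∧ q ≤ p)) :
    evalPair (g q) x = 0 := by
  apply ev_eq_zero
  intro i hi
  by_contra hxi
  obtain ⟨h1, h2⟩ := hx i hxi
  have h3 := h.lo q hq i hi
  have hqp : q ≤ p := by
    rcases hgood q hq with h4 | h4
    · exact h4
    · omega
  have hs := qm_spec ⟨q, hq, hqp⟩
  have hlt : q < qm M p := by
    have := hs.2.2 q hq hqp
    have : q ≠ qm M p := fun h => hne ⟨h, hqp⟩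
    omega
  have := (h.sep q hq _ hs.1 hlt i hi).1
  omega

lemma good_ev_sum {js : List ℕ} {M : Finset ℕ} {g : ℕ → c00} {v : ℕ → ℕ∞} (h : IsOp P js M g v)
    {p b : ℕ} {x : c00} (hx : ∀ i, x i ≠ 0 → p ≤ i ∧ i ≤ b)
    (hgood : ∀ q ∈ M, q ≤ p ∨ b < q) :
    (∃ q ∈ M, q = qm M p ∧ q ≤ p ∧ ∑ q ∈ M, evalPair (g q) x = evalPair (g q) x) ∨
      ∑ q ∈ M, evalPair (g q) x = 0 := by
  by_cases hex : ∃ q ∈ M, q ≤ p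
  · left
    have hs := qm_spec hex
    refine ⟨_, hs.1, rfl, hs.2.1, ?_⟩
    rw [Finset.sum_eq_single (qm M p)]
    · intro q hq hne
      exact good_ev h hx hgood hq (fun hc => hne hc.1)
    · intro hc; exact absurd hs.1 hc
  · right
    apply Finset.sum_eq_zero
    intro q hq
    exact good_ev h hx hgood hq (fun hc => hex ⟨q, hq, hc.2⟩)

lemma not_bad {R : Finset ℕ} {b : ℕ → ℕ} {M : Finset ℕ} {p : ℕ} (hp : p ∈ R)
    (h : p ∉ bad R b M) : ∀ q ∈ M, q ≤ p ∨ b p < q := by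
  intro q hq
  by_contra hc
  push Not at hc
  exact h (Finset.mem_filter.2 ⟨hp, q, hq, hc⟩)

lemma SCC.single {n : ℕ} {ε : ℝ} {R : Finset ℕ} {c : ℕ → ℝ} (h : SCC n ε R c) {p : ℕ}
    (hp : p ∈ R) : c p ≤ ε := by
  have := h.small {p} (by simpa using hp) (SF_card_le_one (by
    intro i hi
    rw [Finset.mem_singleton.1 hi]
    exact SF_pos h.adm hp) (by simp))
  simpa using this

lemma SCC.smallOf {n k : ℕ} {ε : ℝ} {R : Finset ℕ} {c : ℕ → ℝ} (h : SCC n ε R c) (hk : k ≤ n)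
    {M : Finset ℕ} (hM : SF k M) : Small R c M ε := by
  intro B hB ψ h1 h2 h3
  apply h.small B hB
  exact SF_mono hk (fun i hi => SF_pos h.adm (hB hi)) (SF_spread ψ h1 h2 h3 hM)

lemma SCC.smallOf' {n : ℕ} {ε : ℝ} {R : Finset ℕ} {c : ℕ → ℝ} (h : SCC n ε R c) (hε : 0 ≤ ε)
    {M : Finset ℕ} (hM : SF (n + 1) M) {q N : ℕ} (hq : q ∈ M) (hqN : q ≤ N) :
    Small R c M (N * ε) := by
  intro B hB ψ h1 h2 h3
  obtain ⟨d, κ, -, k2, k3⟩ := hM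
  have hd : d ≤ N := (k2 q hq).2.trans hqN
  have e : ∑ p ∈ B, c p =
      ∑ k ∈ Finset.range d, ∑ p ∈ B.filter (fun p => κ (ψ p) = k), c p := by
    rw [Finset.sum_fiberwise_of_maps_to]
    intro p hp
    exact Finset.mem_range.2 (k2 _ (h1 p hp)).1
  rw [e]
  have : ∀ k ∈ Finset.range d, ∑ p ∈ B.filter (fun p => κ (ψ p) = k), c p ≤ ε := by
    intro k _
    apply h.small _ ((Finset.filter_subset _ _).trans hB)
    refine SF_spread (F := M.filter (fun i => κ i = k)) ψ ?_ ?_ ?_ (k3 k)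
    · intro p hp
      simp only [Finset.mem_filter] at hp ⊢
      exact ⟨h1 p hp.1, hp.2⟩
    · intro p hp p' hp'
      exact h2 p (Finset.mem_filter.1 hp).1 p' (Finset.mem_filter.1 hp').1
    · intro p hp
      exact h3 p (Finset.mem_filter.1 hp).1
  refine (Finset.sum_le_sum this).trans ?_
  rw [Finset.sum_const, Finset.card_range, nsmul_eq_mul]
  gcongr

lemma SCC.eps_nonneg {n : ℕ} {ε : ℝ} {R : Finset ℕ} {c : ℕ → ℝ} (h : SCC n ε R c) : 0 ≤ ε := by
  simpa using h.small ∅ (by simp) (SF_empty _)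

lemma wr_le_of_lt {α : ℕ} (hα : 1 ≤ α) {w : ℕ∞} (h : (α : ℕ∞) < w) : wr w ≤ (α : ℝ)⁻¹ := by
  have hα' : (0 : ℝ) < α := by exact_mod_cast hα
  induction w using ENat.recTopCoe with
  | top => simp
  | coe n =>
    rw [wr_nat]
    have : α < n := by exact_mod_cast h
    have : (α : ℝ) ≤ n := by exact_mod_cast this.le
    gcongr

lemma wr_le_one (w : ℕ∞) : wr w ≤ 1 := by
  unfold wr
  rcases Nat.eq_zero_or_pos w.toNat with h | h
  · simp [h]
  · exact inv_le_one_of_one_le₀ (by exact_mod_cast h)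

lemma conv_norm_le {R : Finset ℕ} {c : ℕ → ℝ} {x : ℕ → c00} {C : ℝ} (hc : ∀ p, 0 ≤ c p)
    (h1 : ∑ p ∈ R, c p = 1) (h : ∀ p ∈ R, iwNorm P (x p) ≤ C) :
    iwNorm P (∑ p ∈ R, c p • x p) ≤ C := by
  refine (iwNorm_sum_le _ _).trans ?_
  calc ∑ p ∈ R, iwNorm P (c p • x p) ≤ ∑ p ∈ R, c p * C := by
        apply Finset.sum_le_sum
        intro p hp
        refine (iwNorm_smul_le _ _).trans ?_
        rw [abs_of_nonneg (hc p)]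
        exact mul_le_mul_of_nonneg_left (h p hp) (hc p)
    _ = C := by rw [← Finset.sum_mul, h1, one_mul]

/-- Functionals of weight less than `m_J` act on special convex combinations of order `n_J` of blocks
by at most about the reciprocal of their weight. -/
theorem avg_light_le {J n : ℕ} (hJ : 1 ≤ J) (hn : n + 1 = P.n J) {ε : ℝ} {R : Finset ℕ} {c : ℕ → ℝ}
    (hS : SCC n ε R c) {b : ℕ → ℕ} {x : ℕ → c00}
    (hx : ∀ p ∈ R, ∀ i, x p i ≠ 0 → p ≤ i ∧ i ≤ b p)
    (hsep : ∀ p ∈ R, ∀ p' ∈ R, p < p' → b p < p') (hx1 : ∀ p ∈ R, iwNorm P (x p) ≤ 1)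
    {f : c00} {w : ℕ∞} (hf : WIW P f w) (hw : w < (P.m J : ℕ)) :
    |evalPair f (∑ p ∈ R, c p • x p)| ≤ wr w + 2 * ε := by
  rcases W_cases hf with ⟨rfl, -⟩ | ⟨js, M, g, v, hjs, h, h2, rfl, rfl⟩
  · exact absurd hw (by simp)
  have hw' : wgt P js < P.m J := by exact_mod_cast hw
  have hord := ord_lt_of_wgt_lt' hJ hw'
  have hsm : Small R c M ε := hS.smallOf (by omega) h.adm
  have hbad := bad_le hsep hS.eps_nonneg hsm (fun p hp => hS.single hp)
  have hwp := wgt_pos' P js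
  rw [ev_sum_right, wr_nat]
  refine (Finset.abs_sum_le_sum_abs _ _).trans ?_
  have key : ∀ p ∈ R, |evalPair (opF P js M g) (c p • x p)| ≤
      c p * (wgt P js : ℝ)⁻¹ + if p ∈ bad R b M then c p else 0 := by
    intro p hp
    rw [ev_smul_right, abs_mul, abs_of_nonneg (hS.nonneg p)]
    have hcp := hS.nonneg p
    split_ifs with hb
    · have h3 : |evalPair (opF P js M g) (x p)| ≤ 1 := (abs_ev_le ⟨_, hf⟩ _).trans (hx1 p hp)
      have : 0 ≤ c p * (wgt P js : ℝ)⁻¹ := by positivity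
      nlinarith
    · rw [add_zero]
      apply mul_le_mul_of_nonneg_left _ hcp
      rw [opF, ev_smul_left, ev_sum_left, abs_mul, abs_of_pos (inv_pos.2 hwp)]
      have h4 : |∑ q ∈ M, evalPair (g q) (x p)| ≤ 1 := by
        rcases good_ev_sum h (hx p hp) (not_bad hp hb) with ⟨q, hq, -, -, e⟩ | e
        · rw [e]
          exact (abs_ev_le (h.mem q hq).mem _).trans (hx1 p hp)
        · rw [e]; simp
      have : 0 < (wgt P js : ℝ)⁻¹ := by positivity
      nlinarith
  refine (Finset.sum_le_sum key).trans ?_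
  rw [Finset.sum_add_distrib, ← Finset.sum_mul, hS.sum_eq, one_mul, Finset.sum_ite_mem]
  have : R ∩ bad R b M = bad R b M := Finset.inter_eq_right.2 (Finset.filter_subset _ _)
  rw [this]
  linarith

/-! ### Rapidly increasing sequences and exact vectors -/

/-- A rapidly increasing family of block vectors indexed by `p ∈ L`, where `y p` is supported
in `[p, b p]`, and is estimated by functionals of weight less than `m_{J p}`. -/
structure RIS (P : IWParams) (L : Set ℕ) (b : ℕ → ℕ) (y : ℕ → c00) (J : ℕ → ℕ) (η : ℝ) :
    Prop where
  supp : ∀ p ∈ L, ∀ i, y p i ≠ 0 → p ≤ i ∧ i ≤ b p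
  sep : ∀ p ∈ L, ∀ p' ∈ L, p < p' → b p < p'
  norm : ∀ p ∈ L, iwNorm P (y p) ≤ 1
  wt : ∀ p ∈ L, ∀ f w, WIW P f w → w < ((P.m (J p) : ℕ) : ℕ∞) →
    |evalPair f (y p)| ≤ (1 + η) * wr w
  fast : ∀ p ∈ L, (p : ℝ) ≤ η * P.m (J p)

/-- A weighted functional acts on all but one of the vectors of a rapidly increasing family
roughly by the reciprocal of its weight. -/
theorem RIS.single_fun {L : Set ℕ} {b : ℕ → ℕ} {y : ℕ → c00} {J : ℕ → ℕ} {η : ℝ}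
    (h : RIS P L b y J η) (hη : 0 ≤ η) {R : Finset ℕ} (hR : ↑R ⊆ L) {g : c00} {w : ℕ∞}
    (hg : W0 P g w) :
    ∃ p0, ∀ p ∈ R, p ≠ p0 → |evalPair g (y p)| ≤ (1 + η) * wr w + η := by
  have hw0 : 0 ≤ (1 + η) * wr w := mul_nonneg (by linarith) (wr_nonneg w)
  rcases hg with rfl | hg
  · refine ⟨0, fun p _ _ => ?_⟩
    rw [ev_zero_left, abs_zero]; linarith
  induction w using ENat.recTopCoe with
  | top =>
    rcases W_cases hg with ⟨-, i, s, hs, rfl⟩ | ⟨js, M, g, v, hjs, h, h2, rfl, hw⟩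
    · by_cases hex : ∃ p ∈ R, y p i ≠ 0
      · obtain ⟨p0, hp0, hi⟩ := hex
        refine ⟨p0, fun p hp hne => ?_⟩
        have : y p i = 0 := by
          by_contra hi'
          have h1 := h.supp p0 (hR hp0) i hi
          have h2 := h.supp p (hR hp) i hi'
          rcases lt_or_gt_of_ne hne with h3 | h3
          · have := h.sep p (hR hp) p0 (hR hp0) h3; omega
          · have := h.sep p0 (hR hp0) p (hR hp) h3; omega
        rw [ev_single_left, this]
        simp only [mul_zero, abs_zero]; linarith
      · push Not at hex
        refine ⟨0, fun p hp _ => ?_⟩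
        rw [ev_single_left, hex p hp]
        simp only [mul_zero, abs_zero]; linarith
    · exact absurd hw.symm (ENat.natCast_ne_top _)
  | coe n =>
    let S := R.filter (fun p => P.m (J p) ≤ n)
    have hlight : ∀ p ∈ R, p ∉ S → |evalPair g (y p)| ≤ (1 + η) * wr n + η := by
      intro p hp hpS
      have : n < P.m (J p) := by
        by_contra hc
        exact hpS (Finset.mem_filter.2 ⟨hp, not_lt.1 hc⟩)
      have := h.wt p (hR hp) g n hg (by exact_mod_cast this)
      linarith
    rcases S.eq_empty_or_nonempty with h0 | hne
    · refine ⟨0, fun p hp _ => hlight p hp (by rw [h0]; simp)⟩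
    · refine ⟨S.max' hne, fun p hp hpne => ?_⟩
      by_cases hpS : p ∈ S
      swap
      · exact hlight p hp hpS
      have hp0 := Finset.mem_filter.1 (S.max'_mem hne)
      set p0 := S.max' hne
      have hlt : p < p0 := lt_of_le_of_ne (S.le_max' p hpS) hpne
      have hb := h.sep p (hR hp) p0 (hR hp0.1) hlt
      have hn : (0 : ℝ) < n := by
        have := m_ge_two P (J p0)
        exact_mod_cast (by omega : 0 < n)
      rw [ev_eq_sum' g (y p) (Finset.range p0)]
      · refine (Finset.abs_sum_le_sum_abs _ _).trans ?_
        have : ∀ i ∈ Finset.range p0, |g i * y p i| ≤ (n : ℝ)⁻¹ := by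
          intro i _
          rw [abs_mul]
          have h1 := W_abs_le_wr hg (ENat.natCast_ne_top n) i
          rw [wr_nat] at h1
          have h2 := (abs_apply_le (P := P) (y p) i).trans (h.norm p (hR hp))
          have := abs_nonneg (y p i)
          have := abs_nonneg (g i)
          nlinarith
        refine (Finset.sum_le_sum this).trans ?_
        rw [Finset.sum_const, Finset.card_range, nsmul_eq_mul]
        have h3 := h.fast p0 (hR hp0.1)
        have h4 : (P.m (J p0) : ℝ) ≤ n := by exact_mod_cast hp0.2
        have h5 : (p0 : ℝ) * (n : ℝ)⁻¹ ≤ η := by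
          rw [← div_eq_mul_inv, div_le_iff₀ hn]
          nlinarith
        linarith
      · intro i hi
        have := h.supp p (hR hp) i (Finsupp.mem_support_iff.1 hi)
        exact Finset.mem_range.2 (by omega)

/-- On an average of a rapidly increasing family, a weighted functional acts essentially through
one of its pieces only. -/
theorem RIS.one_piece {L : Set ℕ} {b : ℕ → ℕ} {y : ℕ → c00} {J : ℕ → ℕ} {η : ℝ}
    (h : RIS P L b y J η) (hη : 0 ≤ η) (hη1 : η ≤ 1) {R : Finset ℕ} (hR : ↑R ⊆ L) {c : ℕ → ℝ}
    (hc : ∀ p, 0 ≤ c p) (hc1 : ∑ p ∈ R, c p = 1)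
    {js : List ℕ} {M : Finset ℕ} {g : ℕ → c00} {v : ℕ → ℕ∞} (hjs : js ≠ [])
    (hop : IsOp P js M g v) {ε : ℝ} (hε : 0 ≤ ε) (hsm : Small R c M ε) (hsi : ∀ p ∈ R, c p ≤ ε)
    {α q : ℕ} (hα : 1 ≤ α) (hq : q ∈ M)
    (hq1 : ∀ q' ∈ M, q' < q → ∀ p ∈ R, evalPair (g q') (y p) = 0)
    (hq2 : ∀ q' ∈ M, q < q' → (α : ℕ∞) < v q') :
    |evalPair (opF P js M g) (∑ p ∈ R, c p • y p) -
      (wgt P js : ℝ)⁻¹ * evalPair (g q) (∑ p ∈ R, c p • y p)| ≤ 3 * ε + η + 2 / α := by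
  have hwp := wgt_pos' P js
  have hw1 : (wgt P js : ℝ)⁻¹ ≤ 1 := inv_le_one_of_one_le₀ (by exact_mod_cast wgt_pos P js)
  have hw0 : 0 < (wgt P js : ℝ)⁻¹ := by positivity
  have hp0 : ∀ q ∈ M, ∃ p0, ∀ p ∈ R, p ≠ p0 → |evalPair (g q) (y p)| ≤ (1 + η) * wr (v q) + η :=
    fun q hq => h.single_fun hη hR (hop.mem q hq)
  choose! p0 hp0 using hp0
  let B1 := bad R b M
  let B2 := R.filter (fun p => (∃ q ∈ M, q ≤ p) ∧ p = p0 (qm M p))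
  have hB1 : ∑ p ∈ B1, c p ≤ 2 * ε :=
    bad_le (fun p hp p' hp' => h.sep p (hR hp) p' (hR hp')) hε hsm hsi
  have hB2 : ∑ p ∈ B2, c p ≤ ε := by
    refine hsm B2 (Finset.filter_subset _ _) (qm M) ?_ ?_ ?_
    · intro p hp
      exact (qm_spec (Finset.mem_filter.1 hp).2.1).1
    · intro p hp p' hp' hpp
      have h1 := (Finset.mem_filter.1 hp).2
      have h2 := (Finset.mem_filter.1 hp').2
      have s1 := qm_spec h1.1
      have s2 := qm_spec h2.1
      have := s2.2.2 _ s1.1 (by omega)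
      have : qm M p ≠ qm M p' := by
        intro he
        have := h1.2.trans ((congrArg p0 he).trans h2.2.symm)
        omega
      omega
    · intro p hp
      exact (qm_spec (Finset.mem_filter.1 hp).2.1).2.1
  have hα' : (0 : ℝ) < α := by exact_mod_cast hα
  have key : ∀ p ∈ R, |(wgt P js : ℝ)⁻¹ * ∑ q' ∈ M.erase q, evalPair (g q') (y p)| ≤
      (η + 2 / α) + (if p ∈ B1 then 1 else 0) + (if p ∈ B2 then 1 else 0) := by
    intro p hp
    have hpos : 0 ≤ η + 2 / α := by positivity
    have hle1 : |(wgt P js : ℝ)⁻¹ * ∑ q' ∈ M.erase q, evalPair (g q') (y p)| ≤ 1 :=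
      (abs_op_ev_le hjs (hop.subset (Finset.erase_subset q M)) (y p)).trans (h.norm p (hR hp))
    by_cases hb1 : p ∈ B1
    · rw [if_pos hb1]
      have : (0 : ℝ) ≤ if p ∈ B2 then 1 else 0 := by split_ifs <;> norm_num
      linarith
    by_cases hb2 : p ∈ B2
    · rw [if_pos hb2]
      have : (0 : ℝ) ≤ if p ∈ B1 then 1 else 0 := by split_ifs; norm_num
      linarith
    rw [if_neg hb1, if_neg hb2, add_zero, add_zero]
    have hgood := not_bad hp hb1
    by_cases hact : (∃ q' ∈ M, q' ≤ p) ∧ q < qm M p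
    · have hs := qm_spec hact.1
      have e : ∑ q' ∈ M.erase q, evalPair (g q') (y p) = evalPair (g (qm M p)) (y p) := by
        apply Finset.sum_eq_single
        · intro q' hq' hne
          exact good_ev hop (h.supp p (hR hp)) hgood (Finset.mem_of_mem_erase hq')
            (fun hc => hne hc.1)
        · intro hc
          exact absurd (Finset.mem_erase.2 ⟨hact.2.ne', hs.1⟩) hc
      rw [e, abs_mul, abs_of_pos hw0]
      have h1 := hp0 _ hs.1 p hp (fun hc => hb2 (Finset.mem_filter.2 ⟨hp, hact.1, hc⟩))
      have h2 := wr_le_of_lt hα (hq2 _ hs.1 hact.2)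
      have h3 : (1 + η) * wr (v (qm M p)) ≤ 2 / α := by
        rw [div_eq_mul_inv]
        exact mul_le_mul (by linarith) h2 (wr_nonneg _) (by norm_num)
      have h4 := abs_nonneg (evalPair (g (qm M p)) (y p))
      nlinarith
    · have e : ∑ q' ∈ M.erase q, evalPair (g q') (y p) = 0 := by
        apply Finset.sum_eq_zero
        intro q' hq'
        rw [Finset.mem_erase] at hq'
        rcases lt_or_gt_of_ne hq'.1 with hlt | hgt
        · exact hq1 q' hq'.2 hlt p hp
        · refine good_ev hop (h.supp p (hR hp)) hgood hq'.2 (fun hc => hact ?_)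
          exact ⟨⟨q', hq'.2, hc.2⟩, by rw [← hc.1]; exact hgt⟩
      rw [e, mul_zero, abs_zero]
      exact hpos
  have e : evalPair (opF P js M g) (∑ p ∈ R, c p • y p) -
      (wgt P js : ℝ)⁻¹ * evalPair (g q) (∑ p ∈ R, c p • y p) =
      ∑ p ∈ R, c p * ((wgt P js : ℝ)⁻¹ * ∑ q' ∈ M.erase q, evalPair (g q') (y p)) := by
    rw [ev_sum_right, ev_sum_right, Finset.mul_sum, ← Finset.sum_sub_distrib]
    apply Finset.sum_congr rfl
    intro p _
    rw [ev_smul_right, ev_smul_right, opF, ev_smul_left, ev_sum_left,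
      ← Finset.add_sum_erase M _ hq]
    ring
  rw [e]
  refine (Finset.abs_sum_le_sum_abs _ _).trans ?_
  calc ∑ p ∈ R, |c p * ((wgt P js : ℝ)⁻¹ * ∑ q' ∈ M.erase q, evalPair (g q') (y p))|
      ≤ ∑ p ∈ R, (c p * (η + 2 / α) + (if p ∈ B1 then c p else 0) +
          (if p ∈ B2 then c p else 0)) := by
        apply Finset.sum_le_sum
        intro p hp
        rw [abs_mul, abs_of_nonneg (hc p)]
        refine (mul_le_mul_of_nonneg_left (key p hp) (hc p)).trans (le_of_eq ?_)
        rw [mul_add, mul_add, mul_ite, mul_ite, mul_one, mul_zero]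
    _ = (η + 2 / α) + ∑ p ∈ B1, c p + ∑ p ∈ B2, c p := by
        have hR1 : R ∩ B1 = B1 := Finset.inter_eq_right.2 (Finset.filter_subset _ _)
        have hR2 : R ∩ B2 = B2 := Finset.inter_eq_right.2 (Finset.filter_subset _ _)
        rw [Finset.sum_add_distrib, Finset.sum_add_distrib, ← Finset.sum_mul, hc1, one_mul,
          Finset.sum_ite_mem, Finset.sum_ite_mem, hR1, hR2]
    _ ≤ _ := by linarith

/-- Approximately normalized exact vectors: `z` is supported in `[a,b]` beyond `N`, a functional of
weight `w` acts on `z` as at most about `m_j / w` (`z1`), and weighted functionals of Schreier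
order below `n_j` (or order `n_j`, starting before `N`) act on `z` through a single piece (`z2`). -/
structure GoodZ (P : IWParams) (j N a b : ℕ) (δ : ℝ) (z : c00) : Prop where
  supp : ∀ i, z i ≠ 0 → a ≤ i ∧ i ≤ b
  lt : N < a
  z1 : ∀ g w, WIW P g w → |evalPair g z| ≤ P.m j * wr w + δ
  z2 : ∀ (js : List ℕ) (M : Finset ℕ) (g : ℕ → c00) (v : ℕ → ℕ∞) (α q : ℕ), js ≠ [] →
    IsOp P js M g v → (ord P js < P.n j ∨ (ord P js = P.n j ∧ ∃ q ∈ M, q ≤ N)) → 1 ≤ α →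
    q ∈ M → (∀ q' ∈ M, q' < q → ∀ i, a ≤ i → g q' i = 0) →
    (∀ q' ∈ M, q < q' → (α : ℕ∞) < v q') →
    |evalPair (opF P js M g) z - (wgt P js : ℝ)⁻¹ * evalPair (g q) z| ≤ δ + 2 * P.m j / α
  z0 : iwNorm P z ≤ 1 + 4 * δ

/-- The first piece of a weighted functional acting on `[a, ∞)`. -/
lemma first_piece {js : List ℕ} {M : Finset ℕ} {g : ℕ → c00} {v : ℕ → ℕ∞}
    (h : IsOp P js M g v) (a : ℕ) :
    (∀ q ∈ M, ∀ i, a ≤ i → g q i = 0) ∨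
    ∃ q ∈ M, (∃ i, a ≤ i ∧ g q i ≠ 0) ∧ (∀ q' ∈ M, q' < q → ∀ i, a ≤ i → g q' i = 0) ∧
      (∀ q' ∈ M, q < q' → (a : ℕ∞) < v q') := by
  classical
  let S := M.filter (fun q => ∃ i, a ≤ i ∧ g q i ≠ 0)
  rcases S.eq_empty_or_nonempty with h0 | hne
  · left
    intro q hq i hi
    by_contra hc
    have : q ∈ S := Finset.mem_filter.2 ⟨hq, i, hi, hc⟩
    rw [h0] at this
    simp at this
  · right
    have hm := Finset.mem_filter.1 (S.min'_mem hne)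
    refine ⟨S.min' hne, hm.1, hm.2, ?_, ?_⟩
    · intro q' hq' hlt i hi
      by_contra hc
      have := S.min'_le q' (Finset.mem_filter.2 ⟨hq', i, hi, hc⟩)
      omega
    · intro q' hq' hlt
      obtain ⟨i, hi, hne'⟩ := hm.2
      have := (h.sep _ hm.1 q' hq' hlt i hne').2
      exact lt_of_le_of_lt (by exact_mod_cast hi) this

/-- Averages of a rapidly increasing family over special convex combinations are exact vectors. -/
theorem RIS.exists_goodZ {j : ℕ} (hj : 1 ≤ j) {δ : ℝ} (hδ : 0 < δ) (hδ1 : δ ≤ 1)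
    {L : Set ℕ} (hL : L.Infinite) {b : ℕ → ℕ} {y : ℕ → c00} {J : ℕ → ℕ} {η : ℝ} (hη : 0 ≤ η)
    (hηδ : η ≤ δ / (4 * P.m j)) (h : RIS P L b y J η) (N : ℕ) :
    ∃ (R : Finset ℕ) (c : ℕ → ℝ), ↑R ⊆ L ∧ (∀ p ∈ R, N < p) ∧ (∀ p, 0 ≤ c p) ∧
      ∑ p ∈ R, c p = 1 ∧ SF (P.n j) R ∧
      ∃ a b', (∀ p ∈ R, a ≤ p ∧ b p ≤ b') ∧ GoodZ P j N a b' δ ((P.m j : ℝ) • ∑ p ∈ R, c p • y p) := by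
  have hmj := m_pos P j
  have hm2 : (2 : ℝ) ≤ P.m j := by exact_mod_cast m_ge_two P j
  obtain ⟨n, hn⟩ := Nat.exists_eq_add_of_le' (n_ge_one P j)
  obtain ⟨N', hN'⟩ := exists_nat_gt (4 * P.m j / δ)
  set ε : ℝ := δ / (12 * P.m j * (N + 1)) with hε
  have hε0 : 0 < ε := by positivity
  have hNε : (N + 1) * (3 * (P.m j * ε)) = δ / 4 := by
    rw [hε]; field_simp; norm_num
  have hN0 : (0 : ℝ) ≤ N := by positivity
  have hmε : 3 * (P.m j * ε) ≤ δ / 4 := by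
    have : 0 ≤ P.m j * ε := by positivity
    nlinarith
  have hηm : P.m j * η ≤ δ / 4 := by
    have := mul_le_mul_of_nonneg_left hηδ hmj.le
    refine this.trans (le_of_eq ?_)
    field_simp
  have hη1 : η ≤ 1 := by nlinarith
  obtain ⟨R, c, hS, hRL, hRN⟩ := exists_SCC L hL n ε hε0 (max N N')
  have hRne : R.Nonempty := by
    by_contra hc
    rw [Finset.not_nonempty_iff_eq_empty] at hc
    have := hS.sum_eq
    rw [hc] at this
    simp at this
  set a := R.min' hRne with ha
  set b' := R.sup b with hb'
  set x := ∑ p ∈ R, c p • y p with hx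
  have haR := R.min'_mem hRne
  have haN : max N N' < a := hRN a haR
  have hNa : N < a := lt_of_le_of_lt (le_max_left _ _) haN
  have hNa' : N' < a := lt_of_le_of_lt (le_max_right _ _) haN
  have haR' : ∀ p ∈ R, a ≤ p := fun p hp => R.min'_le p hp
  have hz1 : ∀ g w, WIW P g w → |evalPair g ((P.m j : ℝ) • x)| ≤ P.m j * wr w + δ := by
    intro g w hg
    obtain ⟨p0, hp0⟩ := h.single_fun hη hRL (Or.inr hg : W0 P g w)
    have : |evalPair g x| ≤ ((1 + η) * wr w + η) + ε := by
      rw [hx, ev_sum_right]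
      refine (Finset.abs_sum_le_sum_abs _ _).trans ?_
      have hw0 : 0 ≤ (1 + η) * wr w := mul_nonneg (by linarith) (wr_nonneg w)
      have : ∀ p ∈ R, |evalPair g (c p • y p)| ≤ c p * ((1 + η) * wr w + η) +
          if p = p0 then ε else 0 := by
        intro p hp
        rw [ev_smul_right, abs_mul, abs_of_nonneg (hS.nonneg p)]
        split_ifs with he
        · have h1 : |evalPair g (y p)| ≤ 1 := (abs_ev_le ⟨_, hg⟩ _).trans (h.norm p (hRL hp))
          have h2 := hS.single hp
          have h3 := hS.nonneg p
          have : 0 ≤ c p * ((1 + η) * wr w + η) := by positivity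
          nlinarith
        · rw [add_zero]
          exact mul_le_mul_of_nonneg_left (hp0 p hp he) (hS.nonneg p)
      refine (Finset.sum_le_sum this).trans ?_
      rw [Finset.sum_add_distrib, ← Finset.sum_mul, hS.sum_eq, one_mul, Finset.sum_ite_eq']
      split_ifs <;> linarith
    rw [ev_smul_right, abs_mul, abs_of_pos hmj]
    have hw1 := wr_le_one w
    have hw0 := wr_nonneg w
    have h2 : P.m j * η * wr w ≤ δ / 4 := by
      have : 0 ≤ P.m j * η := by positivity
      nlinarith
    have h1 := mul_le_mul_of_nonneg_left this hmj.le
    have : (P.m j : ℝ) * ((1 + η) * wr w + η + ε) =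
      P.m j * wr w + P.m j * η * wr w + P.m j * η + P.m j * ε := by ring
    have : 0 ≤ P.m j * ε := by positivity
    linarith
  have hz2 : ∀ (js : List ℕ) (M : Finset ℕ) (g : ℕ → c00) (v : ℕ → ℕ∞) (α q : ℕ), js ≠ [] →
    IsOp P js M g v → (ord P js < P.n j ∨ (ord P js = P.n j ∧ ∃ q ∈ M, q ≤ N)) → 1 ≤ α →
    q ∈ M → (∀ q' ∈ M, q' < q → ∀ i, a ≤ i → g q' i = 0) →
    (∀ q' ∈ M, q < q' → (α : ℕ∞) < v q') →
    |evalPair (opF P js M g) ((P.m j : ℝ) • x) - (wgt P js : ℝ)⁻¹ *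
      evalPair (g q) ((P.m j : ℝ) • x)| ≤ δ + 2 * P.m j / α := by
    intro js M g v α q hjs hop hord hα hq hq1 hq2
    have hsm : Small R c M ((N + 1) * ε) := by
      rcases hord with hlt | ⟨heq, q', hq', hqN⟩
      · intro B hB ψ h1 h2 h3
        have := hS.smallOf (by omega : ord P js ≤ n) hop.adm B hB ψ h1 h2 h3
        nlinarith
      · intro B hB ψ h1 h2 h3
        have hadm := hop.adm
        rw [heq, hn] at hadm
        have := hS.smallOf' hε0.le hadm hq' hqN B hB ψ h1 h2 h3
        nlinarith
    have hsi : ∀ p ∈ R, c p ≤ (N + 1) * ε := by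
      intro p hp
      have := hS.single hp
      nlinarith
    have := h.one_piece hη hη1 hRL hS.nonneg hS.sum_eq hjs hop (by positivity) hsm hsi hα hq
      (fun q' hq' hlt p hp => ev_eq_zero fun i hi => by
        by_contra hc
        have h1 := (h.supp p (hRL hp) i hc).1
        exact hi (hq1 q' hq' hlt i ((haR' p hp).trans h1))) hq2
    rw [ev_smul_right, ev_smul_right, mul_left_comm, ← mul_sub, abs_mul, abs_of_pos hmj]
    have h1 := mul_le_mul_of_nonneg_left this hmj.le
    refine h1.trans ?_
    have : (P.m j : ℝ) * (3 * ((N + 1) * ε) + η + 2 / α) =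
      (N + 1) * (3 * (P.m j * ε)) + P.m j * η + 2 * P.m j / α := by ring
    rw [this]
    linarith
  refine ⟨R, c, hRL, fun p hp => lt_of_le_of_lt (le_max_left _ _) (hRN p hp), hS.nonneg, hS.sum_eq,
    by rw [hn]; exact hS.adm, a, b', fun p hp => ⟨haR' p hp, Finset.le_sup hp⟩,
    ⟨?_, hNa, hz1, hz2, ?_⟩⟩
  · intro i hi
    rw [Finsupp.smul_apply, smul_eq_mul] at hi
    have hi' := right_ne_zero_of_mul hi
    rw [Finsupp.finsetSum_apply] at hi'
    obtain ⟨p, hp, hpi⟩ := Finset.exists_ne_zero_of_sum_ne_zero hi'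
    rw [Finsupp.smul_apply, smul_eq_mul] at hpi
    have h1 := h.supp p (hRL hp) i (right_ne_zero_of_mul hpi)
    exact ⟨(haR' p hp).trans h1.1, h1.2.trans (Finset.le_sup hp)⟩
  · set z := (P.m j : ℝ) • x with hz
    have hzn := iwNorm_nonneg (P := P) z
    have key : iwNorm P z ≤ max (1 + δ) (iwNorm P z / 2 + 2 * δ) := by
      apply iwNorm_le
      intro f w hf
      rcases W_cases hf with ⟨rfl, -⟩ | ⟨js, M, g, v, hjs, hop, h2, rfl, rfl⟩
      · have h1 := hz1 f ⊤ hf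
        rw [wr_top, mul_zero, zero_add] at h1
        refine le_max_of_le_left ?_
        linarith [le_abs_self (evalPair f z)]
      · by_cases hord : ord P js < P.n j
        · rcases first_piece hop a with h0 | ⟨q, hq, -, hq1, hq2⟩
          · have : evalPair (opF P js M g) z = 0 := by
              rw [opF, ev_smul_left, ev_sum_left, Finset.sum_eq_zero, mul_zero]
              intro q hq
              apply ev_eq_zero
              intro i hi
              by_contra hc
              rw [hz, Finsupp.smul_apply, smul_eq_mul] at hc
              have hi' := right_ne_zero_of_mul hc
              rw [Finsupp.finsetSum_apply] at hi'
              obtain ⟨p, hp, hpi⟩ := Finset.exists_ne_zero_of_sum_ne_zero hi'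
              rw [Finsupp.smul_apply, smul_eq_mul] at hpi
              have h1 := h.supp p (hRL hp) i (right_ne_zero_of_mul hpi)
              exact hi (h0 q hq i ((haR' p hp).trans h1.1))
            rw [this]
            refine le_max_of_le_left (by linarith)
          · have ha1 : 1 ≤ a := by omega
            have h3 := hz2 js M g v a q hjs hop (Or.inl hord) ha1 hq hq1 hq2
            have h4 : 2 * P.m j / (a : ℝ) ≤ δ := by
              have ha0 : (0 : ℝ) < a := by exact_mod_cast ha1
              rw [div_le_iff₀ ha0]
              have h5 : 4 * P.m j / δ < a := hN'.trans (by exact_mod_cast hNa')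
              rw [div_lt_iff₀ hδ] at h5
              nlinarith
            have h5 : (wgt P js : ℝ)⁻¹ ≤ 1 / 2 := by
              rw [one_div]
              have : (2 : ℝ) ≤ wgt P js := by exact_mod_cast wgt_ge_two hjs
              gcongr
            have h6 := abs_ev_le (P := P) (hop.mem q hq).mem z
            have h7 : (wgt P js : ℝ)⁻¹ * evalPair (g q) z ≤ iwNorm P z / 2 := by
              have h8 := (abs_le.1 h6).2
              have h9 : 0 < (wgt P js : ℝ)⁻¹ := inv_pos.2 (wgt_pos' P js)
              nlinarith
            refine le_max_of_le_right ?_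
            have := (abs_le.1 h3).2
            linarith
        · have hwm : P.m j ≤ wgt P js := by
            by_contra hc
            have := ord_lt_of_wgt_lt' hj (not_le.1 hc)
            omega
          have h1 := hz1 _ _ hf
          rw [wr_nat] at h1
          have h3 : P.m j * (wgt P js : ℝ)⁻¹ ≤ 1 := by
            rw [← div_eq_mul_inv, div_le_one (wgt_pos' P js)]
            exact_mod_cast hwm
          refine le_max_of_le_left ?_
          linarith [le_abs_self (evalPair (opF P js M g) z)]
    rcases le_max_iff.1 key with h1 | h1 <;> linarith

end IWDual

namespace IWDual
variable {P : IWParams}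

/-! ### Shrinking -/

lemma exists_sep (b : ℕ → ℕ) (hb : ∀ p, p ≤ b p) :
    ∃ L : Set ℕ, L.Infinite ∧ (∀ p ∈ L, 1 ≤ p) ∧ ∀ p ∈ L, ∀ p' ∈ L, p < p' → b p < p' := by
  set u : ℕ → ℕ := fun k => Nat.rec 1 (fun _ r => b r + 1) k with hu
  have hs : ∀ k, u (k + 1) = b (u k) + 1 := fun k => rfl
  have hmono : StrictMono u := strictMono_nat_of_lt_succ fun k => by
    rw [hs]; have := hb (u k); omega
  refine ⟨Set.range u, Set.infinite_range_of_injective hmono.injective, ?_, ?_⟩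
  · rintro p ⟨k, rfl⟩
    have := hmono.monotone (Nat.zero_le k)
    exact this
  · rintro p ⟨k, rfl⟩ p' ⟨k', rfl⟩ hlt
    have h1 : k < k' := hmono.lt_iff_lt.1 hlt
    have h2 : u (k + 1) ≤ u k' := hmono.monotone h1
    rw [hs] at h2
    omega

lemma inv_le_wr {f : c00} {w : ℕ∞} (hf : WIW P f w) {m : ℕ} (hw : w < (m : ℕ)) :
    (m : ℝ)⁻¹ ≤ wr w := by
  rcases W_cases hf with ⟨rfl, -⟩ | ⟨js, M, g, v, hjs, hop, h2, rfl, rfl⟩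
  · exact absurd hw (not_lt.2 le_top)
  · rw [wr_nat]
    have h1 : wgt P js < m := by exact_mod_cast hw
    have := wgt_pos' P js
    gcongr

/-- Averages of order `n_J` of bounded blocks are, up to a factor `1 + η`, optimally small against
functionals of weight less than `m_J`. -/
lemma avg_light_le_mul {J n : ℕ} (hJ : 1 ≤ J) (hn : n + 1 = P.n J) {ε η : ℝ} (hεη : 2 * ε ≤ η * (P.m J : ℝ)⁻¹)
    (hη : 0 ≤ η)
    {R : Finset ℕ} {c : ℕ → ℝ}
    (hS : SCC n ε R c) {b : ℕ → ℕ} {x : ℕ → c00}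
    (hx : ∀ p ∈ R, ∀ i, x p i ≠ 0 → p ≤ i ∧ i ≤ b p)
    (hsep : ∀ p ∈ R, ∀ p' ∈ R, p < p' → b p < p') (hx1 : ∀ p ∈ R, iwNorm P (x p) ≤ 1)
    {f : c00} {w : ℕ∞} (hf : WIW P f w) (hw : w < (P.m J : ℕ)) :
    |evalPair f (∑ p ∈ R, c p • x p)| ≤ (1 + η) * wr w := by
  have h1 := avg_light_le hJ hn hS hx hsep hx1 hf hw
  have h2 := inv_le_wr hf hw
  nlinarith

lemma supp_bound (x : c00) : ∃ b, ∀ i, x i ≠ 0 → i ≤ b :=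
  ⟨x.support.sup id, fun _ hi => Finset.le_sup (f := id) (Finsupp.mem_support_iff.2 hi)⟩

lemma exists_m_large (P : IWParams) (r : ℝ) : ∃ J, 1 ≤ J ∧ r ≤ P.m J := by
  obtain ⟨k, hk⟩ := exists_nat_ge r
  refine ⟨k + 1, by omega, hk.trans ?_⟩
  have := P.m_mono.le_apply (x := k + 1)
  exact_mod_cast (by omega : k ≤ P.m (k + 1))

lemma apply_conv_ne {R : Finset ℕ} {c : ℕ → ℝ} {x : ℕ → c00} {i : ℕ}
    (h : (∑ p ∈ R, c p • x p) i ≠ 0) : ∃ p ∈ R, x p i ≠ 0 := by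
  rw [Finsupp.finsetSum_apply] at h
  obtain ⟨p, hp, hpi⟩ := Finset.exists_ne_zero_of_sum_ne_zero h
  rw [Finsupp.smul_apply, smul_eq_mul] at hpi
  exact ⟨p, hp, right_ne_zero_of_mul hpi⟩

lemma map_conv_ge {R : Finset ℕ} {c : ℕ → ℝ} {x : ℕ → c00} {g : c00 →ₗ[ℝ] ℝ} {δ : ℝ}
    (hc : ∀ p, 0 ≤ c p) (h1 : ∑ p ∈ R, c p = 1) (h : ∀ p ∈ R, δ ≤ g (x p)) :
    δ ≤ g (∑ p ∈ R, c p • x p) := by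
  rw [map_sum]
  calc δ = ∑ p ∈ R, c p * δ := by rw [← Finset.sum_mul, h1, one_mul]
    _ ≤ _ := Finset.sum_le_sum fun p hp => by
      rw [map_smul, smul_eq_mul]; exact mul_le_mul_of_nonneg_left (h p hp) (hc p)

/-- Bounded functionals are small on far away vectors. -/
theorem shrinking {g : c00 →ₗ[ℝ] ℝ} {C : ℝ} (hg : ∀ x, |g x| ≤ C * iwNorm P x) {δ : ℝ}
    (hδ : 0 < δ) : ∃ N, ∀ x : c00, (∀ i, x i ≠ 0 → N ≤ i) → |g x| ≤ δ * iwNorm P x := by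
  by_contra! hcon
  have h1 : ∀ N, ∃ (x : c00) (b : ℕ), (∀ i, x i ≠ 0 → N ≤ i ∧ i ≤ b) ∧ N ≤ b ∧ iwNorm P x ≤ 1 ∧
      δ ≤ g x := by
    intro N
    obtain ⟨x, hx, hgx⟩ := hcon N
    have hx0 : 0 < iwNorm P x := by
      rcases (iwNorm_nonneg (P := P) x).eq_or_lt with h | h
      · have := hg x
        rw [← h] at this hgx
        linarith
      · exact h
    obtain ⟨b, hb⟩ := supp_bound x
    have key : ∀ s : ℝ, |s| = 1 → δ ≤ (s * (iwNorm P x)⁻¹) * g x →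
        ∃ (x : c00) (b : ℕ), (∀ i, x i ≠ 0 → N ≤ i ∧ i ≤ b) ∧ N ≤ b ∧ iwNorm P x ≤ 1 ∧
      δ ≤ g x := by
      intro s hs hle
      refine ⟨(s * (iwNorm P x)⁻¹) • x, max N b, ?_, le_max_left _ _, ?_, ?_⟩
      · intro i hi
        have : x i ≠ 0 := by
          rw [Finsupp.smul_apply, smul_eq_mul] at hi
          exact right_ne_zero_of_mul hi
        exact ⟨hx i this, (hb i this).trans (le_max_right _ _)⟩
      · refine (iwNorm_smul_le _ _).trans ?_
        rw [abs_mul, hs, one_mul, abs_of_pos (inv_pos.2 hx0), inv_mul_cancel₀ hx0.ne']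
      · rw [map_smul, smul_eq_mul]; exact hle
    rcases abs_cases (g x) with ⟨h, -⟩ | ⟨h, -⟩
    · apply key 1 abs_one
      rw [one_mul, inv_mul_eq_div, le_div_iff₀ hx0]
      linarith
    · apply key (-1) (by norm_num)
      rw [neg_one_mul, neg_mul, inv_mul_eq_div, ← neg_div, le_div_iff₀ hx0]
      linarith
  choose x b hsupp hb hx1 hgx using h1
  obtain ⟨L, hL, hLpos, hLsep⟩ := exists_sep b hb
  have h2 : ∀ (η : ℝ) (J N : ℕ), 0 < η → 1 ≤ J → ∃ (y : c00) (b' : ℕ),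
      (∀ i, y i ≠ 0 → N ≤ i ∧ i ≤ b') ∧ N ≤ b' ∧
      iwNorm P y ≤ 1 ∧ δ ≤ g y ∧
      ∀ f w, WIW P f w → w < ((P.m J : ℕ) : ℕ∞) → |evalPair f y| ≤ (1 + η) * wr w := by
    intro η J N hη hJ
    obtain ⟨n, hn⟩ : ∃ n, n + 1 = P.n J := ⟨P.n J - 1, by have := n_ge_one P J; omega⟩
    have hm := m_pos P J
    obtain ⟨R, c, hS, hRL, hRN⟩ := exists_SCC L hL n (η * (P.m J : ℝ)⁻¹ / 2) (by positivity) N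
    obtain ⟨b', hb'⟩ := supp_bound (∑ p ∈ R, c p • x p)
    refine ⟨∑ p ∈ R, c p • x p, max N b', ?_, le_max_left _ _, ?_, ?_, ?_⟩
    · intro i hi
      obtain ⟨p, hp, hpi⟩ := apply_conv_ne hi
      exact ⟨(hRN p hp).le.trans (hsupp p i hpi).1, (hb' i hi).trans (le_max_right _ _)⟩
    · exact conv_norm_le hS.nonneg hS.sum_eq fun p _ => hx1 p
    · exact map_conv_ge hS.nonneg hS.sum_eq fun p _ => hgx p
    · intro f w hf hw
      exact avg_light_le_mul hJ hn (by linarith) hη.le hS (fun p _ => hsupp p)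
        (fun p hp p' hp' => hLsep p (hRL hp) p' (hRL hp')) (fun p _ => hx1 p) hf hw
  have h3 : ∀ j, 1 ≤ j → δ * P.m j ≤ C * 5 ∨ C < 0 := by
    intro j hj
    have hm := m_pos P j
    set η : ℝ := 1 / (4 * P.m j) with hη
    have hη0 : 0 < η := by positivity
    have h4 : ∀ p : ℕ, ∃ J, 1 ≤ J ∧ (p : ℝ) ≤ η * P.m J := by
      intro p
      obtain ⟨J, hJ, h⟩ := exists_m_large P (p / η)
      refine ⟨J, hJ, ?_⟩
      rw [div_le_iff₀ hη0] at h
      linarith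
    choose J hJ hJp using h4
    choose y b' hys hyb hy1 hgy hyw using fun p => h2 η (J p) p hη0 (hJ p)
    obtain ⟨L', hL', -, hLs⟩ := exists_sep b' hyb
    have hris : RIS P L' b' y J η :=
      ⟨fun p _ => hys p, hLs, fun p _ => hy1 p, fun p _ => hyw p, fun p _ => hJp p⟩
    obtain ⟨R, c, -, -, hc0, hc1, -, a, b'', -, hG⟩ :=
      hris.exists_goodZ hj one_pos le_rfl hL' hη0.le le_rfl 0
    have h5 := hG.z0
    have h6 := hg ((P.m j : ℝ) • ∑ p ∈ R, c p • y p)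
    have h7 := map_conv_ge (g := g) hc0 hc1 fun p _ => hgy p
    rw [map_smul, smul_eq_mul, abs_mul, abs_of_pos hm] at h6
    have h8 := (le_abs_self _).trans' h7
    by_cases hC : C < 0
    · exact Or.inr hC
    · left
      have : C * iwNorm P ((P.m j : ℝ) • ∑ p ∈ R, c p • y p) ≤ C * 5 :=
        mul_le_mul_of_nonneg_left (by linarith) (not_lt.1 hC)
      nlinarith
  obtain ⟨J, hJ1, hJ⟩ := exists_m_large P (C * 5 / δ + 1)
  rcases h3 J hJ1 with h | h
  · have : C * 5 / δ < P.m J := by linarith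
    rw [div_lt_iff₀ hδ] at this
    linarith
  · have h9 := hg (x 0)
    have := hgx 0
    have h10 := le_abs_self (g (x 0))
    have h11 := iwNorm_nonneg (P := P) (x 0)
    nlinarith

/-! ### Convex hulls of the norming set -/

/-- The convex hull of the functionals of the norming set supported in `[a,b]`. -/
def K (P : IWParams) (a b : ℕ) : Set c00 :=
  convexHull ℝ {f | memWIW P f ∧ ∀ i, f i ≠ 0 → a ≤ i ∧ i ≤ b}

/-- `v` is `δ`-close, in the dual norm, to the functional `g`. -/
def Near (P : IWParams) (g : c00 →ₗ[ℝ] ℝ) (v : c00) (δ : ℝ) : Prop :=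
  ∀ x, |g x - evalPair v x| ≤ δ * iwNorm P x

lemma K_supp {a b : ℕ} {v : c00} (hv : v ∈ K P a b) (i : ℕ) (hi : v i ≠ 0) : a ≤ i ∧ i ≤ b := by
  have hc : Convex ℝ {v : c00 | ∀ i, v i ≠ 0 → a ≤ i ∧ i ≤ b} := by
    intro v hv v' hv' s t _ _ _ i hi
    by_contra hcon
    apply hi
    have h1 : v i = 0 := by by_contra h; exact hcon (hv i h)
    have h2 : v' i = 0 := by by_contra h; exact hcon (hv' i h)
    simp [h1, h2]
  exact convexHull_min (fun f hf => hf.2) hc hv i hi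

lemma K_abs_le {a b : ℕ} {v : c00} (hv : v ∈ K P a b) (x : c00) : |evalPair v x| ≤ iwNorm P x := by
  have hc : Convex ℝ {v : c00 | |evalPair v x| ≤ iwNorm P x} := by
    intro v hv v' hv' s t hs ht hst
    simp only [Set.mem_ofPred_eq] at hv hv' ⊢
    rw [ev_add_left, ev_smul_left, ev_smul_left]
    refine (abs_add_le _ _).trans ?_
    rw [abs_mul, abs_mul, abs_of_nonneg hs, abs_of_nonneg ht]
    calc _ ≤ s * iwNorm P x + t * iwNorm P x := by gcongr
      _ = _ := by rw [← add_mul, hst, one_mul]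
  exact convexHull_min (fun f hf => abs_ev_le hf.1 x) hc hv

/-- On a finite interval of coordinates, the unit ball of the dual is approximated by the convex hull
of the norming set (Hahn–Banach separation in finite dimension). -/
lemma K_approx {g : c00 →ₗ[ℝ] ℝ} (hg : ∀ x, |g x| ≤ iwNorm P x) (a b : ℕ) {δ : ℝ} (hδ : 0 < δ) :
    ∃ v ∈ K P a b, ∀ x, |g (rst (Set.Icc a b) x) - evalPair v x| ≤ δ * iwNorm P x := by
  set s := Finset.Icc a b with hs
  let ρ : c00 →ₗ[ℝ] (s → ℝ) := LinearMap.pi fun i => Finsupp.lapply (i : ℕ)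
  have hρ : ∀ v i, ρ v i = v (i : ℕ) := fun v i => rfl
  let G : s → ℝ := fun i => g (Finsupp.single (i : ℕ) 1)
  have hdec : ∀ x : c00, rst (Set.Icc a b) x = ∑ i : s, x i • Finsupp.single (i : ℕ) 1 := by
    intro x
    ext k
    rw [Finsupp.finsetSum_apply]
    by_cases hk : k ∈ s
    · rw [rst_apply_mem (by rw [hs, Finset.mem_Icc] at hk; exact hk),
        Finset.sum_eq_single ⟨k, hk⟩]
      · simp
      · intro i _ hi
        have : (i : ℕ) ≠ k := fun h => hi (Subtype.ext h)
        simp [this]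
      · simp
    · rw [rst_apply_not_mem (by rw [hs, Finset.mem_Icc] at hk; exact hk), Finset.sum_eq_zero]
      intro i _
      have : (i : ℕ) ≠ k := fun h => hk (h ▸ i.2)
      simp [this]
  have hev : ∀ v ∈ K P a b, ∀ x : c00, evalPair v x = ∑ i : s, x i * v i := by
    intro v hv x
    rw [ev_eq_sum v x s, ← Finset.sum_coe_sort]
    · exact Finset.sum_congr rfl fun i _ => mul_comm _ _
    · intro i hi
      exact Finset.mem_Icc.2 (K_supp hv i (Finsupp.mem_support_iff.1 hi))
  have hgx : ∀ x : c00, g (rst (Set.Icc a b) x) = ∑ i : s, x i * G i := by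
    intro x
    rw [hdec, map_sum]
    exact Finset.sum_congr rfl fun i _ => by rw [map_smul, smul_eq_mul]
  have hcl : G ∈ closure (ρ '' K P a b) := by
    by_contra hcon
    have hconv : Convex ℝ (closure (ρ '' K P a b)) :=
      ((convex_convexHull ℝ _).linear_image ρ).closure
    obtain ⟨F, u, hFu, huF⟩ := geometric_hahn_banach_closed_point hconv isClosed_closure hcon
    let x : c00 := ∑ i : s, F (Pi.single i 1) • Finsupp.single (i : ℕ) 1
    have hxi : ∀ i : s, x (i : ℕ) = F (Pi.single i 1) := by
      intro i
      simp only [x, Finsupp.finsetSum_apply]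
      rw [Finset.sum_eq_single i]
      · simp
      · intro k _ hk
        have : (k : ℕ) ≠ i := fun h => hk (Subtype.ext h)
        simp [this]
      · simp
    have hF : ∀ y : s → ℝ, F y = ∑ i : s, x i * y i := by
      intro y
      conv_lhs => rw [← Finset.univ_sum_single y]
      rw [map_sum]
      apply Finset.sum_congr rfl
      intro i _
      rw [hxi]
      have : (Pi.single i (y i) : s → ℝ) = y i • Pi.single i 1 := by
        rw [← Pi.single_smul, smul_eq_mul, mul_one]
      rw [this, map_smul, smul_eq_mul, mul_comm]
    have hxr : rst (Set.Icc a b) x = x := by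
      rw [hdec]
      simp only [hxi]
      rfl
    have h1 : iwNorm P x ≤ u := by
      apply iwNorm_le
      intro f w hf
      have hk : rst (Set.Icc a b) f ∈ K P a b :=
        subset_convexHull ℝ _ ⟨mem_rst _ ⟨w, hf⟩, fun i hi => (rst_ne_zero hi).1⟩
      have h2 := hFu _ (subset_closure ⟨_, hk, rfl⟩)
      rw [hF] at h2
      have h3 := hev _ hk x
      rw [ev_rst, hxr] at h3
      rw [h3]
      exact h2.le
    rw [hF, ← hgx, hxr] at huF
    have := (le_abs_self _).trans (hg x)
    linarith
  have hcard : (0 : ℝ) < s.card + 1 := by positivity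
  obtain ⟨_, ⟨v, hv, rfl⟩, hd⟩ := Metric.mem_closure_iff.1 hcl (δ / (s.card + 1)) (by positivity)
  refine ⟨v, hv, fun x => ?_⟩
  rw [hgx, hev v hv, ← Finset.sum_sub_distrib]
  refine (Finset.abs_sum_le_sum_abs _ _).trans ?_
  have hx0 := iwNorm_nonneg (P := P) x
  calc _ ≤ ∑ _i : s, iwNorm P x * (δ / (s.card + 1)) := by
        apply Finset.sum_le_sum
        intro i _
        rw [← mul_sub, abs_mul]
        have h1 : |G i - v i| ≤ δ / (s.card + 1) := by
          have := dist_le_pi_dist G (ρ v) i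
          rw [Real.dist_eq, hρ] at this
          exact this.trans hd.le
        exact mul_le_mul (abs_apply_le x _) h1 (abs_nonneg _) hx0
    _ = (s.card / (s.card + 1)) * (δ * iwNorm P x) := by
        rw [Finset.sum_const, Finset.card_univ, Fintype.card_coe, nsmul_eq_mul]; ring
    _ ≤ 1 * (δ * iwNorm P x) := by
        apply mul_le_mul_of_nonneg_right _ (by positivity)
        rw [div_le_one hcard]; linarith
    _ = _ := one_mul _

/-- A norm one functional almost vanishing on the first `A` coordinates is close to the convex hull
of the functionals of the norming set supported beyond `A`. -/
theorem near_K {g : c00 →ₗ[ℝ] ℝ} (hg : ∀ x, |g x| ≤ iwNorm P x) (A : ℕ) {δ : ℝ} (hδ : 0 < δ)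
    (hA : ∀ i < A, |g (Finsupp.single i 1)| ≤ δ / (3 * (A + 1))) :
    ∃ b, A ≤ b ∧ ∃ v ∈ K P A b, Near P g v δ := by
  obtain ⟨N, hN⟩ := shrinking (fun x => (hg x).trans (one_mul _).ge) (by positivity : 0 < δ / 3)
  set b := max A N with hb
  obtain ⟨v, hv, hvg⟩ := K_approx hg A b (by positivity : 0 < δ / 3)
  refine ⟨b, le_max_left _ _, v, hv, fun x => ?_⟩
  have hx0 := iwNorm_nonneg (P := P) x
  have hsplit : x = rst (Set.Iio A) x + rst (Set.Icc A b) x + rst (Set.Ioi b) x := by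
    ext i
    simp only [Finsupp.add_apply]
    have hAb : A ≤ b := le_max_left _ _
    by_cases h1 : i < A
    · rw [rst_apply_mem (E := Set.Iio A) h1, rst_apply_not_mem (E := Set.Icc A b),
        rst_apply_not_mem (E := Set.Ioi b)]
      · ring
      · simp only [Set.mem_Ioi]; omega
      · simp only [Set.mem_Icc]; omega
    · by_cases h2 : i ≤ b
      · rw [rst_apply_not_mem (E := Set.Iio A), rst_apply_mem (E := Set.Icc A b),
          rst_apply_not_mem (E := Set.Ioi b)]
        · ring
        · simp only [Set.mem_Ioi]; omega
        · simp only [Set.mem_Icc]; omega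
        · simp only [Set.mem_Iio]; omega
      · rw [rst_apply_not_mem (E := Set.Iio A), rst_apply_not_mem (E := Set.Icc A b),
          rst_apply_mem (E := Set.Ioi b)]
        · ring
        · simp only [Set.mem_Ioi]; omega
        · simp only [Set.mem_Icc]; omega
        · simp only [Set.mem_Iio]; omega
  have h1 : |g (rst (Set.Iio A) x)| ≤ δ / 3 * iwNorm P x := by
    have e : rst (Set.Iio A) x = ∑ i ∈ Finset.range A, x i • Finsupp.single i 1 := by
      ext k
      rw [Finsupp.finsetSum_apply]
      by_cases hk : k < A
      · rw [rst_apply_mem (E := Set.Iio A) hk, Finset.sum_eq_single k]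
        · simp
        · intro i _ hi; simp [hi]
        · intro h; exact absurd (Finset.mem_range.2 hk) h
      · rw [rst_apply_not_mem (E := Set.Iio A) hk, Finset.sum_eq_zero]
        intro i hi
        have : i ≠ k := by rw [Finset.mem_range] at hi; omega
        simp [this]
    rw [e, map_sum]
    refine (Finset.abs_sum_le_sum_abs _ _).trans ?_
    have hA1 : (0 : ℝ) < A + 1 := by positivity
    calc _ ≤ ∑ _i ∈ Finset.range A, iwNorm P x * (δ / (3 * (A + 1))) := by
          apply Finset.sum_le_sum
          intro i hi
          rw [map_smul, smul_eq_mul, abs_mul]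
          exact mul_le_mul (abs_apply_le x _) (hA i (Finset.mem_range.1 hi)) (abs_nonneg _) hx0
      _ = (A / (A + 1)) * (δ / 3 * iwNorm P x) := by
          rw [Finset.sum_const, Finset.card_range, nsmul_eq_mul]
          field_simp
      _ ≤ 1 * (δ / 3 * iwNorm P x) := by
          apply mul_le_mul_of_nonneg_right _ (by positivity)
          rw [div_le_one hA1]; linarith
      _ = _ := one_mul _
  have h2 := hvg x
  have h3 : |g (rst (Set.Ioi b) x)| ≤ δ / 3 * iwNorm P x := by
    refine (hN _ fun i hi => ?_).trans (mul_le_mul_of_nonneg_left (iwNorm_rst_le _ x) (by positivity))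
    have h4 : b < i := (rst_ne_zero hi).1
    exact (le_max_right A N).trans h4.le
  have e : g x - evalPair v x = g (rst (Set.Iio A) x) +
      (g (rst (Set.Icc A b) x) - evalPair v x) + g (rst (Set.Ioi b) x) := by
    conv_lhs => rw [hsplit, map_add, map_add, ← hsplit]
    ring
  rw [e]
  refine (abs_add_le _ _).trans ?_
  have := abs_add_le (g (rst (Set.Iio A) x)) (g (rst (Set.Icc A b) x) - evalPair v x)
  linarith

end IWDual

namespace IWDual
variable {P : IWParams}

/-! ### Sums of elements of the convex hulls -/

/-- Weighted functionals with key `js`, supported in `[a,b]`, all of whose pieces have weight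
larger than `a`. The empty key stands for a single piece. -/
def Rk (P : IWParams) (js : List ℕ) (a b : ℕ) : Set c00 :=
  {r | ∃ (M : Finset ℕ) (g : ℕ → c00) (v : ℕ → ℕ∞), IsOp P js M g v ∧
    (∀ p ∈ M, (a ≤ p ∧ p ≤ b) ∧ (a : ℕ∞) < v p ∧ ∀ i, g p i ≠ 0 → i ≤ b) ∧ r = opF P js M g}

lemma Rk_zero (js : List ℕ) (a b : ℕ) : 0 ∈ Rk P js a b :=
  ⟨∅, 0, 0, ⟨by simp, by simp, by simp, SF_empty _⟩, by simp, by simp [opF]⟩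

lemma Rk_neg {js : List ℕ} {a b : ℕ} {r : c00} (h : r ∈ Rk P js a b) : -r ∈ Rk P js a b := by
  obtain ⟨M, g, v, hop, h1, rfl⟩ := h
  refine ⟨M, fun p => -g p, v, ⟨fun p hp => W0_neg (hop.mem p hp), fun p hp i hi => hop.lo p hp i ?_,
    fun p hp p' hp' hlt i hi => hop.sep p hp p' hp' hlt i ?_, hop.adm⟩,
    fun p hp => ⟨(h1 p hp).1, (h1 p hp).2.1, fun i hi => (h1 p hp).2.2 i ?_⟩, ?_⟩
  · simpa using hi
  · simpa using hi
  · simpa using hi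
  · simp [opF]

lemma Rk_supp {js : List ℕ} {a b : ℕ} {r : c00} (h : r ∈ Rk P js a b) (i : ℕ) (hi : r i ≠ 0) :
    a ≤ i ∧ i ≤ b := by
  obtain ⟨M, g, v, hop, h1, rfl⟩ := h
  rw [opF, Finsupp.smul_apply, smul_eq_mul] at hi
  have hi' := right_ne_zero_of_mul hi
  rw [Finsupp.finsetSum_apply] at hi'
  obtain ⟨p, hp, hpi⟩ := Finset.exists_ne_zero_of_sum_ne_zero hi'
  exact ⟨(h1 p hp).1.1.trans (hop.lo p hp i hpi), (h1 p hp).2.2 i hpi⟩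

lemma Rk_W {js : List ℕ} (hjs : js ≠ []) {a b : ℕ} {r : c00} (h : r ∈ Rk P js a b) :
    WIW P r (wgt P js : ℕ) := by
  obtain ⟨M, g, v, hop, h1, rfl⟩ := h
  exact mkOp hjs hop

lemma Rk_mem {js : List ℕ} {a b : ℕ} {r : c00} (h : r ∈ Rk P js a b) : memWIW P r := by
  rcases eq_or_ne js [] with rfl | hjs
  · obtain ⟨M, g, v, hop, h1, rfl⟩ := h
    have hc : M.card ≤ 1 := hop.adm
    rcases Finset.card_le_one_iff_subset_singleton.1 hc with ⟨p, hp⟩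
    rcases Finset.subset_singleton_iff.1 hp with rfl | rfl
    · rw [opF, Finset.sum_empty, smul_zero]; exact ⟨_, W_zero 0⟩
    · rw [opF, Finset.sum_singleton, wgt_nil, Nat.cast_one, inv_one, one_smul]
      exact (hop.mem p (Finset.mem_singleton_self p)).mem
  · exact ⟨_, Rk_W hjs h⟩

lemma K_zero (a b : ℕ) : (0 : c00) ∈ K P a b :=
  subset_convexHull ℝ _ ⟨⟨_, W_zero 0⟩, fun _ hi => absurd rfl hi⟩

lemma mem_K {f : c00} (hf : memWIW P f) {a b : ℕ} (h : ∀ i, f i ≠ 0 → a ≤ i ∧ i ≤ b) :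
    f ∈ K P a b := subset_convexHull ℝ _ ⟨hf, h⟩

/-- One step of the decomposition of `f`: half of an element of the convex hull is split off, and the
rest is dominated by a convex combination, with coefficients `μ` not depending on the test vector,
of elements of the sets `Rk P js a b`. -/
def Dec (P : IWParams) (a b : ℕ) (f : c00) : Prop :=
  ∃ (μ : List ℕ →₀ ℝ) (g : c00), (∀ js, 0 ≤ μ js) ∧ (μ.sum fun _ t => t) ≤ 1 ∧ g ∈ K P a b ∧
    ∀ x, ∃ r : List ℕ → c00, (∀ js, r js ∈ Rk P js a b) ∧ (∀ js, 0 ≤ evalPair (r js) x) ∧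
      |evalPair f x - 1 / 2 * evalPair g x| ≤ μ.sum fun js t => t * evalPair (r js) x

lemma Dec_of_single {a b : ℕ} {f g ρ : c00} {js : List ℕ} (hg : g ∈ K P a b)
    (hρ : ρ ∈ Rk P js a b) (hf : f = (1 / 2 : ℝ) • g + ρ) : Dec P a b f := by
  classical
  refine ⟨Finsupp.single js 1, g, fun js' => ?_, ?_, hg, fun x => ?_⟩
  · rw [Finsupp.single_apply]; split_ifs <;> norm_num
  · rw [Finsupp.sum_single_index rfl]
  · have he : evalPair f x - 1 / 2 * evalPair g x = evalPair ρ x := by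
      rw [hf, ev_add_left, ev_smul_left]; ring
    have key : ∀ ρ' ∈ Rk P js a b, |evalPair ρ x| = evalPair ρ' x →
      ∃ r : List ℕ → c00, (∀ js, r js ∈ Rk P js a b) ∧ (∀ js, 0 ≤ evalPair (r js) x) ∧
      |evalPair f x - 1 / 2 * evalPair g x| ≤
        (Finsupp.single js (1 : ℝ)).sum fun js t => t * evalPair (r js) x := by
      intro ρ' hρ' hab
      refine ⟨fun js' => if js' = js then ρ' else 0, fun js' => ?_, fun js' => ?_, ?_⟩
      · show (if js' = js then ρ' else 0) ∈ Rk P js' a b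
        split_ifs with h
        · rw [h]; exact hρ'
        · exact Rk_zero _ _ _
      · show 0 ≤ evalPair (if js' = js then ρ' else 0) x
        split_ifs with h
        · rw [← hab]; exact abs_nonneg _
        · rw [ev_zero_left]
      · rw [Finsupp.sum_single_index (by simp)]
        show _ ≤ 1 * evalPair (if js = js then ρ' else 0) x
        rw [if_pos rfl, one_mul, he, hab]
    rcases abs_cases (evalPair ρ x) with ⟨h, -⟩ | ⟨h, -⟩
    · exact key ρ hρ h
    · exact key (-ρ) (Rk_neg hρ) (by rw [h, ev_neg_left])

/-- The first piece of `f` acting on `[a, b]` is divided by a weight at least `2` and gives the element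
of the convex hull; the later pieces have weight larger than `a` because `f` is built on a very fast
growing sequence. -/
lemma Dec_W {a b : ℕ} {f : c00} (hf : memWIW P f) (hs : ∀ i, f i ≠ 0 → a ≤ i ∧ i ≤ b) :
    Dec P a b f := by
  classical
  obtain ⟨w, hf⟩ := hf
  rcases W_cases hf with ⟨rfl, i, s, hs', rfl⟩ | ⟨js, M, g, v, hjs, hop, h2, rfl, rfl⟩
  · have hi : a ≤ i ∧ i ≤ b := hs i (by rcases hs' with rfl | rfl <;> simp)
    refine Dec_of_single (js := []) (ρ := Finsupp.single i s) (K_zero a b)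
      ⟨{i}, fun _ => Finsupp.single i s, fun _ => ⊤, ⟨fun p _ => Or.inr hf, ?_, ?_, ?_⟩, ?_, ?_⟩
      (by simp)
    · intro p hp k hk
      have : i = k := by
        by_contra h; exact hk (by simp [h])
      rw [Finset.mem_singleton] at hp; omega
    · intro p hp p' hp' hlt
      rw [Finset.mem_singleton] at hp hp'; omega
    · show Finset.card _ ≤ 1
      simp
    · intro p hp
      rw [Finset.mem_singleton] at hp
      subst hp
      refine ⟨hi, ENat.natCast_lt_top _, fun k hk => ?_⟩
      have : p = k := by
        by_contra h; exact hk (by simp [h])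
      omega
    · simp [opF]
  · rcases first_piece hop a with h0 | ⟨q, hq, ⟨i0, hi0, hqi0⟩, hq1, hq2⟩
    · have : opF P js M g = 0 := by
        ext i
        rw [Finsupp.zero_apply]
        by_contra hc
        have := hs i hc
        apply hc
        rw [opF, Finsupp.smul_apply, Finsupp.finsetSum_apply, Finset.sum_eq_zero, smul_zero]
        exact fun q hq => h0 q hq i this.1
      rw [this]
      exact Dec_of_single (js := []) (K_zero a b) (Rk_zero _ a b) (by simp)
    · set E := Set.Icc a b with hE
      set M' := M.filter (fun p => q < p ∧ p ≤ b) with hM'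
      have hM'M : M' ⊆ M := Finset.filter_subset _ _
      have hW0 : ∀ p ∈ M, W0 P (rst E (g p)) (v p) := fun p hp => W0_rst E (hop.mem p hp)
      have hw2 : (2 : ℝ) ≤ wgt P js := by exact_mod_cast wgt_ge_two hjs
      have hwp := wgt_pos' P js
      have hgK : (2 * (wgt P js : ℝ)⁻¹) • rst E (g q) ∈ K P a b := by
        have h1 : rst E (g q) ∈ K P a b := mem_K (hW0 q hq).mem fun i hi => (rst_ne_zero hi).1
        have := (convex_convexHull ℝ {f | memWIW P f ∧ ∀ i, f i ≠ 0 → a ≤ i ∧ i ≤ b}) h1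
          (K_zero (P := P) a b) (a := 2 * (wgt P js : ℝ)⁻¹) (b := 1 - 2 * (wgt P js : ℝ)⁻¹)
          (by positivity) (by
            rw [sub_nonneg, ← div_eq_mul_inv, div_le_one hwp]; exact hw2) (by ring)
        rwa [smul_zero, add_zero] at this
      refine Dec_of_single (js := js) (ρ := opF P js M' (fun p => rst E (g p))) hgK
        ⟨M', fun p => rst E (g p), v, ⟨?_, ?_, ?_, ?_⟩, ?_, rfl⟩ ?_
      · exact fun p hp => hW0 p (hM'M hp)
      · exact fun p hp i hi => hop.lo p (hM'M hp) i (rst_ne_zero hi).2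
      · exact fun p hp p' hp' hlt i hi => hop.sep p (hM'M hp) p' (hM'M hp') hlt i (rst_ne_zero hi).2
      · exact SF_subset hM'M hop.adm
      · intro p hp
        have hp' := (Finset.mem_filter.1 hp)
        have := (hop.sep q hq p hp'.1 hp'.2.1 i0 hqi0).1
        exact ⟨⟨by omega, hp'.2.2⟩, hq2 p hp'.1 hp'.2.1, fun i hi => (rst_ne_zero hi).1.2⟩
      · have h1 : opF P js M g = (wgt P js : ℝ)⁻¹ • ∑ p ∈ M, rst E (g p) := by
          rw [← map_sum, ← map_smul]
          exact (rst_eq_self hs).symm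
        have h3 : ∑ p ∈ M, rst E (g p) = rst E (g q) + ∑ p ∈ M', rst E (g p) := by
          rw [← Finset.add_sum_erase M _ hq]
          congr 1
          symm
          apply Finset.sum_subset
          · intro p hp
            have hp' := (Finset.mem_filter.1 hp)
            exact Finset.mem_erase.2 ⟨by omega, hp'.1⟩
          · intro p hp hpM'
            rw [Finset.mem_erase] at hp
            ext i
            rw [Finsupp.zero_apply]
            by_contra hc
            have hc' := rst_ne_zero hc
            have hlo := hop.lo p hp.2 i hc'.2
            have hib : i ≤ b := hc'.1.2
            apply hpM'
            refine Finset.mem_filter.2 ⟨hp.2, ?_, by omega⟩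
            by_contra hlt
            exact hc'.2 (hq1 p hp.2 (by omega) i hc'.1.1)
        rw [h1, h3, smul_add, opF, smul_smul]
        congr 2
        ring

lemma Dec_K {a b : ℕ} {f : c00} (hf : f ∈ K P a b) : Dec P a b f := by
  have hc : Convex ℝ {f : c00 | Dec P a b f} := by
    rintro f ⟨μ, g, hμ0, hμ1, hg, hr⟩ f' ⟨μ', g', hμ0', hμ1', hg', hr'⟩ s t hs ht hst
    refine ⟨s • μ + t • μ', s • g + t • g', fun js => ?_, ?_, ?_, fun x => ?_⟩
    · have := hμ0 js
      have := hμ0' js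
      simp only [Finsupp.add_apply, Finsupp.smul_apply, smul_eq_mul]
      positivity
    · rw [Finsupp.sum_add_index' (fun _ => rfl) (fun _ _ _ => rfl),
        Finsupp.sum_smul_index (fun _ => rfl), Finsupp.sum_smul_index (fun _ => rfl),
        ← Finsupp.mul_sum, ← Finsupp.mul_sum]
      nlinarith
    · exact convex_convexHull ℝ _ hg hg' hs ht hst
    · obtain ⟨r, h1, h2, h3⟩ := hr x
      obtain ⟨r', h1', h2', h3'⟩ := hr' x
      classical
      have hmax : ∀ js, ∃ r'' ∈ Rk P js a b, evalPair (r js) x ≤ evalPair r'' x ∧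
          evalPair (r' js) x ≤ evalPair r'' x := by
        intro js
        rcases le_total (evalPair (r js) x) (evalPair (r' js) x) with h | h
        · exact ⟨r' js, h1' js, h, le_rfl⟩
        · exact ⟨r js, h1 js, le_rfl, h⟩
      choose r'' hr1 hr2 hr3 using hmax
      refine ⟨r'', hr1, fun js => (h2 js).trans (hr2 js), ?_⟩
      rw [Finsupp.sum_add_index' (fun _ => zero_mul _) (fun _ _ _ => add_mul _ _ _),
        Finsupp.sum_smul_index (fun _ => zero_mul _), Finsupp.sum_smul_index (fun _ => zero_mul _)]
      simp only [mul_assoc]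
      rw [← Finsupp.mul_sum, ← Finsupp.mul_sum]
      have e : evalPair (s • f + t • f') x - 1 / 2 * evalPair (s • g + t • g') x =
        s * (evalPair f x - 1 / 2 * evalPair g x) + t * (evalPair f' x - 1 / 2 * evalPair g' x) := by
        simp only [ev_add_left, ev_smul_left]; ring
      rw [e]
      refine (abs_add_le _ _).trans ?_
      rw [abs_mul, abs_mul, abs_of_nonneg hs, abs_of_nonneg ht]
      gcongr
      · refine h3.trans (Finset.sum_le_sum fun js _ => ?_)
        exact mul_le_mul_of_nonneg_left (hr2 js) (hμ0 js)
      · refine h3'.trans (Finset.sum_le_sum fun js _ => ?_)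
        exact mul_le_mul_of_nonneg_left (hr3 js) (hμ0' js)
  exact convexHull_min (fun f hf => Dec_W hf.1 hf.2) hc hf

/-- The iterated decomposition. -/
lemma Dec_iter {a b : ℕ} {f : c00} (hf : f ∈ K P a b) :
    ∃ μ : ℕ → List ℕ →₀ ℝ, (∀ s js, 0 ≤ μ s js) ∧ (∀ s, ((μ s).sum fun _ t => t) ≤ 1) ∧
      ∀ x, ∃ r : ℕ → List ℕ → c00, (∀ s js, r s js ∈ Rk P js a b) ∧
        (∀ s js, 0 ≤ evalPair (r s js) x) ∧
        ∀ S, |evalPair f x| ≤ (∑ s ∈ Finset.range S, (1 / 2 : ℝ) ^ s *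
          (μ s).sum fun js t => t * evalPair (r s js) x) + (1 / 2 : ℝ) ^ S * iwNorm P x := by
  have h0 : ∀ f : K P a b, Dec P a b f := fun f => Dec_K f.2
  choose μ g hμ0 hμ1 hg hr using h0
  let F : ℕ → K P a b := fun s => Nat.rec ⟨f, hf⟩ (fun _ u => ⟨g u, hg u⟩) s
  have hF : ∀ s, ((F (s + 1) : K P a b) : c00) = g (F s) := fun s => rfl
  refine ⟨fun s => μ (F s), fun s => hμ0 _, fun s => hμ1 _, fun x => ?_⟩
  choose r h1 h2 h3 using fun s => hr (F s) x
  refine ⟨r, h1, h2, fun S => ?_⟩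
  have key : ∀ S, |evalPair f x| ≤ (∑ s ∈ Finset.range S, (1 / 2 : ℝ) ^ s *
          (μ (F s)).sum fun js t => t * evalPair (r s js) x) +
          (1 / 2 : ℝ) ^ S * |evalPair (F S).1 x| := by
    intro S
    induction S with
    | zero => simp [F]
    | succ S ih =>
      refine ih.trans ?_
      rw [Finset.sum_range_succ, add_assoc]
      gcongr
      have h4 := h3 S
      rw [pow_succ, mul_assoc, ← mul_add]
      gcongr
      rw [hF]
      have h5 : |evalPair (F S).1 x| ≤ |evalPair (F S).1 x - 1 / 2 * evalPair (g (F S)) x| +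
        |1 / 2 * evalPair (g (F S)) x| := by
        have := abs_add_le (evalPair (F S).1 x - 1 / 2 * evalPair (g (F S)) x)
          (1 / 2 * evalPair (g (F S)) x)
        rwa [sub_add_cancel] at this
      rw [abs_mul, abs_of_pos (by norm_num : (0 : ℝ) < 1 / 2)] at h5
      linarith
  refine (key S).trans ?_
  gcongr
  exact K_abs_le (F S).2 x

/-- Summation of one level of the decomposition. The coefficients `μ k` are compared on the finite
sets `A k` with a limit `μ'`, so that the sum over `A k` is an average of sums with a fixed key (`H1`);
off `A k` the mass is at most `1 - tot` up to an error, and one maximal key `ψ k` per `k` is used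
(`H2`). -/
lemma level_sum {ι : Type*} [DecidableEq ι] [Nonempty ι] (F : Finset ℕ) (A : ℕ → Finset ι) (μ : ℕ → ι →₀ ℝ)
    (μ' : ι → ℝ) (tot m : ℝ) (ε : ℕ → ℝ) (E : ℕ → ι → ℝ)
    (h0 : ∀ k i, 0 ≤ μ k i) (h1 : ∀ k, ((μ k).sum fun _ t => t) ≤ 1) (h0' : ∀ i, 0 ≤ μ' i)
    (htot : ∀ B : Finset ι, ∑ i ∈ B, μ' i ≤ tot) (htot1 : tot ≤ 1) (hm : 0 ≤ m) (hε : ∀ k, 0 ≤ ε k)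
    (hA : ∀ k ∈ F, tot - ε k ≤ ∑ i ∈ A k, μ' i)
    (hclose : ∀ k ∈ F, ∀ i ∈ A k, |μ k i - μ' i| ≤ ε k / ((A k).card + 1))
    (hE0 : ∀ k i, 0 ≤ E k i) (hE1 : ∀ k i, E k i ≤ 1)
    (H1 : ∀ i, ∀ F' ⊆ F, ∑ k ∈ F', E k i ≤ m)
    (H2 : ∀ (ψ : ℕ → ι), ∀ F' ⊆ F, (∀ k ∈ F', ψ k ∉ A k) → ∑ k ∈ F', E k (ψ k) ≤ m) :
    ∑ k ∈ F, ((μ k).sum fun i t => t * E k i) ≤ m + 3 * ∑ k ∈ F, ε k := by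
  set D : ℕ → Finset ι := fun k => (μ k).support \ A k with hD
  have hψ : ∀ k, ∃ i, (D k).Nonempty → i ∈ D k ∧ ∀ i' ∈ D k, E k i' ≤ E k i := by
    intro k
    by_cases hk : (D k).Nonempty
    · obtain ⟨i, hi, hmax⟩ := Finset.exists_max_image (D k) (E k) hk
      exact ⟨i, fun _ => ⟨hi, hmax⟩⟩
    · exact ⟨Classical.arbitrary ι, fun h => absurd h hk⟩
  choose ψ hψ using hψ
  classical
  set F' := F.filter (fun k => (D k).Nonempty) with hF'
  have htot0 : 0 ≤ tot := by simpa using htot ∅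
  have haux : ∀ k ∈ F, ∑ i ∈ A k, ε k / ((A k).card + 1 : ℝ) ≤ ε k := by
    intro k _
    have hc : (0 : ℝ) < (A k).card + 1 := by positivity
    rw [Finset.sum_const, nsmul_eq_mul, mul_div_assoc', div_le_iff₀ hc]
    have := hε k
    nlinarith
  have hk : ∀ k ∈ F, ((μ k).sum fun i t => t * E k i) ≤
      (∑ i ∈ A k, μ' i * E k i) + (if (D k).Nonempty then (1 - tot) * E k (ψ k) else 0) +
        3 * ε k := by
    intro k hkF
    have e : ((μ k).sum fun i t => t * E k i) = ∑ i ∈ (μ k).support ∩ A k, μ k i * E k i +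
        ∑ i ∈ D k, μ k i * E k i := by
      rw [Finsupp.sum, ← Finset.sum_inter_add_sum_sdiff (μ k).support (A k)]
    have hlow : ∑ i ∈ (μ k).support ∩ A k, μ k i * E k i ≤ ∑ i ∈ A k, μ' i * E k i + ε k := by
      calc _ ≤ ∑ i ∈ A k, μ k i * E k i :=
            Finset.sum_le_sum_of_subset_of_nonneg Finset.inter_subset_right
              fun i _ _ => mul_nonneg (h0 k i) (hE0 k i)
        _ ≤ ∑ i ∈ A k, (μ' i * E k i + ε k / ((A k).card + 1)) := by
            apply Finset.sum_le_sum
            intro i hi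
            have h2 := (abs_le.1 (hclose k hkF i hi)).2
            have h3 := hE0 k i
            have h4 := hE1 k i
            have h5 : 0 ≤ ε k / ((A k).card + 1 : ℝ) := div_nonneg (hε k) (by positivity)
            nlinarith
        _ ≤ _ := by
            rw [Finset.sum_add_distrib]
            have := haux k hkF
            linarith
    have hmass : ∑ i ∈ D k, μ k i ≤ 1 - tot + 2 * ε k := by
      have e2 : ((μ k).sum fun _ t => t) = ∑ i ∈ (μ k).support ∩ A k, μ k i + ∑ i ∈ D k, μ k i := by
        rw [Finsupp.sum, ← Finset.sum_inter_add_sum_sdiff (μ k).support (A k)]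
      have e3 : ∑ i ∈ (μ k).support ∩ A k, μ k i = ∑ i ∈ A k, μ k i := by
        apply Finset.sum_subset Finset.inter_subset_right
        intro i hi hni
        by_contra hc
        exact hni (Finset.mem_inter.2 ⟨Finsupp.mem_support_iff.2 hc, hi⟩)
      have h2 : ∑ i ∈ A k, μ' i - ε k ≤ ∑ i ∈ A k, μ k i := by
        have : ∑ i ∈ A k, μ' i ≤ ∑ i ∈ A k, (μ k i + ε k / ((A k).card + 1)) :=
          Finset.sum_le_sum fun i hi => by linarith [(abs_le.1 (hclose k hkF i hi)).1]
        rw [Finset.sum_add_distrib] at this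
        have := haux k hkF
        linarith
      have := h1 k
      have := hA k hkF
      linarith
    have hhigh : ∑ i ∈ D k, μ k i * E k i ≤
        (if (D k).Nonempty then (1 - tot) * E k (ψ k) else 0) + 2 * ε k := by
      split_ifs with hne
      · obtain ⟨hi, hmax⟩ := hψ k hne
        calc _ ≤ ∑ i ∈ D k, μ k i * E k (ψ k) :=
              Finset.sum_le_sum fun i hi => mul_le_mul_of_nonneg_left (hmax i hi) (h0 k i)
          _ = (∑ i ∈ D k, μ k i) * E k (ψ k) := by rw [Finset.sum_mul]
          _ ≤ (1 - tot + 2 * ε k) * E k (ψ k) := mul_le_mul_of_nonneg_right hmass (hE0 _ _)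
          _ ≤ _ := by
            have := hE1 k (ψ k)
            have := hε k
            nlinarith
      · rw [Finset.not_nonempty_iff_eq_empty.1 hne, Finset.sum_empty]
        have := hε k
        linarith
    linarith
  refine (Finset.sum_le_sum hk).trans ?_
  rw [Finset.sum_add_distrib, Finset.sum_add_distrib, ← Finset.mul_sum, ← Finset.sum_filter,
    ← Finset.mul_sum]
  have hhi : (1 - tot) * ∑ k ∈ F', E k (ψ k) ≤ (1 - tot) * m := by
    apply mul_le_mul_of_nonneg_left _ (by linarith)
    apply H2 ψ F' (Finset.filter_subset _ _)
    intro k hk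
    exact (Finset.mem_sdiff.1 (hψ k (Finset.mem_filter.1 hk).2).1).2
  have hlo : ∑ k ∈ F, ∑ i ∈ A k, μ' i * E k i ≤ tot * m := by
    calc ∑ k ∈ F, ∑ i ∈ A k, μ' i * E k i
        = ∑ i ∈ F.biUnion A, ∑ k ∈ F.filter (fun k => i ∈ A k), μ' i * E k i := by
          apply Finset.sum_comm'
          intro k i
          simp only [Finset.mem_biUnion, Finset.mem_filter]
          constructor
          · rintro ⟨h, h'⟩; exact ⟨⟨h, h'⟩, k, h, h'⟩
          · rintro ⟨⟨h, h'⟩, -⟩; exact ⟨h, h'⟩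
      _ ≤ ∑ i ∈ F.biUnion A, μ' i * m := by
          apply Finset.sum_le_sum
          intro i _
          rw [← Finset.mul_sum]
          exact mul_le_mul_of_nonneg_left (H1 i _ (Finset.filter_subset _ _)) (h0' i)
      _ ≤ tot * m := by
          rw [← Finset.sum_mul]
          exact mul_le_mul_of_nonneg_right (htot _) hm
  linarith

end IWDual

namespace IWDual
variable {P : IWParams}

/-- Functionals with the same key `js` on successive intervals whose left endpoints are
`S_{n_j}`-admissible: their sum is `m_j` times an element with key `j :: js`. -/
lemma same_key {F : Finset ℕ} {a b : ℕ → ℕ} (hsep : ∀ k k', k < k' → b k < a k')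
    {j : ℕ} (hF : SF (P.n j) (F.image a)) {js : List ℕ} {r : ℕ → c00}
    (hr : ∀ k, r k ∈ Rk P js (a k) (b k)) (x : c00) :
    ∑ k ∈ F, evalPair (r k) x ≤ P.m j * iwNorm P x := by
  classical
  choose M g v hop h1 h2 using hr
  have huniq : ∀ k k' p, p ∈ M k → p ∈ M k' → k = k' := by
    intro k k' p hp hp'
    have := (h1 k p hp).1
    have := (h1 k' p hp').1
    rcases lt_trichotomy k k' with h | h | h
    · have := hsep k k' h; omega
    · exact h
    · have := hsep k' k h; omega
  have hκ : ∀ p, ∃ k, p ∈ F.biUnion M → k ∈ F ∧ p ∈ M k := by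
    intro p
    by_cases hp : p ∈ F.biUnion M
    · obtain ⟨k, hk, hpk⟩ := Finset.mem_biUnion.1 hp
      exact ⟨k, fun _ => ⟨hk, hpk⟩⟩
    · exact ⟨0, fun h => absurd h hp⟩
  choose κ hκ using hκ
  have hmono : ∀ p ∈ F.biUnion M, ∀ p' ∈ F.biUnion M, p ≤ p' → κ p ≤ κ p' := by
    intro p hp p' hp' hle
    by_contra hlt
    have h3 := hsep _ _ (not_le.1 hlt)
    have := (h1 _ p (hκ p hp).2).1
    have := (h1 _ p' (hκ p' hp').2).1
    omega
  have hamono : ∀ k k', k ≤ k' → k ∈ F → (∃ p, p ∈ M k) → a k ≤ a k' := by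
    rintro k k' hle - ⟨p, hp⟩
    rcases hle.eq_or_lt with rfl | h
    · exact le_rfl
    · have := hsep k k' h
      have := (h1 k p hp).1
      omega
  have hIs : IsOp P (j :: js) (F.biUnion M) (fun p => g (κ p) p) (fun p => v (κ p) p) := by
    refine ⟨fun p hp => (hop _).mem p (hκ p hp).2, fun p hp => (hop _).lo p (hκ p hp).2, ?_, ?_⟩
    · intro p hp p' hp' hlt i hi
      rcases (hmono p hp p' hp' hlt.le).eq_or_lt with h | h
      · have h3 := (hκ p' hp').2
        rw [← h] at h3 ⊢
        exact (hop _).sep p (hκ p hp).2 p' h3 hlt i hi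
      · have h3 := (h1 _ p (hκ p hp).2).2.2 i hi
        have h4 := hsep _ _ h
        obtain ⟨h5, h6, -⟩ := h1 _ p' (hκ p' hp').2
        refine ⟨by omega, lt_of_lt_of_le ?_ h6.le⟩
        exact_mod_cast (by omega : i < a (κ p'))
    · rw [ord_cons, add_comm]
      refine SF_comp (F := F.image a) (fun p => a (κ p)) ?_ ?_ ?_ hF ?_
      · exact fun p hp => Finset.mem_image_of_mem a (hκ p hp).1
      · exact fun p hp p' hp' hle => hamono _ _ (hmono p hp p' hp' hle) (hκ p hp).1 ⟨p, (hκ p hp).2⟩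
      · exact fun p hp => (h1 _ p (hκ p hp).2).1.1
      · intro q hq
        by_cases hne : ((F.biUnion M).filter (fun i => a (κ i) = q)).Nonempty
        · obtain ⟨p0, hp0⟩ := hne
          rw [Finset.mem_filter] at hp0
          refine SF_subset ?_ (hop (κ p0)).adm
          intro p hp
          rw [Finset.mem_filter] at hp
          have h3 := (hκ p hp.1).2
          have h4 := (hκ p0 hp0.1).2
          have : κ p = κ p0 := by
            rcases lt_trichotomy (κ p) (κ p0) with h | h | h
            · have := hsep _ _ h
              have := (h1 _ p h3).1
              omega
            · exact h
            · have := hsep _ _ h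
              have := (h1 _ p0 h4).1
              omega
          rwa [this] at h3
        · rw [Finset.not_nonempty_iff_eq_empty.1 hne]
          exact SF_empty _
  have h3 := ev_le ⟨_, mkOp (List.cons_ne_nil j js) hIs⟩ x
  have hm := m_pos P j
  have e : ∑ k ∈ F, evalPair (r k) x = P.m j * evalPair (opF P (j :: js) (F.biUnion M)
      (fun p => g (κ p) p)) x := by
    rw [opF, ev_smul_left, ev_sum_left, Finset.sum_biUnion, wgt_cons]
    · rw [Nat.cast_mul, mul_inv, ← mul_assoc, ← mul_assoc, mul_inv_cancel₀ hm.ne', one_mul,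
        Finset.mul_sum]
      apply Finset.sum_congr rfl
      intro k hk
      rw [h2 k, opF, ev_smul_left, ev_sum_left]
      congr 1
      apply Finset.sum_congr rfl
      intro p hp
      have : κ p = k :=
        huniq _ _ p (hκ p (Finset.mem_biUnion.2 ⟨k, hk, hp⟩)).2 hp
      rw [this]
    · intro k _ k' _ hne
      rw [Function.onFun, Finset.disjoint_left]
      exact fun p hp hp' => hne (huniq _ _ p hp hp')
  rw [e]
  exact mul_le_mul_of_nonneg_left h3 hm.le

/-- Very fast growing functionals with `S_{n_j}`-admissible left endpoints. -/
lemma op_of_seq {F : Finset ℕ} {a b : ℕ → ℕ} (hab : ∀ k ∈ F, a k ≤ b k)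
    (hsep : ∀ k ∈ F, ∀ k' ∈ F, k < k' → b k < a k')
    {j : ℕ} (hF : SF (P.n j) (F.image a)) {r : ℕ → c00} {w : ℕ → ℕ∞}
    (hr : ∀ k ∈ F, W0 P (r k) (w k)) (hs : ∀ k ∈ F, ∀ i, r k i ≠ 0 → a k ≤ i ∧ i ≤ b k)
    (hw : ∀ k ∈ F, ∀ k' ∈ F, k < k' → (b k : ℕ∞) < w k') :
    memWIW P ((P.m j : ℝ)⁻¹ • ∑ k ∈ F, r k) := by
  classical
  have hinj : ∀ k ∈ F, ∀ k' ∈ F, k < k' → a k < a k' := fun k hk k' hk' h =>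
    (hab k hk).trans_lt (hsep k hk k' hk' h)
  have hκ : ∀ p, ∃ k, p ∈ F.image a → k ∈ F ∧ a k = p := by
    intro p
    by_cases hp : p ∈ F.image a
    · obtain ⟨k, hk, hpk⟩ := Finset.mem_image.1 hp
      exact ⟨k, fun _ => ⟨hk, hpk⟩⟩
    · exact ⟨0, fun h => absurd h hp⟩
  choose κ hκ using hκ
  have hIs : IsOp P [j] (F.image a) (fun p => r (κ p)) (fun p => w (κ p)) := by
    refine ⟨fun p hp => hr _ (hκ p hp).1, fun p hp i hi => ?_, fun p hp p' hp' hlt i hi => ?_, ?_⟩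
    · have := (hs _ (hκ p hp).1 i hi).1
      rwa [(hκ p hp).2] at this
    · have h1 := hκ p hp
      have h2 := hκ p' hp'
      have hk : κ p < κ p' := by
        rcases lt_trichotomy (κ p) (κ p') with h | h | h
        · exact h
        · rw [h] at h1; omega
        · have := hinj _ h2.1 _ h1.1 h; omega
      have h3 := (hs _ h1.1 i hi).2
      have h4 := hsep _ h1.1 _ h2.1 hk
      refine ⟨by omega, lt_of_le_of_lt ?_ (hw _ h1.1 _ h2.1 hk)⟩
      exact_mod_cast h3
    · rw [ord_cons, ord_nil, add_zero]; exact hF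
  have h1 := mkOp (List.cons_ne_nil j []) hIs
  have e : opF P [j] (F.image a) (fun p => r (κ p)) = (P.m j : ℝ)⁻¹ • ∑ k ∈ F, r k := by
    rw [opF, wgt_cons, wgt_nil, mul_one, Finset.sum_image]
    · congr 1
      apply Finset.sum_congr rfl
      intro k hk
      have h2 := hκ (a k) (Finset.mem_image_of_mem a hk)
      congr 1
      rcases lt_trichotomy (κ (a k)) k with h | h | h
      · have := hinj _ h2.1 _ hk h; omega
      · exact h
      · have := hinj _ hk _ h2.1 h; omega
    · intro k hk k' hk' he
      rcases lt_trichotomy k k' with h | h | h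
      · have := hinj _ hk _ hk' h; omega
      · exact h
      · have := hinj _ hk' _ hk h; omega
  rw [e] at h1
  exact ⟨_, h1⟩

lemma finite_wgt_le (B : ℕ) : {js : List ℕ | wgt P js ≤ B}.Finite := by
  induction B using Nat.strong_induction_on with
  | _ B ih =>
    rcases Nat.eq_zero_or_pos B with rfl | hB
    · convert Set.finite_empty
      ext js
      have := wgt_pos P js
      simp only [Set.mem_ofPred_eq, Set.mem_empty_iff_false, iff_false]
      omega
    · refine ((Set.finite_singleton []).union (Set.Finite.biUnion (Set.finite_Iic B)
        (fun j _ => (ih (B / 2) (by omega)).image (List.cons j)))).subset ?_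
      intro js hjs
      rcases js with _ | ⟨j, js⟩
      · exact Or.inl rfl
      · right
        have h1 : P.m j * wgt P js ≤ B := by
          have : wgt P (j :: js) ≤ B := hjs
          rwa [wgt_cons] at this
        have h2 := m_ge_two P j
        have h3 := wgt_pos P js
        have h4 : j ≤ P.m j := P.m_mono.le_apply
        rw [Set.mem_iUnion₂]
        refine ⟨j, ?_, js, ?_, rfl⟩
        · show j ≤ B
          nlinarith
        · show wgt P js ≤ B / 2
          rw [Nat.le_div_iff_mul_le (by norm_num)]
          nlinarith

/-- Diagonal choice of a subsequence, each term depending on the previous one. -/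
lemma diag_seq {l : Filter ℕ} [NeBot l] (hl : l ≤ atTop) {Q : ℕ → ℕ → ℕ → Prop}
    (h : ∀ k n, ∀ᶠ m in l, Q k n m) :
    ∃ φ : ℕ → ℕ, StrictMono φ ∧ Q 0 0 (φ 0) ∧ ∀ k, Q (k + 1) (φ k) (φ (k + 1)) := by
  have h1 : ∀ k n, ∃ m, n < m ∧ Q k n m := fun k n =>
    (((eventually_gt_atTop n).filter_mono hl).and (h k n)).exists
  choose ψ hψ1 hψ2 using h1
  let φ : ℕ → ℕ := fun k => Nat.rec (ψ 0 0) (fun k r => ψ (k + 1) r) k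
  have hs : ∀ k, φ (k + 1) = ψ (k + 1) (φ k) := fun k => rfl
  refine ⟨φ, strictMono_nat_of_lt_succ fun k => ?_, hψ2 0 0, fun k => ?_⟩
  · rw [hs]; exact hψ1 _ _
  · rw [hs]; exact hψ2 _ _

lemma geom_sum_le {F : Finset ℕ} {k0 : ℕ} (h : ∀ k ∈ F, k0 ≤ k) :
    ∑ k ∈ F, (1 / 2 : ℝ) ^ k ≤ 2 * (1 / 2) ^ k0 := by
  have key : ∀ N, ∑ k ∈ Finset.range N, (1 / 2 : ℝ) ^ (k0 + k) ≤
      2 * (1 / 2) ^ k0 - 2 * (1 / 2) ^ (k0 + N) := by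
    intro N
    induction N with
    | zero => simp
    | succ N ih =>
      rw [Finset.sum_range_succ]
      have : (1 / 2 : ℝ) ^ (k0 + (N + 1)) = 1 / 2 * (1 / 2) ^ (k0 + N) := by ring
      rw [this]
      linarith
  set N := F.sup id + 1
  have hsub : F ⊆ (Finset.range N).image (fun k => k0 + k) := by
    intro k hk
    have h1 : k ≤ F.sup id := Finset.le_sup (f := id) hk
    have h2 := h k hk
    exact Finset.mem_image.2 ⟨k - k0, Finset.mem_range.2 (by omega), by omega⟩
  calc _ ≤ ∑ k ∈ (Finset.range N).image (fun k => k0 + k), (1 / 2 : ℝ) ^ k :=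
        Finset.sum_le_sum_of_subset_of_nonneg hsub fun _ _ _ => by positivity
    _ = ∑ k ∈ Finset.range N, (1 / 2 : ℝ) ^ (k0 + k) :=
        Finset.sum_image fun _ _ _ _ h => by simpa using h
    _ ≤ _ := key N
    _ ≤ _ := by
      have : (0 : ℝ) < (1 / 2) ^ (k0 + N) := by positivity
      linarith

/-- A block sequence of elements of the convex hulls has a subsequence on which admissible sums
satisfy an upper `c_0`-type estimate. -/
theorem admissible_sum_le {f : ℕ → c00} {a b : ℕ → ℕ} (hf : ∀ k, f k ∈ K P (a k) (b k))
    (hab : ∀ k, a k ≤ b k) (hsep : ∀ k k', k < k' → b k < a k') :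
    ∃ φ : ℕ → ℕ, StrictMono φ ∧ ∀ (j : ℕ) (F : Finset ℕ) (k0 : ℕ) (x : c00),
      (∀ k ∈ F, k0 ≤ k) → SF (P.n j) (F.image (a ∘ φ)) → iwNorm P x ≤ 1 →
      ∑ k ∈ F, |evalPair (f (φ k)) x| ≤ 2 * P.m j + 14 * (1 / 2) ^ k0 := by
  classical
  choose μ hμ0 hμ1 hr using fun k => Dec_iter (hf k)
  have hμ2 : ∀ k s (B : Finset (List ℕ)), ∑ js ∈ B, μ k s js ≤ 1 := by
    intro k s B
    refine le_trans ?_ (hμ1 k s)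
    rw [Finsupp.sum, ← Finset.sum_subset (Finset.inter_subset_right (s₁ := (μ k s).support))]
    · exact Finset.sum_le_sum_of_subset_of_nonneg Finset.inter_subset_left fun js _ _ => hμ0 k s js
    · intro js hjs hn
      by_contra hc
      exact hn (Finset.mem_inter.2 ⟨Finsupp.mem_support_iff.2 hc, hjs⟩)
  have hlim : ∀ s js, ∃ l, 0 ≤ l ∧
      Tendsto (fun k => μ k s js) (hyperfilter ℕ : Filter ℕ) (𝓝 l) := by
    intro s js
    have hmem : ∀ k, μ k s js ∈ Set.Icc (0 : ℝ) 1 := fun k =>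
      ⟨hμ0 k s js, by simpa using hμ2 k s {js}⟩
    obtain ⟨l, hl, hle⟩ := isCompact_Icc.ultrafilter_le_nhds
      ((hyperfilter ℕ).map fun k => μ k s js) (by
        rw [le_principal_iff]
        exact Filter.mem_map.2 (Filter.univ_mem' hmem))
    exact ⟨l, hl.1, hle⟩
  choose μ' hμ'0 hμ' using hlim
  have hμ'2 : ∀ s (B : Finset (List ℕ)), ∑ js ∈ B, μ' s js ≤ 1 := by
    intro s B
    exact le_of_tendsto (tendsto_finsetSum B fun js _ => hμ' s js)
      (Filter.Eventually.of_forall fun k => hμ2 k s B)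
  have htot : ∀ s, ∃ tot : ℝ, tot ≤ 1 ∧ (∀ B : Finset (List ℕ), ∑ js ∈ B, μ' s js ≤ tot) ∧
      ∀ ε > 0, ∃ A : Finset (List ℕ), tot - ε ≤ ∑ js ∈ A, μ' s js := by
    intro s
    have hbdd : BddAbove (Set.range fun B : Finset (List ℕ) => ∑ js ∈ B, μ' s js) :=
      ⟨1, by rintro _ ⟨B, rfl⟩; exact hμ'2 s B⟩
    refine ⟨⨆ B : Finset (List ℕ), ∑ js ∈ B, μ' s js, ciSup_le (hμ'2 s), fun B => le_ciSup hbdd B,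
      fun ε hε => ?_⟩
    obtain ⟨A, hA⟩ := exists_lt_of_lt_ciSup
      (show (⨆ B : Finset (List ℕ), ∑ js ∈ B, μ' s js) - ε < _ by linarith)
    exact ⟨A, hA.le⟩
  choose tot htot1 htotB htotA using htot
  choose A0 hA0 using fun s k : ℕ => htotA s ((1 / 2) ^ k) (by positivity)
  set A : ℕ → ℕ → Finset (List ℕ) := fun k n =>
    ({[]} ∪ (finite_wgt_le (P := P) (b n)).toFinset) ∪ (Finset.range k).biUnion (fun s => A0 s k)
    with hAdef
  obtain ⟨φ, hφ, hQ0, hQ1⟩ := diag_seq (l := (hyperfilter ℕ : Filter ℕ))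
    (Q := fun k n m => ∀ s < k, ∀ js ∈ A k n,
      |μ m s js - μ' s js| ≤ (1 / 2) ^ k / ((A k n).card + 1))
    (by rw [← Nat.cofinite_eq_atTop]; exact hyperfilter_le_cofinite) (by
      intro k n
      have h1 : ∀ s ∈ Finset.range k, ∀ᶠ m in (hyperfilter ℕ : Filter ℕ), ∀ js ∈ A k n,
          |μ m s js - μ' s js| ≤ (1 / 2) ^ k / ((A k n).card + 1) := by
        intro s _
        rw [Finset.eventually_all]
        intro js _
        have h2 := (hμ' s js).sub_const (μ' s js)
        rw [sub_self] at h2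
        have h3 : (0 : ℝ) < (1 / 2) ^ k / ((A k n).card + 1) := by positivity
        have h4 := h2.abs
        rw [abs_zero] at h4
        exact (h4.eventually (gt_mem_nhds h3)).mono fun m hm => hm.le
      rw [← Finset.eventually_all] at h1
      exact h1.mono fun m hm s hs => hm s (Finset.mem_range.2 hs))
  refine ⟨φ, hφ, fun j F k0 x hk0 hF hx => ?_⟩
  -- the finite sets of keys used at stage `k` of the subsequence
  set A' : ℕ → Finset (List ℕ) := fun k => Nat.casesOn k (A 0 0) (fun k => A (k + 1) (φ k)) with hA'
  have hA'close : ∀ k s, s < k → ∀ js ∈ A' k,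
      |μ (φ k) s js - μ' s js| ≤ (1 / 2) ^ k / ((A' k).card + 1) := by
    intro k s hs
    rcases k with _ | k
    · omega
    · exact hQ1 k s hs
  have hA'tot : ∀ k s, s < k → tot s - (1 / 2) ^ k ≤ ∑ js ∈ A' k, μ' s js := by
    intro k s hs
    refine (hA0 s k).trans (Finset.sum_le_sum_of_subset_of_nonneg ?_ fun js _ _ => hμ'0 s js)
    rcases k with _ | k
    · omega
    · intro js hjs
      exact Finset.mem_union_right _ (Finset.mem_biUnion.2 ⟨s, Finset.mem_range.2 hs, hjs⟩)
  have hA'nil : ∀ k, [] ∈ A' k := by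
    intro k
    rcases k with _ | k <;>
    exact Finset.mem_union_left _ (Finset.mem_union_left _ (Finset.mem_singleton_self _))
  have hbmono : ∀ n n', n ≤ n' → b n ≤ b n' := by
    intro n n' h
    rcases h.eq_or_lt with rfl | h
    · exact le_rfl
    · have := hsep n n' h; have := hab n'; omega
  have hA'w : ∀ k k', k < k' → ∀ js, js ∉ A' k' → b (φ k) < wgt P js := by
    intro k k' hlt js hjs
    rcases k' with _ | k'
    · omega
    · by_contra hc
      apply hjs
      refine Finset.mem_union_left _ (Finset.mem_union_right _ ?_)
      rw [Set.Finite.mem_toFinset]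
      show wgt P js ≤ b (φ k')
      exact (not_lt.1 hc).trans (hbmono _ _ (hφ.monotone (by omega)))
  have hsepφ : ∀ k k', k < k' → b (φ k) < a (φ k') := fun k k' h => hsep _ _ (hφ h)
  have hm := m_pos P j
  choose r hr1 hr2 hr3 using fun k => hr (φ k) x
  have hE1 : ∀ s k js, evalPair (r k s js) x ≤ 1 := fun s k js =>
    (ev_le (Rk_mem (hr1 k s js)) x).trans hx
  have level : ∀ s, ∑ k ∈ F.filter (fun k => s < k),
      ((μ (φ k) s).sum fun js t => t * evalPair (r k s js) x) ≤ P.m j + 6 * (1 / 2) ^ k0 := by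
    intro s
    refine (level_sum (F.filter (fun k => s < k)) A' (fun k => μ (φ k) s) (μ' s) (tot s) (P.m j)
      (fun k => (1 / 2) ^ k) (fun k js => evalPair (r k s js) x) (fun k js => hμ0 _ _ _)
      (fun k => hμ1 _ _) (hμ'0 s) (htotB s) (htot1 s) hm.le (fun k => by positivity)
      (fun k hk => hA'tot k s (Finset.mem_filter.1 hk).2)
      (fun k hk => hA'close k s (Finset.mem_filter.1 hk).2) (fun k js => hr2 k s js) (hE1 s)
      ?_ ?_).trans ?_
    · intro js F' hF'
      have h1 : SF (P.n j) (F'.image (a ∘ φ)) :=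
        SF_subset (Finset.image_subset_image (hF'.trans (Finset.filter_subset _ _))) hF
      refine (same_key (a := a ∘ φ) (b := b ∘ φ) hsepφ h1 (fun k => hr1 k s js) x).trans ?_
      nlinarith
    · intro ψ F' hF' hψ
      have h1 : SF (P.n j) (F'.image (a ∘ φ)) :=
        SF_subset (Finset.image_subset_image (hF'.trans (Finset.filter_subset _ _))) hF
      have h2 := ev_le (op_of_seq (P := P) (a := a ∘ φ) (b := b ∘ φ) (fun k _ => hab _)
        (fun k _ k' _ h => hsepφ k k' h) h1 (r := fun k => r k s (ψ k))
        (w := fun k => ((wgt P (ψ k) : ℕ) : ℕ∞))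
        (fun k hk => Or.inr (Rk_W (fun h => hψ k hk (by rw [h]; exact hA'nil k)) (hr1 k s (ψ k))))
        (fun k _ => Rk_supp (hr1 k s (ψ k)))
        (fun k _ k' hk' h => by exact_mod_cast hA'w k k' h _ (hψ k' hk'))) x
      rw [ev_smul_left, ev_sum_left, inv_mul_le_iff₀ hm] at h2
      nlinarith
    · have h1 : ∑ k ∈ F.filter (fun k => s < k), (1 / 2 : ℝ) ^ k ≤ 2 * (1 / 2) ^ k0 :=
        geom_sum_le fun k hk => hk0 k (Finset.mem_filter.1 hk).1
      linarith
  set N := F.sup id + 1 with hN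
  have hFN : ∀ k ∈ F, k < N := fun k hk => Nat.lt_succ_of_le (Finset.le_sup (f := id) hk)
  calc ∑ k ∈ F, |evalPair (f (φ k)) x|
      ≤ ∑ k ∈ F, ((∑ s ∈ Finset.range k, (1 / 2 : ℝ) ^ s *
          (μ (φ k) s).sum fun js t => t * evalPair (r k s js) x) + (1 / 2 : ℝ) ^ k) := by
        apply Finset.sum_le_sum
        intro k _
        refine (hr3 k k).trans ?_
        gcongr
        exact mul_le_of_le_one_right (by positivity) hx
    _ = (∑ s ∈ Finset.range N, (1 / 2 : ℝ) ^ s * ∑ k ∈ F.filter (fun k => s < k),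
          (μ (φ k) s).sum fun js t => t * evalPair (r k s js) x) + ∑ k ∈ F, (1 / 2 : ℝ) ^ k := by
        rw [Finset.sum_add_distrib]
        congr 1
        simp_rw [Finset.mul_sum]
        apply Finset.sum_comm'
        intro k s
        simp only [Finset.mem_range, Finset.mem_filter]
        constructor
        · rintro ⟨h, h'⟩; exact ⟨⟨h, h'⟩, h'.trans (hFN k h)⟩
        · rintro ⟨⟨h, h'⟩, -⟩; exact ⟨h, h'⟩
    _ ≤ (∑ s ∈ Finset.range N, (1 / 2 : ℝ) ^ s * (P.m j + 6 * (1 / 2) ^ k0)) +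
          2 * (1 / 2) ^ k0 := by
        refine add_le_add (Finset.sum_le_sum fun s _ => ?_) (geom_sum_le hk0)
        exact mul_le_mul_of_nonneg_left (level s) (by positivity)
    _ ≤ 2 * (P.m j + 6 * (1 / 2) ^ k0) + 2 * (1 / 2) ^ k0 := by
        rw [← Finset.sum_mul]
        have h1 : ∑ k ∈ Finset.range N, (1 / 2 : ℝ) ^ k ≤ 2 * (1 / 2) ^ 0 :=
          geom_sum_le fun k _ => Nat.zero_le k
        gcongr
        linarith
    _ = _ := by ring

end IWDual

namespace IWDual
variable {P : IWParams}

/-! ### Passing between `X_iw^*` and linear forms on `c00` -/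

section Dual

variable {X : Type*} [NormedAddCommGroup X] [NormedSpace ℝ X] {e : ℕ → X}

/-- The linear form on `c00` induced by a continuous functional on `X`. -/
noncomputable def pull (e : ℕ → X) (g : X →L[ℝ] ℝ) : c00 →ₗ[ℝ] ℝ :=
  g.toLinearMap ∘ₗ Finsupp.linearCombination ℝ e

lemma pull_apply (g : X →L[ℝ] ℝ) (x : c00) :
    pull e g x = g (∑ i ∈ x.support, x i • e i) := rfl

lemma pull_apply' (g : X →L[ℝ] ℝ) (x : c00) :
    pull e g x = g (Finsupp.linearCombination ℝ e x) := rfl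

lemma pull_smul (s : ℝ) (g : X →L[ℝ] ℝ) (x : c00) : pull e (s • g) x = s * pull e g x := rfl

lemma pull_sum {ι : Type*} (F : Finset ι) (g : ι → X →L[ℝ] ℝ) (x : c00) :
    pull e (∑ k ∈ F, g k) x = ∑ k ∈ F, pull e (g k) x := by
  simp [pull_apply']

lemma pull_comb {ι : Type*} (F : Finset ι) (s : ι → ℝ) (g : ι → X →L[ℝ] ℝ) (x : c00) :
    pull e (∑ k ∈ F, s k • g k) x = ∑ k ∈ F, s k * pull e (g k) x := by
  rw [pull_sum]; rfl

lemma pull_abs_le (hX : IsIWRealization P X e) (g : X →L[ℝ] ℝ) (x : c00) :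
    |pull e g x| ≤ ‖g‖ * iwNorm P x := by
  rw [← hX.norm_eq x, pull_apply]; exact g.le_opNorm _

lemma norm_le_of_pull (hX : IsIWRealization P X e) {g : X →L[ℝ] ℝ} {C : ℝ} (hC : 0 ≤ C)
    (h : ∀ x, |pull e g x| ≤ C * iwNorm P x) : ‖g‖ ≤ C := by
  refine g.opNorm_le_bound hC fun y => ?_
  refine isClosed_property hX.dense (p := fun y => ‖g y‖ ≤ C * ‖y‖)
    (isClosed_le (by fun_prop) (by fun_prop)) (fun x => ?_) y
  rw [hX.norm_eq x]
  exact h x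

lemma eq_zero_of_iwNorm {x : c00} (h : iwNorm P x ≤ 0) : x = 0 := by
  ext i
  have := abs_apply_le (P := P) x i
  simpa using abs_eq_zero.1 (le_antisymm (this.trans h) (abs_nonneg _))

lemma le_of_ball {g : c00 →ₗ[ℝ] ℝ} {C : ℝ}
    (h : ∀ x, iwNorm P x ≤ 1 → |g x| ≤ C) (x : c00) : |g x| ≤ C * iwNorm P x := by
  rcases (iwNorm_nonneg (P := P) x).eq_or_lt with h0 | h0
  · have := eq_zero_of_iwNorm (P := P) h0.ge
    rw [← h0, this]; simp
  · have h1 := h ((iwNorm P x)⁻¹ • x) ((iwNorm_smul_le _ _).trans (by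
      rw [abs_of_pos (inv_pos.2 h0), inv_mul_cancel₀ h0.ne']))
    rw [map_smul, smul_eq_mul, abs_mul, abs_of_pos (inv_pos.2 h0), inv_mul_le_iff₀ h0] at h1
    linarith

lemma norm_le_of_ball (hX : IsIWRealization P X e) {g : X →L[ℝ] ℝ} {C : ℝ}
    (h : ∀ x, iwNorm P x ≤ 1 → |pull e g x| ≤ C) : ‖g‖ ≤ C := by
  refine norm_le_of_pull hX ?_ (le_of_ball h)
  have := h 0 (by rw [iwNorm_zero]; norm_num)
  exact (abs_nonneg _).trans this

lemma exists_norming (hX : IsIWRealization P X e) (g : X →L[ℝ] ℝ) {r : ℝ} (hr : r < ‖g‖) :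
    ∃ x, iwNorm P x ≤ 1 ∧ r < pull e g x := by
  by_contra hcon
  push Not at hcon
  refine absurd (norm_le_of_ball hX (g := g) (C := r) fun x hx => ?_) (not_le.2 hr)
  rw [abs_le]
  refine ⟨?_, hcon x hx⟩
  have := hcon (-x) (by
    have := iwNorm_smul_le (P := P) (-1) x
    rw [neg_one_smul] at this
    simp at this; linarith)
  rw [map_neg] at this
  linarith

lemma norm_ge_of_pull (hX : IsIWRealization P X e) {g : X →L[ℝ] ℝ} {x : c00} {C : ℝ}
    (hx : iwNorm P x ≤ C) : |pull e g x| ≤ ‖g‖ * C := by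
  exact (pull_abs_le hX g x).trans (mul_le_mul_of_nonneg_left hx (norm_nonneg _))

lemma Near.norm_comb_le (hX : IsIWRealization P X e) {ι : Type*} {F : Finset ι}
    {g : ι → X →L[ℝ] ℝ}
    {v : ι → c00} {δ : ι → ℝ} {s : ι → ℝ} {S C : ℝ}
    (hN : ∀ k ∈ F, Near P (pull e (g k)) (v k) (δ k)) (hs : ∀ k ∈ F, |s k| ≤ S) (hS : 0 ≤ S)
    (hδ : ∀ k ∈ F, 0 ≤ δ k)
    (hC : ∀ x, iwNorm P x ≤ 1 → ∑ k ∈ F, |evalPair (v k) x| ≤ C) :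
    ‖∑ k ∈ F, s k • g k‖ ≤ S * (C + ∑ k ∈ F, δ k) := by
  refine norm_le_of_ball hX fun x hx => ?_
  rw [pull_comb]
  calc |∑ k ∈ F, s k * pull e (g k) x| ≤ ∑ k ∈ F, |s k * pull e (g k) x| :=
        Finset.abs_sum_le_sum_abs _ _
    _ ≤ ∑ k ∈ F, S * (|evalPair (v k) x| + δ k) := by
        refine Finset.sum_le_sum fun k hk => ?_
        rw [abs_mul]
        refine mul_le_mul (hs k hk) ?_ (abs_nonneg _) hS
        have h1 := hN k hk x
        have h2 : δ k * iwNorm P x ≤ δ k * 1 := mul_le_mul_of_nonneg_left hx (hδ k hk)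
        have h3 := abs_sub_abs_le_abs_sub (pull e (g k) x) (evalPair (v k) x)
        linarith
    _ = S * (∑ k ∈ F, |evalPair (v k) x| + ∑ k ∈ F, δ k) := by
        rw [← Finset.mul_sum, Finset.sum_add_distrib]
    _ ≤ _ := by gcongr; exact hC x hx

lemma sep_strictMono {a b : ℕ → ℕ} (hab : ∀ k, a k ≤ b k) (hsep : ∀ k k', k < k' → b k < a k') :
    StrictMono a := fun k k' h => (hab k).trans_lt (hsep k k' h)

lemma SF_one_of_mono {a : ℕ → ℕ} (ha : StrictMono a) {F : Finset ℕ} {m : ℕ} (h1 : F.card ≤ m)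
    (h2 : ∀ k ∈ F, m ≤ k) : SF (P.n 0) (F.image a) := by
  rw [P.n_first]
  refine SF_small fun i hi => ?_
  obtain ⟨k, hk, rfl⟩ := Finset.mem_image.1 hi
  exact (Finset.card_image_le.trans h1).trans ((h2 k hk).trans (ha.le_apply))

/-- Functionals that are small perturbations of successive blocks are weakly null, since
a subsequence has uniformly bounded signed sums over Schreier sets. -/
theorem weaklyNull_of_near (hX : IsIWRealization P X e) {g : ℕ → X →L[ℝ] ℝ} {v : ℕ → c00}
    {a b : ℕ → ℕ} {δ : ℕ → ℝ} (hv : ∀ k, v k ∈ K P (a k) (b k)) (hab : ∀ k, a k ≤ b k)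
    (hsep : ∀ k k', k < k' → b k < a k') (hN : ∀ k, Near P (pull e (g k)) (v k) (δ k))
    (hδ0 : ∀ k, 0 ≤ δ k) (hδ : Tendsto δ atTop (𝓝 0)) : WeaklyNull g := by
  intro Φ
  by_contra hcon
  rw [Metric.tendsto_atTop] at hcon
  push Not at hcon
  obtain ⟨ε, hε, hcon⟩ := hcon
  have hδ' : ∀ k : ℕ, ∀ᶠ n in atTop, δ n < (1 / 2 : ℝ) ^ k := fun k =>
    hδ.eventually_lt_const (by positivity)
  obtain ⟨σ, hσ, hσ1⟩ : ∃ σ : ℕ → ℕ, StrictMono σ ∧ ∀ k, ε ≤ |Φ (g (σ k))| ∧ δ (σ k) ≤ (1 / 2) ^ k := by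
    refine extraction_forall_of_frequently (P := fun k n => ε ≤ |Φ (g n)| ∧ δ n ≤ (1 / 2) ^ k) fun k => ?_
    have h1 : ∃ᶠ n in atTop, ε ≤ |Φ (g n)| := by
      rw [frequently_atTop]
      intro N
      obtain ⟨n, hn, h⟩ := hcon N
      exact ⟨n, hn, by simpa [Real.dist_eq] using h⟩
    exact (h1.and_eventually (hδ' k)).mono fun n h => ⟨h.1, h.2.le⟩
  obtain ⟨φ, hφ, hC⟩ := admissible_sum_le (P := P) (f := v ∘ σ) (a := a ∘ σ) (b := b ∘ σ) (fun k => hv _)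
    (fun k => hab _) (fun k k' h => hsep _ _ (hσ h))
  have ha := sep_strictMono hab hsep
  have key : ∀ n : ℕ, n * ε ≤ ‖Φ‖ * 20 := by
    intro n
    set F := Finset.Ico n (2 * n) with hF
    have hcard : F.card = n := by rw [hF, Nat.card_Ico]; omega
    have hmem : ∀ k ∈ F, n ≤ k := fun k hk => (Finset.mem_Ico.1 hk).1
    let ψ := σ ∘ φ
    let s : ℕ → ℝ := fun k => SignType.sign (Φ (g (ψ k)))
    have hs : ∀ k ∈ F, |s k| ≤ 1 := by
      intro k _
      show |((SignType.sign (Φ (g (ψ k))) : SignType) : ℝ)| ≤ 1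
      rcases SignType.sign (Φ (g (ψ k))) with _ | _ | _ <;> simp
    have h1 := Near.norm_comb_le hX (F := F) (g := g ∘ ψ) (v := v ∘ ψ) (δ := δ ∘ ψ) (s := s) (S := 1)
      (C := 18) (fun k _ => hN _) hs zero_le_one (fun k _ => hδ0 _) (fun x hx => by
        have := hC 0 F 0 x (fun k _ => Nat.zero_le _)
          (SF_one_of_mono ((ha.comp hσ).comp hφ) hcard.le hmem) hx
        rw [P.m_first] at this
        refine this.trans (by norm_num))
    have h2 : ∑ k ∈ F, (δ ∘ ψ) k ≤ 2 := by
      calc ∑ k ∈ F, (δ ∘ ψ) k ≤ ∑ k ∈ F, (1 / 2 : ℝ) ^ k := by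
            refine Finset.sum_le_sum fun k _ => (hσ1 (φ k)).2.trans ?_
            exact pow_le_pow_of_le_one (by norm_num) (by norm_num) (hφ.le_apply)
        _ ≤ 2 * (1 / 2) ^ 0 := geom_sum_le fun k _ => Nat.zero_le _
        _ = 2 := by norm_num
    have h3 : (n : ℝ) * ε ≤ Φ (∑ k ∈ F, s k • (g ∘ ψ) k) := by
      rw [map_sum]
      have : ∑ k ∈ F, ε = n * ε := by rw [Finset.sum_const, hcard, nsmul_eq_mul]
      rw [← this]
      refine Finset.sum_le_sum fun k _ => ?_
      rw [map_smul, smul_eq_mul]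
      have : s k * Φ ((g ∘ ψ) k) = |Φ (g (ψ k))| := by
        show ((SignType.sign (Φ (g (ψ k))) : SignType) : ℝ) * Φ (g (ψ k)) = _
        exact sign_mul_self _
      rw [this]
      exact (hσ1 (φ k)).1
    have h4 := (le_abs_self _).trans (Φ.le_opNorm (∑ k ∈ F, s k • (g ∘ ψ) k))
    have h5 : ‖∑ k ∈ F, s k • (g ∘ ψ) k‖ ≤ 20 := by linarith
    exact h3.trans (h4.trans (mul_le_mul_of_nonneg_left h5 (norm_nonneg _)))
  obtain ⟨n, hn⟩ := exists_nat_gt (‖Φ‖ * 20 / ε)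
  rw [div_lt_iff₀ hε] at hn
  exact absurd (key n) (not_le.2 hn)

end Dual
end IWDual

namespace IWDual
variable {P : IWParams}

/-! ### Existence of spreading models -/

section Brunel

variable {V : Type*} [NormedAddCommGroup V] [NormedSpace ℝ V]

/-- The iterated ultrafilter limit
`lim_{j_1} ⋯ lim_{j_m} ‖z + a_1 x_{j_1} + ⋯ + a_m x_{j_m}‖` along a free ultrafilter. -/
noncomputable def ulim (x : ℕ → V) : ∀ m : ℕ, (Fin m → ℝ) → V → ℝ
  | 0, _, z => ‖z‖
  | m + 1, a, z => limUnder (hyperfilter ℕ : Filter ℕ) fun j => ulim x m (Fin.tail a) (z + a 0 • x j)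

lemma norm_add_smul_le {x : ℕ → V} (hx : ∀ i, ‖x i‖ ≤ 1) (z : V) (s : ℝ) (j : ℕ) :
    ‖z + s • x j‖ ≤ ‖z‖ + |s| := by
  refine (norm_add_le _ _).trans ?_
  rw [norm_smul, Real.norm_eq_abs]
  have := mul_le_mul_of_nonneg_left (hx j) (abs_nonneg s)
  linarith

lemma ulim_tendsto_of {x : ℕ → V} (hx : ∀ i, ‖x i‖ ≤ 1) {m : ℕ}
    (hb : ∀ (a : Fin m → ℝ) (z : V), |ulim x m a z| ≤ ‖z‖ + ∑ i, |a i|)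
    (a : Fin (m + 1) → ℝ) (z : V) :
    Tendsto (fun j => ulim x m (Fin.tail a) (z + a 0 • x j))
      (hyperfilter ℕ : Filter ℕ) (𝓝 (ulim x (m + 1) a z)) := by
  refine tendsto_nhds_limUnder ?_
  set B := ‖z‖ + |a 0| + ∑ i, |Fin.tail a i| with hB
  have hc := isCompact_Icc (a := -B) (b := B)
  obtain ⟨r, -, hr⟩ := hc.ultrafilter_le_nhds
    ((hyperfilter ℕ).map fun j => ulim x m (Fin.tail a) (z + a 0 • x j))
    (by
      rw [Ultrafilter.coe_map, le_principal_iff, mem_map]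
      refine Filter.univ_mem' fun j => ?_
      refine abs_le.1 ((hb _ _).trans ?_)
      have := norm_add_smul_le hx z (a 0) j
      linarith)
  exact ⟨r, hr⟩

lemma ulim_aux {x : ℕ → V} (hx : ∀ i, ‖x i‖ ≤ 1) : ∀ (m : ℕ),
    (∀ (a a' : Fin m → ℝ) (z z' : V),
      |ulim x m a z - ulim x m a' z'| ≤ ‖z - z'‖ + ∑ i, |a i - a' i|) ∧
    (∀ (a : Fin m → ℝ) (z : V), |ulim x m a z| ≤ ‖z‖ + ∑ i, |a i|) := by
  intro m
  induction m with
  | zero =>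
    refine ⟨fun a a' z z' => ?_, fun a z => ?_⟩
    · simpa [ulim] using abs_norm_sub_norm_le z z'
    · simp [ulim]
  | succ m ih =>
    have ht := ulim_tendsto_of hx ih.2
    refine ⟨fun a a' z z' => ?_, fun a z => ?_⟩
    · refine le_of_tendsto ((ht a z).sub (ht a' z')).abs (Eventually.of_forall fun j => ?_)
      refine (ih.1 _ _ _ _).trans ?_
      rw [Fin.sum_univ_succ]
      have : z + a 0 • x j - (z' + a' 0 • x j) = (z - z') + (a 0 - a' 0) • x j := by
        rw [sub_smul]; abel
      have := norm_add_smul_le hx (z - z') (a 0 - a' 0) j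
      have h2 : ∑ i, |Fin.tail a i - Fin.tail a' i| = ∑ i : Fin m, |a i.succ - a' i.succ| := rfl
      simp only [*]
      linarith
    · refine le_of_tendsto (ht a z).abs (Eventually.of_forall fun j => ?_)
      refine (ih.2 _ _).trans ?_
      rw [Fin.sum_univ_succ]
      have := norm_add_smul_le hx z (a 0) j
      have h2 : ∑ i, |Fin.tail a i| = ∑ i : Fin m, |a i.succ| := rfl
      linarith

lemma ulim_tendsto {x : ℕ → V} (hx : ∀ i, ‖x i‖ ≤ 1) {m : ℕ} (a : Fin (m + 1) → ℝ) (z : V) :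
    Tendsto (fun j => ulim x m (Fin.tail a) (z + a 0 • x j))
      (hyperfilter ℕ : Filter ℕ) (𝓝 (ulim x (m + 1) a z)) :=
  ulim_tendsto_of hx (ulim_aux hx m).2 a z

/-- An increasing sequence of finite sets of scalars with dense union. -/
noncomputable def Dk (k : ℕ) : Set ℝ := insert 0 (TopologicalSpace.denseSeq ℝ '' Set.Iic k)

lemma Dk_finite (k : ℕ) : (Dk k).Finite := ((Set.finite_Iic k).image _).insert _

/-- The combinations of `x_0, …, x_{n-1}` with coefficients in `Dk k`. -/
noncomputable def Zs (x : ℕ → V) (k : ℕ) : ℕ → Set V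
  | 0 => {0}
  | n + 1 => (fun p : V × ℝ => p.1 + p.2 • x n) '' (Zs x k n ×ˢ Dk k)

lemma Zs_finite (x : ℕ → V) (k n : ℕ) : (Zs x k n).Finite := by
  induction n with
  | zero => exact Set.finite_singleton _
  | succ n ih => exact (ih.prod (Dk_finite k)).image _

lemma Zs_step {x : ℕ → V} {k n : ℕ} {z : V} {d : ℝ} (hz : z ∈ Zs x k n) (hd : d ∈ Dk k) :
    z + d • x n ∈ Zs x k (n + 1) := ⟨(z, d), ⟨hz, hd⟩, rfl⟩

lemma Zs_mono {x : ℕ → V} {k n n' : ℕ} (h : n ≤ n') : Zs x k n ⊆ Zs x k n' := by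
  induction h with
  | refl => exact subset_rfl
  | step _ ih =>
    refine ih.trans fun z hz => ?_
    have := Zs_step hz (d := 0) (Set.mem_insert _ _)
    simpa using this

lemma Dk_mono {k k' : ℕ} (h : k ≤ k') : Dk k ⊆ Dk k' :=
  Set.insert_subset_insert (Set.image_mono (Set.Iic_subset_Iic.2 h))

lemma Zs_mono' {x : ℕ → V} {k k' n : ℕ} (h : k ≤ k') : Zs x k n ⊆ Zs x k' n := by
  induction n with
  | zero => exact subset_rfl
  | succ n ih => exact Set.image_mono (Set.prod_mono ih (Dk_mono h))

/-- Every bounded sequence has a subsequence generating a spreading model (Brunel–Sucheston). The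
spreading model is read off from iterated limits along a free ultrafilter. -/
theorem exists_spreadingModel {x : ℕ → V} (hx : ∀ i, ‖x i‖ ≤ 1) :
    ∃ φ : ℕ → ℕ, StrictMono φ ∧ ∃ ν, GeneratesSpreadingModel (x ∘ φ) ν := by
  let Q : ℕ → ℕ → ℕ → Prop := fun k n t => ∀ m ∈ Set.Iic k,
    ∀ a ∈ Set.univ.pi (fun _ : Fin (m + 1) => Dk k), ∀ z ∈ Zs x k (n + 1),
      |ulim x m (Fin.tail a) (z + a 0 • x t) - ulim x (m + 1) a z| < (1 / 2) ^ k
  obtain ⟨φ, hφ, -, hQ⟩ := diag_seq (l := (hyperfilter ℕ : Filter ℕ)) Nat.hyperfilter_le_atTop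
    (Q := Q) (fun k n => by
      refine (Set.finite_Iic k).eventually_all.2 fun m _ => ?_
      refine (Set.Finite.pi (fun _ : Fin (m + 1) => Dk_finite k)).eventually_all.2 fun a _ => ?_
      refine (Zs_finite x k (n + 1)).eventually_all.2 fun z _ => ?_
      have := (Metric.tendsto_nhds.1 (ulim_tendsto hx a z)) ((1 / 2) ^ k) (by positivity)
      simpa only [Real.dist_eq] using this)
  refine ⟨φ, hφ, fun m a => ulim x m a 0, ?_⟩
  have claim : ∀ (m : ℕ) (a : Fin m → ℝ) (j : Fin m → ℕ) (k0 n0 : ℕ) (z : V), StrictMono j →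
      m ≤ k0 → (∀ i, a i ∈ Dk k0) → (∀ i, k0 + 1 ≤ j i) → z ∈ Zs x k0 n0 →
      (∀ i, n0 ≤ φ (j i - 1) + 1) →
      |‖z + ∑ i, a i • x (φ (j i))‖ - ulim x m a z| ≤ m * (1 / 2) ^ k0 := by
    intro m
    induction m with
    | zero => intro a j k0 n0 z _ _ _ _ _ _; simp [ulim]
    | succ m ih =>
      intro a j k0 n0 z hj hm ha hk hz hn
      have h0 : n0 ≤ φ (j 0) := by
        have := hn 0
        have h1 : φ (j 0 - 1) < φ (j 0) := hφ (by have := hk 0; omega)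
        omega
      have h1 := ih (Fin.tail a) (fun i => j i.succ) k0 (φ (j 0) + 1) (z + a 0 • x (φ (j 0)))
        (fun i i' h => hj (Fin.succ_lt_succ_iff.2 h)) (by omega) (fun i => ha _) (fun i => hk _)
        (Zs_step (Zs_mono h0 hz) (ha 0)) (fun i => by
          have : j 0 < j i.succ := hj (Fin.succ_pos i)
          have : φ (j 0) ≤ φ (j i.succ - 1) := hφ.monotone (by omega)
          omega)
      obtain ⟨k', hk'⟩ : ∃ k', j 0 = k' + 1 := ⟨j 0 - 1, by have := hk 0; omega⟩
      have h2 : k0 ≤ k' + 1 := by have := hk 0; omega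
      have h3 := hQ k' m (by show m ≤ k' + 1; omega) a (fun i _ => Dk_mono h2 (ha i)) z
        (Zs_mono' h2 (Zs_mono (by have := hn 0; rw [hk'] at this; simpa using this) hz))
      have h4 : ((1 : ℝ) / 2) ^ (k' + 1) ≤ (1 / 2) ^ k0 :=
        pow_le_pow_of_le_one (by norm_num) (by norm_num) h2
      rw [Fin.sum_univ_succ, ← add_assoc]
      rw [← hk'] at h3 h4
      have h5 : ∑ i : Fin m, Fin.tail a i • x (φ (j i.succ)) = ∑ i : Fin m, a i.succ • x (φ (j i.succ)) :=
        rfl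
      rw [h5] at h1
      push_cast
      rw [abs_le] at h1 ⊢
      rw [abs_lt] at h3
      constructor <;> linarith [h1.1, h1.2, h3.1, h3.2]
  intro m a ε hε
  have hη : 0 < ε / (4 * (m + 1)) := by positivity
  have hd : ∀ i : Fin m, ∃ k, |a i - TopologicalSpace.denseSeq ℝ k| < ε / (4 * (m + 1)) := by
    intro i
    exact (TopologicalSpace.denseRange_denseSeq ℝ).exists_dist_lt (a i) hη
  choose q hq using hd
  let a' : Fin m → ℝ := fun i => TopologicalSpace.denseSeq ℝ (q i)
  obtain ⟨k1, hk1⟩ := exists_pow_lt_of_lt_one (hη) (show (1 / 2 : ℝ) < 1 by norm_num)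
  set k0 := max k1 (max m (Finset.univ.sup q))
  have hsum : ∑ i, |a i - a' i| ≤ ε / 4 := by
    calc ∑ i, |a i - a' i| ≤ ∑ _i : Fin m, ε / (4 * (m + 1)) :=
          Finset.sum_le_sum fun i _ => (hq i).le
      _ = m / (m + 1) * (ε / 4) := by
          rw [Finset.sum_const, Finset.card_univ, Fintype.card_fin, nsmul_eq_mul]; field_simp
      _ ≤ 1 * (ε / 4) := by
          gcongr
          rw [div_le_one (by positivity)]; linarith
      _ = ε / 4 := one_mul _
  refine ⟨k0 + 1, fun j hj hN => ?_⟩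
  have h1 := claim m a' j k0 0 0 hj (by omega)
    (fun i => Set.mem_insert_of_mem _ ⟨q i, by
      have := Finset.le_sup (f := q) (Finset.mem_univ i); simp only [Set.mem_Iic]; omega, rfl⟩)
    hN rfl (fun i => Nat.zero_le _)
  have h2 := (ulim_aux hx m).1 a a' 0 0
  have h3 : (m : ℝ) * (1 / 2) ^ k0 ≤ ε / 4 := by
    have h4 : ((1 : ℝ) / 2) ^ k0 ≤ (1 / 2) ^ k1 :=
      pow_le_pow_of_le_one (by norm_num) (by norm_num) (by omega)
    calc (m : ℝ) * (1 / 2) ^ k0 ≤ m * (ε / (4 * (m + 1))) := by gcongr; linarith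
      _ = m / (m + 1) * (ε / 4) := by field_simp
      _ ≤ 1 * (ε / 4) := by
          gcongr
          rw [div_le_one (by positivity)]; linarith
      _ = ε / 4 := one_mul _
  have h5 : |‖∑ i, a i • x (φ (j i))‖ - ‖∑ i, a' i • x (φ (j i))‖| ≤ ∑ i, |a i - a' i| := by
    refine (abs_norm_sub_norm_le _ _).trans ?_
    rw [← Finset.sum_sub_distrib]
    refine (norm_sum_le _ _).trans (Finset.sum_le_sum fun i _ => ?_)
    rw [← sub_smul, norm_smul, Real.norm_eq_abs]
    exact mul_le_of_le_one_right (abs_nonneg _) (hx _)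
  simp only [Function.comp]
  rw [zero_add] at h1
  rw [sub_zero, norm_zero, zero_add] at h2
  rw [abs_le] at h1 h2 h5
  rw [abs_lt]
  constructor <;> linarith [h1.1, h1.2, h2.1, h2.2, h5.1, h5.2]

end Brunel
end IWDual

namespace IWDual
variable {P : IWParams}

/-! ### Spreading models of weakly null sequences in the dual -/

/-- Inductive choice of successive intervals `[a k, b k]` carrying objects `y k`. -/
lemma block_seq {α : Type*} {R : ℕ → ℕ → ℕ → α → Prop} (h : ∀ k A, ∃ b, A ≤ b ∧ ∃ y, R k A b y) :
    ∃ (a b : ℕ → ℕ) (y : ℕ → α), (∀ k, a k ≤ b k) ∧ (∀ k k', k < k' → b k < a k') ∧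
      (∀ k, 1 ≤ a k) ∧ ∀ k, R k (a k) (b k) (y k) := by
  choose B hB Y hY using h
  let a : ℕ → ℕ := fun k => Nat.rec 1 (fun k A => B k A + 1) k
  have ha : ∀ k, a (k + 1) = B k (a k) + 1 := fun k => rfl
  have hm : StrictMono a := strictMono_nat_of_lt_succ fun k => by
    rw [ha]; have := hB k (a k); omega
  refine ⟨a, fun k => B k (a k), fun k => Y k (a k), fun k => hB _ _, fun k k' h => ?_,
    fun k => ?_, fun k => hY _ _⟩
  · have h1 : a (k + 1) ≤ a k' := hm.monotone h
    rw [ha] at h1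
    show B k (a k) < a k'
    omega
  · exact hm.monotone (Nat.zero_le k)

lemma K_mono {a b b' : ℕ} (h : b ≤ b') : K P a b ⊆ K P a b' :=
  convexHull_mono fun _ hf => ⟨hf.1, fun i hi => ⟨(hf.2 i hi).1, ((hf.2 i hi).2).trans h⟩⟩

section Dual

variable {X : Type*} [NormedAddCommGroup X] [NormedSpace ℝ X] {e : ℕ → X}

lemma pull_single (g : X →L[ℝ] ℝ) (i : ℕ) : pull e g (Finsupp.single i 1) = g (e i) := by
  simp [pull_apply']

/-- Perturbations of disjointly supported functionals dominate their coefficients, because a vector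
norming `g k` may be restricted to the block of `g k`. -/
lemma Near.lower (hX : IsIWRealization P X e) {ι : Type*} {F : Finset ι}
    {g : ι → X →L[ℝ] ℝ} {v : ι → c00} {δ : ι → ℝ} {s : ι → ℝ} {S : ℝ} {a b : ι → ℕ}
    (hv : ∀ k ∈ F, v k ∈ K P (a k) (b k))
    (hN : ∀ k ∈ F, Near P (pull e (g k)) (v k) (δ k)) (hs : ∀ k ∈ F, |s k| ≤ S)
    (hδ : ∀ k ∈ F, 0 ≤ δ k)
    {k : ι} (hk : k ∈ F) (hsep : ∀ k' ∈ F, k' ≠ k → b k < a k' ∨ b k' < a k)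
    (hgk : ‖g k‖ = 1) :
    |s k| ≤ ‖∑ k ∈ F, s k • g k‖ + 2 * S * ∑ k ∈ F, δ k := by
  classical
  have hS : 0 ≤ S := (abs_nonneg _).trans (hs k hk)
  refine le_of_forall_pos_le_add fun ε hε => ?_
  obtain ⟨x, hx, hgx⟩ := exists_norming hX (g k) (r := 1 - ε / (|s k| + 1)) (by
    rw [hgk]; have : 0 < ε / (|s k| + 1) := by positivity
    linarith)
  set x' := rst (Set.Icc (a k) (b k)) x
  have hx' : iwNorm P x' ≤ 1 := (iwNorm_rst_le _ _).trans hx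
  have hle : ∀ k' ∈ F, ∀ y, iwNorm P y ≤ 1 → |pull e (g k') y - evalPair (v k') y| ≤ δ k' := by
    intro k' hk' y hy
    exact (hN k' hk' y).trans (mul_le_of_le_one_right (hδ k' hk') hy)
  have h1 : 1 - ε / (|s k| + 1) - 2 * δ k ≤ pull e (g k) x' := by
    have e1 : evalPair (v k) x' = evalPair (v k) x := by
      rw [← ev_rst, rst_eq_self]
      exact fun i hi => K_supp (hv k hk) i hi
    have h2 := hle k hk x hx
    have h3 := hle k hk x' hx'
    rw [abs_le] at h2 h3
    linarith [h2.1, h2.2, h3.1, h3.2]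
  have h2 : ∀ k' ∈ F, k' ≠ k → |pull e (g k') x'| ≤ δ k' := by
    intro k' hk' hne
    have e1 : evalPair (v k') x' = 0 := by
      refine ev_eq_zero fun i hi => ?_
      have h3 := K_supp (hv k' hk') i hi
      refine rst_apply_not_mem (fun h4 => ?_) _
      have h5 := h4.1
      have h6 := h4.2
      rcases hsep k' hk' hne with h | h <;> omega
    have := hle k' hk' x' hx'
    rwa [e1, sub_zero] at this
  have h3 : |pull e (∑ k ∈ F, s k • g k) x'| ≤ ‖∑ k ∈ F, s k • g k‖ := by
    simpa using norm_ge_of_pull hX (g := ∑ k ∈ F, s k • g k) hx'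
  rw [pull_comb, ← Finset.add_sum_erase _ _ hk] at h3
  have h4 : |∑ k' ∈ F.erase k, s k' * pull e (g k') x'| ≤ S * ∑ k' ∈ F.erase k, δ k' := by
    refine (Finset.abs_sum_le_sum_abs _ _).trans ?_
    rw [Finset.mul_sum]
    refine Finset.sum_le_sum fun k' hk' => ?_
    rw [abs_mul]
    have hk'' := Finset.mem_of_mem_erase hk'
    exact mul_le_mul (hs k' hk'') (h2 k' hk'' (Finset.ne_of_mem_erase hk')) (abs_nonneg _) hS
  have h5 : |s k| * (1 - ε / (|s k| + 1) - 2 * δ k) ≤ |s k * pull e (g k) x'| := by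
    rw [abs_mul]
    exact mul_le_mul_of_nonneg_left (h1.trans (le_abs_self _)) (abs_nonneg _)
  have h6 : |s k| * (ε / (|s k| + 1)) ≤ ε := by
    rw [mul_div_assoc', div_le_iff₀ (by positivity)]
    nlinarith [abs_nonneg (s k)]
  have h7 : |s k| * δ k ≤ S * δ k := mul_le_mul_of_nonneg_right (hs k hk) (hδ k hk)
  have h8 := Finset.add_sum_erase F δ hk
  have h9 : 0 ≤ ∑ k' ∈ F.erase k, δ k' :=
    Finset.sum_nonneg fun k' hk' => hδ k' (Finset.mem_of_mem_erase hk')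
  have h10 := abs_sub_abs_le_abs_sub (s k * pull e (g k) x')
    (-∑ k' ∈ F.erase k, s k' * pull e (g k') x')
  rw [abs_neg, sub_neg_eq_add] at h10
  have h11 : 0 ≤ S * ∑ k' ∈ F.erase k, δ k' := mul_nonneg hS h9
  rw [← h8]
  nlinarith

/-- Normalized weakly null sequences in the dual have subsequences with spreading model
`4`-equivalent to the basis of `c₀`. The upper constant `4 = 2 m_1` is the case of the first
weight in `admissible_sum_le`. -/
theorem part_one (hX : IsIWRealization P X e) {f : ℕ → (X →L[ℝ] ℝ)} (hf1 : Normalized f)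
    (hf : WeaklyNull f) :
    ∃ φ : ℕ → ℕ, StrictMono φ ∧
      ∃ ν, GeneratesSpreadingModel (f ∘ φ) ν ∧ NormFamEquiv 4 supNorm ν := by
  have hpt : ∀ i, Tendsto (fun k => pull e (f k) (Finsupp.single i 1)) atTop (𝓝 0) := by
    intro i
    simp only [pull_single]
    exact hf (ContinuousLinearMap.apply ℝ ℝ (e i))
  have hle : ∀ k x, |pull e (f k) x| ≤ iwNorm P x := fun k x => by
    simpa [hf1 k] using pull_abs_le hX (f k) x
  obtain ⟨a, b, y, hab, hsep, -, hy⟩ := block_seq (α := ℕ × c00)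
    (R := fun k A b y => A ≤ y.1 ∧ y.1 ≤ b ∧ y.2 ∈ K P A b ∧
      Near P (pull e (f y.1)) y.2 ((1 / 2) ^ k)) (fun k A => by
      have h1 : ∀ᶠ t in atTop, ∀ i ∈ Set.Iio A,
          |pull e (f t) (Finsupp.single i 1)| < (1 / 2) ^ k / (3 * (A + 1)) := by
        refine (Set.finite_Iio A).eventually_all.2 fun i _ => ?_
        have := (hpt i).abs
        rw [abs_zero] at this
        exact this.eventually_lt_const (by positivity)
      obtain ⟨t, ht, hAt⟩ := (h1.and (eventually_ge_atTop A)).exists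
      obtain ⟨b, hb, v, hv, hN⟩ := near_K (hle t) A (δ := (1 / 2) ^ k) (by positivity)
        (fun i hi => (ht i hi).le)
      exact ⟨max b t, hb.trans (le_max_left _ _), (t, v), hAt, le_max_right _ _,
        K_mono (le_max_left _ _) hv, hN⟩)
  let t : ℕ → ℕ := fun k => (y k).1
  have ht : StrictMono t := fun k k' h => by
    have h1 := (hy k).2.1
    have h2 := (hy k').1
    have h3 := hsep k k' h
    show (y k).1 < (y k').1
    omega
  obtain ⟨φ, hφ, hC⟩ := admissible_sum_le (P := P) (f := fun k => (y k).2) (fun k => (hy k).2.2.1) hab hsep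
  obtain ⟨χ, hχ, ν, hν⟩ := exists_spreadingModel (x := f ∘ t ∘ φ) (fun i => (hf1 _).le)
  refine ⟨t ∘ φ ∘ χ, ht.comp (hφ.comp hχ), ν, hν, 1, 4, one_pos, by norm_num, by norm_num, ?_⟩
  intro m s
  set S := supNorm m s with hSdef
  have hS : ∀ i, |s i| ≤ S := fun i => le_ciSup (f := fun i => |s i|) (Set.finite_range _).bddAbove i
  have hS0 : 0 ≤ S := Real.iSup_nonneg fun i => abs_nonneg _
  have ha := sep_strictMono hab hsep
  -- estimates for the norms far out along the subsequence
  have main : ∀ ε > 0, ν m s ≤ 4 * S + ε ∧ ∀ i, |s i| ≤ ν m s + ε := by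
    intro ε hε
    obtain ⟨N, hN⟩ := hν m s (ε / 2) (by positivity)
    obtain ⟨k1, hk1⟩ := exists_pow_lt_of_lt_one (show 0 < ε / (2 * (16 * S + 1)) by positivity)
      (show (1 / 2 : ℝ) < 1 by norm_num)
    set N' := max N (max m k1)
    have hj := hN (fun i => N' + i) (fun i i' h => by
      have : (i : ℕ) < i' := h
      show N' + (i : ℕ) < N' + i'
      omega) (fun i => by show N ≤ N' + (i : ℕ); omega)
    set κ : Fin m → ℕ := fun i => χ (N' + i)
    have hκ : StrictMono κ := fun i i' h => hχ (by have : (i : ℕ) < i' := h; omega)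
    have hκN : ∀ i, N' ≤ κ i := fun i => (Nat.le_add_right _ _).trans hχ.le_apply
    have hpow : (1 / 2 : ℝ) ^ N' ≤ ε / (2 * (16 * S + 1)) :=
      (pow_le_pow_of_le_one (by norm_num) (by norm_num) (by omega)).trans hk1.le
    have hdel : ∑ i, (1 / 2 : ℝ) ^ (φ (κ i)) ≤ 2 * (1 / 2) ^ N' := by
      rw [← Finset.sum_image (s := Finset.univ) (g := fun i => φ (κ i)) (f := fun k => (1 / 2 : ℝ) ^ k)
        (fun i _ i' _ h => (hφ.comp hκ).injective h)]
      refine geom_sum_le fun k hk => ?_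
      obtain ⟨i, -, rfl⟩ := Finset.mem_image.1 hk
      exact (hκN i).trans hφ.le_apply
    have hsmall : S * (16 * (1 / 2) ^ N') ≤ ε / 2 := by
      have : S * (16 * (ε / (2 * (16 * S + 1)))) ≤ ε / 2 := by
        rw [show S * (16 * (ε / (2 * (16 * S + 1)))) = (16 * S) / (16 * S + 1) * (ε / 2) by
          field_simp]
        refine mul_le_of_le_one_left (by positivity) ?_
        rw [div_le_one (by positivity)]; linarith
      refine le_trans ?_ this
      gcongr
    have hNear : ∀ i ∈ (Finset.univ : Finset (Fin m)), Near P (pull e (f (t (φ (κ i))))) ((y (φ (κ i))).2)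
        ((1 / 2) ^ (φ (κ i))) := fun i _ => (hy _).2.2.2
    have hup := Near.norm_comb_le hX (F := Finset.univ) (g := fun i : Fin m => f (t (φ (κ i))))
      (v := fun i => (y (φ (κ i))).2) (s := s) (S := S) (C := 4 + 14 * (1 / 2) ^ N')
      hNear (fun i _ => hS i) hS0 (fun i _ => by positivity) (fun x hx => by
        have := hC 0 (Finset.univ.image κ) N' x (fun k hk => by
            obtain ⟨i, -, rfl⟩ := Finset.mem_image.1 hk
            exact hκN i)
          (SF_one_of_mono (m := m) (ha.comp hφ) (by
            refine Finset.card_image_le.trans ?_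
            simp) (fun k hk => by
            obtain ⟨i, -, rfl⟩ := Finset.mem_image.1 hk
            exact le_trans (by omega) (hκN i))) hx
        rw [Finset.sum_image (fun i _ i' _ h => hκ.injective h), P.m_first] at this
        refine this.trans (by norm_num))
    rw [abs_lt] at hj
    have hj1 := hj.1
    have hj2 := hj.2
    simp only [Function.comp] at hj1 hj2
    have hmul := mul_le_mul_of_nonneg_left hdel hS0
    refine ⟨by nlinarith, fun i => ?_⟩
    have hlow := Near.lower hX (F := Finset.univ) (g := fun i : Fin m => f (t (φ (κ i))))
      (v := fun i => (y (φ (κ i))).2) (s := s) (S := S) (a := fun i => a (φ (κ i)))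
      (b := fun i => b (φ (κ i))) (fun i _ => (hy _).2.2.1) hNear (fun i _ => hS i)
      (fun i _ => by positivity) (Finset.mem_univ i) (fun k' _ hne => by
        rcases lt_or_gt_of_ne hne with h | h
        · exact Or.inr (hsep _ _ (hφ (hκ h)))
        · exact Or.inl (hsep _ _ (hφ (hκ h)))) (hf1 _)
    nlinarith
  have hnn : 0 ≤ ν m s := by
    refine le_of_forall_pos_le_add fun ε hε => ?_
    obtain ⟨N, hN⟩ := hν m s ε hε
    have hj := hN (fun i => N + i) (fun i i' h => by
      have : (i : ℕ) < i' := h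
      show N + (i : ℕ) < N + i'
      omega) (fun i => by show N ≤ N + (i : ℕ); omega)
    rw [abs_lt] at hj
    have := norm_nonneg (∑ i, s i • (f ∘ t ∘ φ ∘ χ) (N + (i : ℕ)))
    have h2 := hj.2
    simp only [Function.comp] at h2 this
    linarith
  refine ⟨?_, le_of_forall_pos_le_add fun ε hε => (main ε hε).1⟩
  rw [div_one, one_mul]
  exact Real.iSup_le (fun i => le_of_forall_pos_le_add fun ε hε => (main ε hε).2 i) hnn

end Dual
end IWDual

namespace IWDual
variable {P : IWParams}

/-! ### Functionals in a subspace normed by vectors with small action of light functionals -/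

lemma Near.sum {ι : Type*} {F : Finset ι} {g : ι → c00 →ₗ[ℝ] ℝ} {v : ι → c00} {δ : ι → ℝ}
    (h : ∀ k ∈ F, Near P (g k) (v k) (δ k)) :
    Near P (∑ k ∈ F, g k) (∑ k ∈ F, v k) (∑ k ∈ F, δ k) := by
  intro x
  rw [LinearMap.sum_apply, ev_sum_left, ← Finset.sum_sub_distrib, Finset.sum_mul]
  exact (Finset.abs_sum_le_sum_abs _ _).trans (Finset.sum_le_sum fun k hk => h k hk x)

lemma Near.mono {g : c00 →ₗ[ℝ] ℝ} {v : c00} {δ δ' : ℝ} (h : Near P g v δ) (hδ : δ ≤ δ') :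
    Near P g v δ' := fun x =>
  (h x).trans (mul_le_mul_of_nonneg_right hδ (iwNorm_nonneg x))

section Dual

variable {X : Type*} [NormedAddCommGroup X] [NormedSpace ℝ X] {e : ℕ → X}

lemma pull_sum' {ι : Type*} (F : Finset ι) (g : ι → X →L[ℝ] ℝ) :
    pull e (∑ k ∈ F, g k) = ∑ k ∈ F, pull e (g k) := by
  refine LinearMap.ext fun x => ?_
  rw [pull_sum, LinearMap.sum_apply]

/-- Infinite dimensional subspaces contain functionals annihilating the first `A` coordinates, hence
perturbations of blocks beyond `A`. -/
lemma exists_block_mem (hX : IsIWRealization P X e) {Y : Submodule ℝ (X →L[ℝ] ℝ)}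
    (hY : ¬ FiniteDimensional ℝ Y) (A : ℕ) {δ : ℝ} (hδ : 0 < δ) :
    ∃ b, A ≤ b ∧ ∃ g ∈ Y, ‖g‖ = 1 ∧ ∃ v ∈ K P A b, Near P (pull e g) v δ := by
  let T : Y →ₗ[ℝ] (Fin A → ℝ) :=
    LinearMap.pi fun i => (ContinuousLinearMap.apply ℝ ℝ (e i)).toLinearMap ∘ₗ Y.subtype
  have hT : ¬ Function.Injective T := fun h => hY (Module.Finite.of_injective T h)
  rw [injective_iff_map_eq_zero] at hT
  push Not at hT
  obtain ⟨g, hg, hg0⟩ := hT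
  have hg0' : (g : X →L[ℝ] ℝ) ≠ 0 := fun h => hg0 (Subtype.ext h)
  have hn : 0 < ‖(g : X →L[ℝ] ℝ)‖ := norm_pos_iff.2 hg0'
  set g' := ‖(g : X →L[ℝ] ℝ)‖⁻¹ • (g : X →L[ℝ] ℝ) with hg'
  have hg1 : ‖g'‖ = 1 := by
    rw [hg', norm_smul, norm_inv, norm_norm, inv_mul_cancel₀ hn.ne']
  obtain ⟨b, hb, v, hv, hN⟩ := near_K (P := P) (g := pull e g') (fun x => by
    simpa [hg1] using pull_abs_le hX g' x) A hδ (fun i hi => by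
    have h1 : (g : X →L[ℝ] ℝ) (e i) = 0 := congrFun hg ⟨i, hi⟩
    rw [pull_single, hg', smul_apply, h1, smul_zero, abs_zero]
    positivity)
  exact ⟨b, hb, g', Y.smul_mem _ g.2, hg1, v, hv, hN⟩

/-- One step of the James-type argument: if no vector produced by averaging nearly norms
the corresponding sum, the norm of sums grows by a fixed factor at the cost of raising the
Schreier index by `n_J`. -/
lemma james_step (hX : IsIWRealization P X e) {Y : Submodule ℝ (X →L[ℝ] ℝ)}
    {g : ℕ → X →L[ℝ] ℝ} {v : ℕ → c00} {a b : ℕ → ℕ} (hgY : ∀ k, g k ∈ Y)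
    (hv : ∀ k, v k ∈ K P (a k) (b k)) (hab : ∀ k, a k ≤ b k)
    (hsep : ∀ k k', k < k' → b k < a k') {ε : ℝ} (hε : 0 < ε) (hε1 : ε < 1)
    (hN : ∀ k, Near P (pull e (g k)) (v k) (ε / 16 * (1 / 2) ^ k))
    {J : ℕ} (hJ : 1 ≤ J) {A : ℕ}
    (hfail : ∀ h ∈ Y, ‖h‖ = 1 → ∀ (b' : ℕ) (y v' : c00), A ≤ b' →
      (∀ i, y i ≠ 0 → A ≤ i ∧ i ≤ b') → iwNorm P y ≤ 1 →
      (∀ f w, WIW P f w → w < ((P.m J : ℕ) : ℕ∞) → |evalPair f y| ≤ (1 + ε) * wr w) →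
      v' ∈ K P A b' → Near P (pull e h) v' ε → pull e h y < 1 - ε)
    {T : ℝ} (hT : 1 ≤ T) {s : ℕ}
    (ih : ∀ N : ℕ, ∃ F : Finset ℕ, F.Nonempty ∧ (∀ k ∈ F, N ≤ k) ∧ SF s (F.image a) ∧
      T ≤ ‖∑ k ∈ F, g k‖) (N : ℕ) :
    ∃ F : Finset ℕ, F.Nonempty ∧ (∀ k ∈ F, N ≤ k) ∧ SF (s + P.n J) (F.image a) ∧
      T * ((1 - ε / 2) / (1 - ε)) ≤ ‖∑ k ∈ F, g k‖ := by
  classical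
  have ha := sep_strictMono hab hsep
  choose F hFne hFN hFSF hFT using ih
  let bp : ℕ → ℕ := fun p => (F p).sup b
  have hbp : ∀ p, ∀ k ∈ F p, p ≤ a k ∧ a k ≤ b k ∧ b k ≤ bp p := fun p k hk =>
    ⟨(hFN p k hk).trans ha.le_apply, hab k, Finset.le_sup hk⟩
  obtain ⟨L, hLinf, hL1, hLsep⟩ := exists_sep bp (fun p => by
    obtain ⟨k, hk⟩ := hFne p
    obtain ⟨h1, h2, h3⟩ := hbp p k hk
    omega)
  obtain ⟨n, hn⟩ : ∃ n, n + 1 = P.n J := ⟨P.n J - 1, by have := n_ge_one P J; omega⟩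
  have hmJ := m_pos P J
  obtain ⟨R, c, hS, hRL, hRN⟩ := exists_SCC L hLinf n (ε * (P.m J : ℝ)⁻¹ / 2) (by positivity)
    (max N A)
  have hxs : ∀ p, ∃ x, iwNorm P x ≤ 1 ∧ ‖∑ k ∈ F p, g k‖ - ε / 4 < pull e (∑ k ∈ F p, g k) x :=
    fun p => exists_norming hX _ (by linarith)
  choose xs hxs1 hxs2 using hxs
  let x : ℕ → c00 := fun p => rst (Set.Icc p (bp p)) (xs p)
  have hx1 : ∀ p, iwNorm P (x p) ≤ 1 := fun p => (iwNorm_rst_le _ _).trans (hxs1 p)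
  have hxsupp : ∀ p i, x p i ≠ 0 → p ≤ i ∧ i ≤ bp p := fun p i hi => (rst_ne_zero hi).1
  have hNs : ∀ F : Finset ℕ, Near P (pull e (∑ k ∈ F, g k)) (∑ k ∈ F, v k) (ε / 8) := by
    intro F
    rw [pull_sum']
    refine (Near.sum (fun k _ => hN k)).mono ?_
    rw [← Finset.mul_sum]
    have := geom_sum_le (F := F) (k0 := 0) (fun k _ => Nat.zero_le _)
    nlinarith
  set G := R.biUnion F with hG
  set h := ∑ k ∈ G, g k with hh
  have hzero : ∀ p ∈ R, ∀ k ∈ G, k ∉ F p → evalPair (v k) (x p) = 0 := by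
    intro p hp k hk hkp
    obtain ⟨p', hp', hk'⟩ := Finset.mem_biUnion.1 hk
    refine ev_eq_zero fun i hi => ?_
    by_contra hxi
    have h1 := K_supp (hv k) i hi
    have h2 := hxsupp p i hxi
    obtain ⟨h3, h4, h5⟩ := hbp p' k hk'
    rcases lt_trichotomy p p' with hlt | heq | hlt
    · have := hLsep p (hRL hp) p' (hRL hp') hlt; omega
    · subst heq; exact hkp hk'
    · have := hLsep p' (hRL hp') p (hRL hp) hlt; omega
  have hhx : ∀ p ∈ R, T - ε / 2 ≤ pull e h (x p) := by
    intro p hp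
    have h1 := hNs G (x p)
    have h2 := hNs (F p) (xs p)
    have h3 : evalPair (∑ k ∈ G, v k) (x p) = evalPair (∑ k ∈ F p, v k) (xs p) := by
      rw [ev_sum_left, ev_sum_left, ← Finset.sum_subset (Finset.subset_biUnion_of_mem F hp)
        (fun k hk hkp => hzero p hp k hk hkp)]
      refine Finset.sum_congr rfl fun k hk => ?_
      rw [← ev_rst, rst_eq_self]
      intro i hi
      have h1 := K_supp (hv k) i hi
      obtain ⟨h3, h4, h5⟩ := hbp p k hk
      exact ⟨by omega, by omega⟩
    have h4 := hxs2 p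
    have h5 := hFT p
    have h6 : ε / 8 * iwNorm P (x p) ≤ ε / 8 := mul_le_of_le_one_right (by positivity) (hx1 p)
    have h7 : ε / 8 * iwNorm P (xs p) ≤ ε / 8 := mul_le_of_le_one_right (by positivity) (hxs1 p)
    rw [← hh, h3] at h1
    rw [abs_le] at h1 h2
    linarith [h1.1, h2.2]
  set y := ∑ p ∈ R, c p • x p with hy
  have hy1 : iwNorm P y ≤ 1 := conv_norm_le hS.nonneg hS.sum_eq fun p _ => hx1 p
  have hhy : T - ε / 2 ≤ pull e h y := map_conv_ge hS.nonneg hS.sum_eq hhx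
  have hhn : T - ε / 2 ≤ ‖h‖ := by
    have := norm_ge_of_pull hX (g := h) hy1
    rw [mul_one] at this
    linarith [le_abs_self (pull e h y)]
  have hpos : 0 < ‖h‖ := by linarith
  set b' := max A (R.sup bp) with hb'
  set h' := ‖h‖⁻¹ • h with hh'
  have hh'1 : ‖h'‖ = 1 := by
    rw [hh', norm_smul, norm_inv, norm_norm, inv_mul_cancel₀ hpos.ne']
  have hh'Y : h' ∈ Y := Y.smul_mem _ (Y.sum_mem fun k _ => hgY k)
  obtain ⟨v', hv', hv'a⟩ := K_approx (P := P) (g := pull e h') (fun x => by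
    simpa [hh'1] using pull_abs_le hX h' x) A b' (δ := ε / 4) (by positivity)
  have hGb : ∀ k ∈ G, A ≤ a k ∧ b k ≤ b' := by
    intro k hk
    obtain ⟨p, hp, hk'⟩ := Finset.mem_biUnion.1 hk
    obtain ⟨h3, h4, h5⟩ := hbp p k hk'
    have h6 := hRN p hp
    have h7 : bp p ≤ R.sup bp := Finset.le_sup hp
    omega
  have hnear : Near P (pull e h') v' ε := by
    intro z
    have h1 := hv'a z
    set z' := z - rst (Set.Icc A b') z with hz'
    have h2 : evalPair (∑ k ∈ G, v k) z' = 0 := by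
      rw [hz', ev_sub_right, ← ev_rst, rst_eq_self, sub_self]
      intro i hi
      rw [Finsupp.finsetSum_apply] at hi
      obtain ⟨k, hk, hki⟩ := Finset.exists_ne_zero_of_sum_ne_zero hi
      have h1 := K_supp (hv k) i hki
      obtain ⟨h3, h4⟩ := hGb k hk
      exact ⟨by omega, by omega⟩
    have h3 := hNs G z'
    rw [h2, sub_zero] at h3
    have h4 : iwNorm P z' ≤ 2 * iwNorm P z := by
      rw [hz', sub_eq_add_neg, ← neg_one_smul ℝ (rst _ z)]
      refine (iwNorm_add_le _ _).trans ?_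
      have := iwNorm_smul_le (P := P) (-1) (rst (Set.Icc A b') z)
      have h5 := iwNorm_rst_le (P := P) (Set.Icc A b') z
      simp only [abs_neg, abs_one, one_mul] at this
      linarith
    have h5 : pull e h' z = pull e h' (rst (Set.Icc A b') z) + ‖h‖⁻¹ * pull e h z' := by
      rw [hz', map_sub, hh', pull_smul, pull_smul]; ring
    have h6 : |‖h‖⁻¹ * pull e h z'| ≤ 2 * (ε / 8 * (2 * iwNorm P z)) := by
      rw [abs_mul, abs_of_pos (inv_pos.2 hpos)]
      refine mul_le_mul ?_ (h3.trans (by gcongr)) (abs_nonneg _) (by norm_num)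
      rw [inv_le_comm₀ hpos (by norm_num)]
      linarith
    rw [h5]
    have h7 := iwNorm_nonneg (P := P) z
    rw [abs_le] at h1 h6 ⊢
    constructor <;> nlinarith [h1.1, h1.2, h6.1, h6.2]
  have hlt := hfail h' hh'Y hh'1 b' y v' (le_max_left _ _) (fun i hi => by
      obtain ⟨p, hp, hpi⟩ := apply_conv_ne hi
      have h1 := hxsupp p i hpi
      have h6 := hRN p hp
      have h7 : bp p ≤ R.sup bp := Finset.le_sup hp
      omega) hy1
    (fun f w hf hw => avg_light_le_mul hJ hn (by linarith) hε.le hS (fun p _ => hxsupp p)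
      (fun p hp p' hp' => hLsep p (hRL hp) p' (hRL hp')) (fun p _ => hx1 p) hf hw) hv' hnear
  refine ⟨G, ?_, ?_, ?_, ?_⟩
  · have : R.Nonempty := by
      rw [Finset.nonempty_iff_ne_empty]
      rintro rfl
      simpa using hS.sum_eq
    obtain ⟨p, hp⟩ := this
    exact (hFne p).mono (Finset.subset_biUnion_of_mem F hp)
  · intro k hk
    obtain ⟨p, hp, hk'⟩ := Finset.mem_biUnion.1 hk
    have := hFN p k hk'
    have h6 := hRN p hp
    omega
  · have hq : ∀ p ∈ R, ∀ k ∈ F p, qm R (a k) = p := by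
      intro p hp k hk
      obtain ⟨h3, h4, h5⟩ := hbp p k hk
      obtain ⟨q1, q2, q3⟩ := qm_spec (M := R) (p := a k) ⟨p, hp, h3⟩
      refine le_antisymm ?_ (q3 p hp h3)
      by_contra hcon
      have := hLsep p (hRL hp) _ (hRL q1) (not_le.1 hcon)
      omega
    have hmem : ∀ i ∈ G.image a, ∃ p ∈ R, ∃ k ∈ F p, a k = i := by
      intro i hi
      obtain ⟨k, hk, rfl⟩ := Finset.mem_image.1 hi
      obtain ⟨p, hp, hk'⟩ := Finset.mem_biUnion.1 hk
      exact ⟨p, hp, k, hk', rfl⟩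
    refine SF_comp (F := R) (qm R) ?_ ?_ ?_ (hn ▸ hS.adm) ?_
    · intro i hi
      obtain ⟨p, hp, k, hk, rfl⟩ := hmem i hi
      rw [hq p hp k hk]; exact hp
    · intro i hi j hj hij
      obtain ⟨p, hp, k, hk, rfl⟩ := hmem i hi
      obtain ⟨p', hp', k', hk', rfl⟩ := hmem j hj
      rw [hq p hp k hk, hq p' hp' k' hk']
      by_contra hcon
      have h1 := hLsep p' (hRL hp') p (hRL hp) (not_le.1 hcon)
      have h2 := hbp p k hk
      have h3 := hbp p' k' hk'
      omega
    · intro i hi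
      obtain ⟨p, hp, k, hk, rfl⟩ := hmem i hi
      rw [hq p hp k hk]; exact (hbp p k hk).1
    · intro p hp
      refine SF_subset (fun i hi => ?_) (hFSF p)
      obtain ⟨hi1, hi2⟩ := Finset.mem_filter.1 hi
      obtain ⟨p', hp', k, hk, rfl⟩ := hmem i hi1
      rw [hq p' hp' k hk] at hi2
      subst hi2
      exact Finset.mem_image_of_mem _ hk
  · have h1 : 0 < 1 - ε := by linarith
    rw [← hh, mul_div_assoc', div_le_iff₀ h1]
    rw [hh', pull_smul, inv_mul_lt_iff₀ hpos] at hlt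
    nlinarith

/-- Every infinite dimensional subspace of the dual contains norm one functionals far out
along the basis which are almost normed by vectors on which light functionals of the norming
set act as on an average. -/
theorem james (hX : IsIWRealization P X e) {Y : Submodule ℝ (X →L[ℝ] ℝ)}
    (hY : ¬ FiniteDimensional ℝ Y) {J : ℕ} (hJ : 1 ≤ J) {ε : ℝ} (hε : 0 < ε) (hε1 : ε < 1)
    (A : ℕ) :
    ∃ h ∈ Y, ‖h‖ = 1 ∧ ∃ (b' : ℕ) (y v' : c00), A ≤ b' ∧
      (∀ i, y i ≠ 0 → A ≤ i ∧ i ≤ b') ∧ iwNorm P y ≤ 1 ∧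
      (∀ f w, WIW P f w → w < ((P.m J : ℕ) : ℕ∞) → |evalPair f y| ≤ (1 + ε) * wr w) ∧
      v' ∈ K P A b' ∧ Near P (pull e h) v' ε ∧ 1 - ε ≤ pull e h y := by
  by_contra hcon
  push Not at hcon
  obtain ⟨a, b, gv, hab, hsep, ha1, hgv⟩ := block_seq (α := (X →L[ℝ] ℝ) × c00)
    (R := fun k A b y => y.1 ∈ Y ∧ ‖y.1‖ = 1 ∧ y.2 ∈ K P A b ∧
      Near P (pull e y.1) y.2 (ε / 16 * (1 / 2) ^ k)) (fun k A => by
      obtain ⟨b, hb, g, hg, hg1, v, hv, hN⟩ := exists_block_mem hX hY A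
        (δ := ε / 16 * (1 / 2) ^ k) (by positivity)
      exact ⟨b, hb, (g, v), hg, hg1, hv, hN⟩)
  obtain ⟨φ, hφ, hC⟩ := admissible_sum_le (P := P) (f := fun k => (gv k).2) (fun k => (hgv k).2.2.1) hab hsep
  set θ := (1 - ε / 2) / (1 - ε) with hθ
  have hθ1 : 1 < θ := by rw [hθ, one_lt_div (by linarith)]; linarith
  have hNφ : ∀ k, Near P (pull e (gv (φ k)).1) (gv (φ k)).2 (ε / 16 * (1 / 2) ^ k) := fun k =>
    ((hgv (φ k)).2.2.2).mono (by
      gcongr ?_ * ?_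
      exact pow_le_pow_of_le_one (by norm_num) (by norm_num) hφ.le_apply)
  have claim : ∀ p N : ℕ, ∃ F : Finset ℕ, F.Nonempty ∧ (∀ k ∈ F, N ≤ k) ∧
      SF (P.n J * p) (F.image (a ∘ φ)) ∧ θ ^ p ≤ ‖∑ k ∈ F, (gv (φ k)).1‖ := by
    intro p
    induction p with
    | zero =>
      intro N
      refine ⟨{N}, Finset.singleton_nonempty _, by simp, ?_, ?_⟩
      · exact SF_card_le_one (by simp [ha1]) (by simp)
      · simp [(hgv (φ N)).2.1]
    | succ p ih =>
      intro N
      have := james_step hX (Y := Y) (g := fun k => (gv (φ k)).1) (v := fun k => (gv (φ k)).2)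
        (a := a ∘ φ) (b := b ∘ φ) (fun k => (hgv _).1) (fun k => (hgv _).2.2.1) (fun k => hab _)
        (fun k k' h => hsep _ _ (hφ h)) hε hε1 hNφ hJ (A := A)
        (fun h hh hh1 b' y v' h1 h2 h3 h4 h5 h6 => hcon h hh hh1 b' y v' h1 h2 h3 h4 h5 h6)
        (one_le_pow₀ hθ1.le) ih N
      rw [← hθ, ← pow_succ] at this
      exact this
  have hup : ∀ j p : ℕ, P.n J * p ≤ P.n j → θ ^ p ≤ 2 * P.m j + 16 := by
    intro j p hjp
    obtain ⟨F, -, -, hF, hFn⟩ := claim p 0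
    refine hFn.trans ?_
    have h1 := Near.norm_comb_le hX (F := F) (g := fun k => (gv (φ k)).1)
      (v := fun k => (gv (φ k)).2) (s := fun _ => 1) (S := 1) (C := 2 * P.m j + 14)
      (fun k _ => hNφ k) (by simp) zero_le_one (fun k _ => by positivity) (fun x hx => by
        have := hC j F 0 x (fun _ _ => Nat.zero_le _) (SF_mono hjp (fun i hi => by
          obtain ⟨k, -, rfl⟩ := Finset.mem_image.1 hi
          exact ha1 _) hF) hx
        simpa using this)
    simp only [one_smul, one_mul] at h1
    rw [← Finset.mul_sum] at h1
    have := geom_sum_le (F := F) (k0 := 0) (fun k _ => Nat.zero_le _)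
    nlinarith
  have hnJ : 0 < P.n J := n_ge_one P J
  set C := θ ^ ((P.n J : ℝ)⁻¹) with hCdef
  have hC1 : 1 < C := Real.one_lt_rpow hθ1 (by positivity)
  have hCn : C ^ P.n J = θ := by
    rw [hCdef, ← Real.rpow_natCast, ← Real.rpow_mul (by linarith), inv_mul_cancel₀ (by positivity),
      Real.rpow_one]
  obtain ⟨j, hj⟩ := ((P.growth_exp C hC1).eventually_gt_atTop (10 * θ)).exists
  have hm := m_pos P j
  rw [lt_div_iff₀ hm] at hj
  have h1 := hup j (P.n j / P.n J) (Nat.mul_div_le _ _)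
  have h2 : C ^ P.n j ≤ θ ^ (P.n j / P.n J) * θ := by
    rw [← pow_succ, ← hCn, ← pow_mul]
    refine pow_le_pow_right₀ hC1.le ?_
    rw [mul_add, mul_one]
    exact (Nat.lt_mul_div_succ (P.n j) hnJ).le
  have h3 : (2 : ℝ) ≤ P.m j := by exact_mod_cast m_ge_two P j
  nlinarith

end Dual
end IWDual

namespace IWDual
variable {P : IWParams}

/-! ### Exact pairs inside a subspace of the dual -/

/-- If a convex combination `v` of the norming set almost norms a vector `y` on which light
functionals act weakly, then `v` is dominated, up to a small error, by heavy functionals. -/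
lemma heavy_dom {a b J : ℕ} {v y : c00} {ε : ℝ} (hv : v ∈ K P a b) (hε0 : 0 ≤ ε)
    (hε : ε ≤ 1 / 2) (hy : iwNorm P y ≤ 1)
    (hlight : ∀ f w, WIW P f w → w < ((P.m J : ℕ) : ℕ∞) → |evalPair f y| ≤ (1 + ε) * wr w)
    (hvy : 1 - 2 * ε ≤ evalPair v y) (x : c00) :
    ∃ r w, W0 P r w ∧ ((P.m J : ℕ) : ℕ∞) ≤ w ∧ (∀ i, r i ≠ 0 → a ≤ i ∧ i ≤ b) ∧
      evalPair v x ≤ evalPair r x + 8 * ε * iwNorm P x := by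
  by_contra hcon
  push Not at hcon
  have hN := iwNorm_nonneg (P := P) x
  set N := iwNorm P x with hNdef
  have h0 := hcon 0 (P.m J : ℕ) (Or.inl rfl) le_rfl (by simp)
  rw [ev_zero_left, zero_add] at h0
  -- the functional `f ↦ f(x) + 4‖x‖ f(y)` separates `v` from all the generators of `K`
  have hsub : K P a b ⊆
      {f | (evL.flip (x + (4 * N) • y)) f < evalPair v x - 8 * ε * N + 4 * N} := by
    refine convexHull_min ?_ (convex_halfSpace_lt (LinearMap.isLinear _) _)
    rintro f ⟨⟨w, hf⟩, hs⟩
    rw [Set.mem_ofPred_eq, LinearMap.flip_apply, evL_apply, ev_add_right, ev_smul_right]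
    by_cases hw : w < ((P.m J : ℕ) : ℕ∞)
    · have h1 := (le_abs_self _).trans (hlight f w hf hw)
      have h2 : wr w ≤ 1 / 2 := by
        rcases W_cases hf with ⟨rfl, -⟩ | ⟨js, M, g, u, hjs, -, -, -, rfl⟩
        · exact absurd hw not_top_lt
        · rw [wr_nat, one_div]
          have : (2 : ℝ) ≤ wgt P js := by exact_mod_cast wgt_ge_two hjs
          gcongr
      have h3 := ev_le ⟨w, hf⟩ x
      have h4 := wr_nonneg w
      have h5 : evalPair f y ≤ 3 / 4 := by nlinarith
      have h6 : 4 * N * evalPair f y ≤ 4 * N * (3 / 4) := by gcongr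
      linarith
    · have h1 := hcon f w (Or.inr hf) (not_lt.1 hw) hs
      have h2 := (ev_le ⟨w, hf⟩ y).trans hy
      have h6 : 4 * N * evalPair f y ≤ 4 * N * 1 := by gcongr
      linarith
  have h1 := hsub hv
  rw [Set.mem_ofPred_eq, LinearMap.flip_apply, evL_apply, ev_add_right, ev_smul_right] at h1
  have h6 : 4 * N * (1 - 2 * ε) ≤ 4 * N * evalPair v y := by gcongr
  linarith

section Dual

variable {X : Type*} [NormedAddCommGroup X] [NormedSpace ℝ X] {e : ℕ → X}

/-- Every infinite dimensional subspace of the dual contains a norm one functional which is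
almost normed by a vector of type `GoodZ` for a prescribed index `j`. -/
theorem exists_pair (hX : IsIWRealization P X e) {Y : Submodule ℝ (X →L[ℝ] ℝ)}
    (hY : ¬ FiniteDimensional ℝ Y) {j : ℕ} (hj : 1 ≤ j) {δ : ℝ} (hδ : 0 < δ) (hδ1 : δ ≤ 1)
    (N : ℕ) :
    ∃ f ∈ Y, ‖f‖ = 1 ∧ ∃ (a b : ℕ) (z v : c00), a ≤ b ∧ GoodZ P j N a b δ z ∧ v ∈ K P a b ∧
      Near P (pull e f) v δ ∧ 1 - δ ≤ pull e f z := by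
  have hm := m_pos P j
  have hm2 : (2 : ℝ) ≤ P.m j := by exact_mod_cast m_ge_two P j
  set η := δ / (4 * P.m j) with hη
  have hη0 : 0 < η := by positivity
  have hη1 : η ≤ 1 / 8 := by
    rw [hη, div_le_iff₀ (by positivity)]; linarith
  set θ := δ / (100 * P.m j) with hθ
  have hθ0 : 0 < θ := by positivity
  have hθη : θ ≤ η := by rw [hθ, hη]; gcongr; norm_num
  have hθδ : θ ≤ δ / 100 := by rw [hθ]; gcongr; linarith
  have hJ : ∀ p : ℕ, ∃ J, 1 ≤ J ∧ (p : ℝ) / η ≤ P.m J := fun p => exists_m_large P _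
  choose J hJ1 hJp using hJ
  have hεle : ∀ p : ℕ, θ * (1 / 2) ^ p ≤ θ := fun p =>
    mul_le_of_le_one_right hθ0.le (pow_le_one₀ (by norm_num) (by norm_num))
  have hε0 : ∀ p : ℕ, 0 < θ * (1 / 2) ^ p := fun p => by positivity
  have hjam := fun p : ℕ => james hX hY (hJ1 p) (hε0 p) (by linarith [hεle p]) p
  choose h hhY hh1 bp y v hpb hys hy1 hyl hv hNv hhy using hjam
  have hfast : ∀ p : ℕ, (p : ℝ) ≤ η * P.m (J p) := fun p => by
    have := hJp p
    rwa [div_le_iff₀' hη0] at this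
  have hpJ : ∀ p : ℕ, p ≤ P.m (J p) := fun p => by
    have h1 := hfast p
    have h2 := m_pos P (J p)
    have : (p : ℝ) ≤ P.m (J p) := by nlinarith
    exact_mod_cast this
  obtain ⟨L, hLinf, hL1, hLsep⟩ := exists_sep bp hpb
  have hRIS : RIS P L bp y J η :=
    { supp := fun p _ => hys p
      sep := hLsep
      norm := fun p _ => hy1 p
      wt := fun p _ f w hf hw => (hyl p f w hf hw).trans (by
        have := wr_nonneg w
        have := hεle p
        gcongr
        linarith)
      fast := fun p _ => hfast p }
  obtain ⟨R, c, hRL, hRN, hc0, hc1, hRS, a, b, hab, hG⟩ :=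
    hRIS.exists_goodZ hj hδ hδ1 hLinf hη0.le le_rfl N
  set z := (P.m j : ℝ) • ∑ p ∈ R, c p • y p with hz
  set f := (P.m j : ℝ)⁻¹ • ∑ p ∈ R, h p with hf
  have hsum : ∑ p ∈ R, θ * (1 / 2 : ℝ) ^ p ≤ 2 * θ := by
    rw [← Finset.mul_sum]
    have := geom_sum_le (F := R) (k0 := 0) (fun k _ => Nat.zero_le _)
    nlinarith
  have hvy : ∀ p, 1 - 2 * (θ * (1 / 2) ^ p) ≤ evalPair (v p) (y p) := by
    intro p
    have h1 := hNv p (y p)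
    have h2 : θ * (1 / 2) ^ p * iwNorm P (y p) ≤ θ * (1 / 2) ^ p :=
      mul_le_of_le_one_right (hε0 p).le (hy1 p)
    rw [abs_le] at h1
    linarith [h1.2, hhy p]
  have hup : ∀ x, iwNorm P x ≤ 1 → pull e f x ≤ 1 + 18 * θ := by
    intro x hx
    have hd := fun p => heavy_dom (hv p) (hε0 p).le (by linarith [hεle p]) (hy1 p) (hyl p) (hvy p) x
    choose r w hr hw hrs hrx using hd
    have hmem := op_of_seq (F := R) (a := fun p => p) (b := bp) (j := j) (r := r) (w := w)
      (fun p _ => hpb p) (fun p hp p' hp' => hLsep p (hRL hp) p' (hRL hp'))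
      (by simpa using hRS) (fun p _ => hr p) (fun p _ => hrs p)
      (fun p hp p' hp' hpp => by
        refine lt_of_lt_of_le ?_ (hw p')
        have h1 := hLsep p (hRL hp) p' (hRL hp') hpp
        have h2 := hpJ p'
        exact_mod_cast h1.trans_le h2)
    have h1 := (ev_le hmem x).trans hx
    rw [ev_smul_left, ev_sum_left] at h1
    rw [hf, pull_smul, pull_sum]
    have h2 : ∑ p ∈ R, pull e (h p) x ≤
        ∑ p ∈ R, evalPair (r p) x + 9 * ∑ p ∈ R, θ * (1 / 2 : ℝ) ^ p := by
      rw [Finset.mul_sum, ← Finset.sum_add_distrib]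
      refine Finset.sum_le_sum fun p _ => ?_
      have h3 := (abs_le.1 (hNv p x)).2
      have h4 := hrx p
      have h5 : θ * (1 / 2) ^ p * iwNorm P x ≤ θ * (1 / 2) ^ p :=
        mul_le_of_le_one_right (hε0 p).le hx
      linarith
    have h3 : (P.m j : ℝ)⁻¹ ≤ 1 := inv_le_one_of_one_le₀ (by linarith)
    have h4 : 0 < (P.m j : ℝ)⁻¹ := by positivity
    calc (P.m j : ℝ)⁻¹ * ∑ p ∈ R, pull e (h p) x
        ≤ (P.m j : ℝ)⁻¹ * (∑ p ∈ R, evalPair (r p) x + 18 * θ) := by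
          gcongr; linarith
      _ ≤ 1 + 18 * θ := by rw [mul_add]; nlinarith
  have hfn : ‖f‖ ≤ 1 + 18 * θ := by
    refine norm_le_of_ball hX fun x hx => abs_le'.2 ⟨hup x hx, ?_⟩
    rw [← map_neg]
    refine hup _ ?_
    have := iwNorm_smul_le (P := P) (-1) x
    simp only [abs_neg, abs_one, one_mul, neg_smul, one_smul] at this
    exact this.trans hx
  have hcross : ∀ s ∈ R, ∀ p ∈ R, s ≠ p → -(θ * (1 / 2) ^ s) ≤ pull e (h s) (y p) := by
    intro s hs p hp hsp
    have h0 : evalPair (v s) (y p) = 0 := by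
      refine ev_eq_zero fun i hi => ?_
      by_contra hyi
      have h1 := K_supp (hv s) i hi
      have h2 := hys p i hyi
      rcases lt_or_gt_of_ne hsp with hlt | hlt
      · have := hLsep s (hRL hs) p (hRL hp) hlt; omega
      · have := hLsep p (hRL hp) s (hRL hs) hlt; omega
    have h1 := hNv s (y p)
    rw [h0, sub_zero] at h1
    have h2 : θ * (1 / 2) ^ s * iwNorm P (y p) ≤ θ * (1 / 2) ^ s :=
      mul_le_of_le_one_right (hε0 s).le (hy1 p)
    linarith [(abs_le.1 h1).1]
  have hlow : 1 - 2 * θ ≤ pull e f z := by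
    have h1 : pull e f z = pull e (∑ p ∈ R, h p) (∑ p ∈ R, c p • y p) := by
      rw [hf, hz, pull_smul, map_smul, smul_eq_mul, ← mul_assoc, inv_mul_cancel₀ hm.ne', one_mul]
    rw [h1]
    refine map_conv_ge hc0 hc1 fun p hp => ?_
    rw [pull_sum, ← Finset.add_sum_erase R _ hp]
    have h2 : -∑ s ∈ R.erase p, θ * (1 / 2 : ℝ) ^ s ≤ ∑ s ∈ R.erase p, pull e (h s) (y p) := by
      rw [← Finset.sum_neg_distrib]
      exact Finset.sum_le_sum fun s hs =>
        hcross s (Finset.mem_of_mem_erase hs) p hp (Finset.ne_of_mem_erase hs)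
    have h3 := Finset.add_sum_erase R (fun s => θ * (1 / 2 : ℝ) ^ s) hp
    linarith [hhy p]
  have hflow : 1 / 10 ≤ ‖f‖ := by
    have h1 := (le_abs_self _).trans (norm_ge_of_pull hX (g := f) hG.z0)
    have h2 : ‖f‖ * (1 + 4 * δ) ≤ ‖f‖ * 5 := by gcongr; linarith
    linarith
  have hpos : 0 < ‖f‖ := by linarith
  set f' := ‖f‖⁻¹ • f with hf'
  have hf'1 : ‖f'‖ = 1 := by
    rw [hf', norm_smul, norm_inv, norm_norm, inv_mul_cancel₀ hpos.ne']
  have hf'Y : f' ∈ Y := Y.smul_mem _ (Y.smul_mem _ (Y.sum_mem fun k _ => hhY k))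
  obtain ⟨u, hu, hua⟩ := K_approx (P := P) (g := pull e f') (fun x => by
    simpa [hf'1] using pull_abs_le hX f' x) a b (δ := δ / 2) (by positivity)
  have hf'z : 1 - δ ≤ pull e f' z := by
    rw [hf', pull_smul, le_inv_mul_iff₀ hpos]
    nlinarith
  refine ⟨f', hf'Y, hf'1, a, b, z, u, ?_, hG, hu, ?_, hf'z⟩
  · have hz0 : z ≠ 0 := by
      intro h0
      rw [h0, map_zero] at hlow
      linarith
    obtain ⟨i, hi⟩ := Finsupp.ne_iff.1 hz0
    have := hG.supp i hi
    omega
  · intro x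
    have h1 := hua x
    set x' := x - rst (Set.Icc a b) x with hx'
    have h2 : ∀ p ∈ R, evalPair (v p) x' = 0 := by
      intro p hp
      rw [hx', ev_sub_right, ← ev_rst, rst_eq_self, sub_self]
      intro i hi
      have h1 := K_supp (hv p) i hi
      obtain ⟨h3, h4⟩ := hab p hp
      exact ⟨by omega, by omega⟩
    have h4 : iwNorm P x' ≤ 2 * iwNorm P x := by
      rw [hx', sub_eq_add_neg, ← neg_one_smul ℝ (rst _ x)]
      refine (iwNorm_add_le _ _).trans ?_
      have := iwNorm_smul_le (P := P) (-1) (rst (Set.Icc a b) x)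
      have h5 := iwNorm_rst_le (P := P) (Set.Icc a b) x
      simp only [abs_neg, abs_one, one_mul] at this
      linarith
    have h7 := iwNorm_nonneg (P := P) x
    have h3 : |pull e (∑ p ∈ R, h p) x'| ≤ 2 * θ * (2 * iwNorm P x) := by
      rw [pull_sum]
      calc |∑ p ∈ R, pull e (h p) x'| ≤ ∑ p ∈ R, |pull e (h p) x'| :=
            Finset.abs_sum_le_sum_abs _ _
        _ ≤ ∑ p ∈ R, θ * (1 / 2 : ℝ) ^ p * iwNorm P x' := Finset.sum_le_sum fun p hp => by
            have := hNv p x'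
            rwa [h2 p hp, sub_zero] at this
        _ ≤ 2 * θ * (2 * iwNorm P x) := by
            rw [← Finset.sum_mul]
            have := iwNorm_nonneg (P := P) x'
            gcongr
    have h5 : pull e f' x = pull e f' (rst (Set.Icc a b) x) +
        ‖f‖⁻¹ * ((P.m j : ℝ)⁻¹ * pull e (∑ p ∈ R, h p) x') := by
      rw [← pull_smul, ← hf, ← pull_smul, ← hf', ← map_add, hx', add_sub_cancel]
    have h6 : |‖f‖⁻¹ * ((P.m j : ℝ)⁻¹ * pull e (∑ p ∈ R, h p) x')| ≤
        10 * (1 * (2 * θ * (2 * iwNorm P x))) := by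
      rw [abs_mul, abs_mul, abs_of_pos (inv_pos.2 hpos), abs_of_pos (inv_pos.2 hm)]
      have i1 : ‖f‖⁻¹ ≤ 10 := by
        rw [inv_le_comm₀ hpos (by norm_num)]
        linarith
      have i2 : (P.m j : ℝ)⁻¹ ≤ 1 := inv_le_one_of_one_le₀ (by linarith)
      gcongr
    rw [h5]
    rw [abs_le] at h1 h6 ⊢
    constructor <;> nlinarith [h1.1, h1.2, h6.1, h6.2]

end Dual
end IWDual

namespace IWDual
variable {P : IWParams}

/-! ### Sums of exact pairs of different indices -/

lemma GoodZ.mono {j N a b : ℕ} {δ δ' : ℝ} {z : c00} (h : GoodZ P j N a b δ z) (hδ : δ ≤ δ') :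
    GoodZ P j N a b δ' z where
  supp := h.supp
  lt := h.lt
  z1 := fun g w hg => (h.z1 g w hg).trans (by linarith)
  z2 := fun js M g v α q h1 h2 h3 h4 h5 h6 h7 =>
    (h.z2 js M g v α q h1 h2 h3 h4 h5 h6 h7).trans (by linarith)
  z0 := h.z0.trans (by linarith)

lemma lacunary_sum {l : ℕ} {m : Fin l → ℝ} (S : Finset (Fin l)) (hm : ∀ i, 0 ≤ m i)
    (h : ∀ i i', i < i' → 4 * m i ≤ m i') {B : ℝ} (hB : 0 ≤ B) (hS : ∀ i ∈ S, 4 * m i ≤ B) :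
    3 * ∑ i ∈ S, m i ≤ B := by
  induction S using Finset.induction_on_max generalizing B with
  | empty => simpa using hB
  | insert a S ha ih =>
    rw [Finset.sum_insert (fun h => lt_irrefl _ (ha a h))]
    have h1 := ih (hm a) (fun i hi => h i a (ha i hi))
    have h2 := hS a (Finset.mem_insert_self _ _)
    linarith

lemma partial_norm_le {l : ℕ} {a b : Fin l → ℕ} {z : Fin l → c00}
    (hsupp : ∀ i t, z i t ≠ 0 → a i ≤ t ∧ t ≤ b i) (hsep : ∀ i i', i < i' → b i < a i')
    (s : Fin l → ℝ) (S : Finset (Fin l)) :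
    iwNorm P (∑ i ∈ S, s i • z i) ≤ iwNorm P (∑ i, s i • z i) := by
  have h : ∑ i ∈ S, s i • z i = rst {t | ∃ i ∈ S, a i ≤ t ∧ t ≤ b i} (∑ i, s i • z i) := by
    rw [map_sum, ← Finset.sum_subset (Finset.subset_univ S)]
    · refine Finset.sum_congr rfl fun i hi => ?_
      rw [map_smul, rst_eq_self]
      exact fun t ht => ⟨i, hi, hsupp i t ht⟩
    · intro i _ hi
      rw [map_smul, smul_eq_zero]
      right
      ext t
      by_contra ht
      obtain ⟨⟨i', hi', h1, h2⟩, h3⟩ := rst_ne_zero ht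
      have h4 := hsupp i t h3
      rcases lt_trichotomy i i' with hlt | heq | hlt
      · have := hsep i i' hlt; omega
      · exact hi (heq ▸ hi')
      · have := hsep i' i hlt; omega
  rw [h]
  exact iwNorm_rst_le _ _

/-- Vectors of type `GoodZ` with lacunary indices, in increasing position along the basis, are
almost isometrically `c₀`-like from above: a functional acts on them either as a unit fraction
of another functional, or essentially on a single one, or with geometrically decreasing
weights. -/
theorem sum_norm_le {l : ℕ} {j N a b : Fin l → ℕ} {z : Fin l → c00} {s : Fin l → ℝ} {δ : ℝ}
    {α : ℕ} (hα1 : 1 ≤ α) (hα : ∀ i, α ≤ a i) (hδ0 : 0 ≤ δ) (hj1 : ∀ i, 1 ≤ j i)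
    (hj2 : ∀ i, 2 * P.m (j i) ≤ P.m (j i + 1))
    (hj4 : ∀ i i', i < i' → 4 * P.m (j i) ≤ P.m (j i'))
    (hG : ∀ i, GoodZ P (j i) (N i) (a i) (b i) δ (z i))
    (hbN : ∀ i i', i < i' → b i ≤ N i') (hs : ∀ i, |s i| ≤ 1)
    (hmα : ∀ i, 2 * (P.m (j i) : ℝ) / α ≤ δ) :
    iwNorm P (∑ i, s i • z i) ≤ 1 + 8 * (l + 1) * δ := by
  have hsep : ∀ i i', i < i' → b i < a i' := fun i i' h => (hbN i i' h).trans_lt (hG i').lt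
  have hjm : ∀ i i', i < i' → j i < j i' := fun i i' h => by
    have h1 := hj4 i i' h
    have h2 := m_ge_two P (j i)
    exact P.m_mono.lt_iff_lt.1 (by omega)
  set Z := ∑ i, s i • z i with hZ
  set C := iwNorm P Z with hC
  by_contra hcon
  push Not at hcon
  have hl0 : (0 : ℝ) ≤ l := Nat.cast_nonneg l
  have hlδ : 0 ≤ l * δ := by positivity
  -- sums of small terms
  have hsmall : ∀ (S : Finset (Fin l)) (t : Fin l → ℝ) (D : ℝ), 0 ≤ D → (∀ i ∈ S, |t i| ≤ D) →
      |∑ i ∈ S, s i * t i| ≤ l * D := by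
    intro S t D hD ht
    calc |∑ i ∈ S, s i * t i| ≤ ∑ i ∈ S, |s i * t i| := Finset.abs_sum_le_sum_abs _ _
      _ ≤ ∑ _i ∈ S, D := Finset.sum_le_sum fun i hi => by
          rw [abs_mul]
          exact (mul_le_of_le_one_left (abs_nonneg _) (hs i)).trans (ht i hi)
      _ ≤ l * D := by
          rw [Finset.sum_const, nsmul_eq_mul]
          have : S.card ≤ l := by simpa using Finset.card_le_univ S
          have : (S.card : ℝ) ≤ l := by exact_mod_cast this
          gcongr
  have hexp : ∀ g, evalPair g Z = ∑ i, s i * evalPair g (z i) := fun g => by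
    rw [hZ, ev_sum_right]
    exact Finset.sum_congr rfl fun i _ => ev_smul_right _ _ _
  have hpart : ∀ (S : Finset (Fin l)) (g : c00), memWIW P g →
      |∑ i ∈ S, s i * evalPair g (z i)| ≤ C := by
    intro S g hg
    have h1 := abs_ev_le hg (∑ i ∈ S, s i • z i)
    rw [ev_sum_right] at h1
    simp only [ev_smul_right] at h1
    exact h1.trans (partial_norm_le (fun i => (hG i).supp) hsep s S)
  have key : ∀ f w, WIW P f w → evalPair f Z ≤ (C + (1 + 8 * (l + 1) * δ)) / 2 := by
    intro f w hf
    rcases W_cases hf with ⟨rfl, -⟩ | ⟨js, M, g, v, hjs, hop, hgM, rfl, rfl⟩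
    · rw [hexp]
      have := (le_abs_self _).trans (hsmall Finset.univ (fun i => evalPair f (z i)) δ hδ0
        (fun i _ => by simpa [wr] using (hG i).z1 f ⊤ hf))
      linarith
    have hw0 := wgt_pos' P js
    have hw2 : (2 : ℝ) ≤ wgt P js := by exact_mod_cast wgt_ge_two hjs
    have hop0 : ∀ x, evalPair (opF P js M g) x =
        (wgt P js : ℝ)⁻¹ * ∑ q ∈ M, evalPair (g q) x := fun x => by
      rw [opF, ev_smul_left, ev_sum_left]
    rcases first_piece hop α with h0 | ⟨q, hq, hqne, hq1, hq2⟩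
    · have : ∀ i, evalPair (opF P js M g) (z i) = 0 := by
        intro i
        rw [hop0, Finset.sum_eq_zero, mul_zero]
        intro q hq
        refine ev_eq_zero fun t ht => ?_
        by_contra hzt
        exact ht (h0 q hq t ((hα i).trans ((hG i).supp t hzt).1))
      rw [hexp]
      simp only [this, mul_zero, Finset.sum_const_zero]
      linarith
    have hqmem : memWIW P (g q) := ⟨_, hgM q hq⟩
    have happ : ∀ i, (ord P js < P.n (j i) ∨ (ord P js = P.n (j i) ∧ ∃ q ∈ M, q ≤ N i)) →
        |evalPair (opF P js M g) (z i) - (wgt P js : ℝ)⁻¹ * evalPair (g q) (z i)| ≤ 2 * δ := by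
      intro i hi
      have := (hG i).z2 js M g v α q hjs hop hi hα1 hq
        (fun q' hq' hlt t ht => hq1 q' hq' hlt t ((hα i).trans ht)) hq2
      linarith [hmα i]
    have hS : ∀ S : Finset (Fin l), (∀ i ∈ S,
        |evalPair (opF P js M g) (z i) - (wgt P js : ℝ)⁻¹ * evalPair (g q) (z i)| ≤ 2 * δ) →
        ∑ i ∈ S, s i * evalPair (opF P js M g) (z i) ≤
          (wgt P js : ℝ)⁻¹ * C + 2 * (l * δ) := by
      intro S hS
      have h1 := (le_abs_self _).trans (hsmall S (fun i => evalPair (opF P js M g) (z i) -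
        (wgt P js : ℝ)⁻¹ * evalPair (g q) (z i)) (2 * δ) (by linarith) hS)
      have h2 := (le_abs_self _).trans (hpart S (g q) hqmem)
      have h3 : (wgt P js : ℝ)⁻¹ * ∑ i ∈ S, s i * evalPair (g q) (z i) ≤
          (wgt P js : ℝ)⁻¹ * C := by gcongr
      have h4 : ∑ i ∈ S, s i * (evalPair (opF P js M g) (z i) -
          (wgt P js : ℝ)⁻¹ * evalPair (g q) (z i)) =
          ∑ i ∈ S, s i * evalPair (opF P js M g) (z i) -
            (wgt P js : ℝ)⁻¹ * ∑ i ∈ S, s i * evalPair (g q) (z i) := by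
        rw [Finset.mul_sum, ← Finset.sum_sub_distrib]
        exact Finset.sum_congr rfl fun i _ => by ring
      linarith
    have hC0 : 0 ≤ C := iwNorm_nonneg _
    have hhalf : (wgt P js : ℝ)⁻¹ * C ≤ 1 / 2 * C := by
      have : (wgt P js : ℝ)⁻¹ ≤ 1 / 2 := by rw [one_div]; gcongr
      gcongr
    by_cases hcase : ∃ h, ord P js = P.n (j h) ∧ ∀ q ∈ M, N h < q
    · obtain ⟨h, hh, hM⟩ := hcase
      have hleft : ∀ i, i < h → ∀ q ∈ M, evalPair (g q) (z i) = 0 := by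
        intro i hi q hq
        refine ev_eq_zero fun t ht => ?_
        by_contra hzt
        have h1 := hop.lo q hq t ht
        have h2 := (hG i).supp t hzt
        have h3 := hM q hq
        have h4 := hbN i h hi
        omega
      have hleft' : ∀ i, i < h → evalPair (opF P js M g) (z i) = 0 := by
        intro i hi
        rw [hop0, Finset.sum_eq_zero (hleft i hi), mul_zero]
      have hright : ∀ i, h < i →
          |evalPair (opF P js M g) (z i) - (wgt P js : ℝ)⁻¹ * evalPair (g q) (z i)| ≤ 2 * δ :=
        fun i hi => happ i (Or.inl (hh ▸ P.n_mono (hjm h i hi)))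
      by_cases hact : ∃ t, b h < t ∧ g q t ≠ 0
      · -- the first acting piece reaches beyond `z h`, hence it is the only one acting on `z h`
        obtain ⟨t, hbt, htq⟩ := hact
        have heq : evalPair (opF P js M g) (z h) = (wgt P js : ℝ)⁻¹ * evalPair (g q) (z h) := by
          rw [hop0, Finset.sum_eq_single_of_mem q hq]
          intro q' hq' hne
          refine ev_eq_zero fun t' ht' => ?_
          by_contra hzt
          have h2 := (hG h).supp t' hzt
          rcases lt_or_gt_of_ne hne with hlt | hlt
          · exact ht' (hq1 q' hq' hlt t' ((hα h).trans h2.1))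
          · have h3 := (hop.sep q hq q' hq' hlt t htq).1
            have h4 := hop.lo q' hq' t' ht'
            omega
        have := hS Finset.univ (fun i _ => by
          rcases lt_trichotomy i h with hlt | rfl | hlt
          · rw [hleft' i hlt, hleft i hlt q hq]; simpa using hδ0
          · rw [heq]; simpa using hδ0
          · exact hright i hlt)
        rw [hexp]
        nlinarith
      · push Not at hact
        have hother : ∀ i ∈ Finset.univ.erase h, |evalPair (opF P js M g) (z i)| ≤ 2 * δ := by
          intro i hi
          rcases lt_or_gt_of_ne (Finset.ne_of_mem_erase hi) with hlt | hlt
          · rw [hleft' i hlt, abs_zero]; linarith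
          · have h1 := hright i hlt
            have h2 : evalPair (g q) (z i) = 0 := by
              refine ev_eq_zero fun t ht => ?_
              by_contra hzt
              have h2 := (hG i).supp t hzt
              have h3 := hsep h i hlt
              exact ht (hact t (by omega))
            rwa [h2, mul_zero, sub_zero] at h1
        have h1 := (le_abs_self _).trans (hsmall _ (fun i => evalPair (opF P js M g) (z i))
          (2 * δ) (by linarith) hother)
        have h2 : s h * evalPair (opF P js M g) (z h) ≤ 1 + 4 * δ := by
          refine (le_abs_self _).trans ?_
          rw [abs_mul]
          exact (mul_le_of_le_one_left (abs_nonneg _) (hs h)).trans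
            ((abs_ev_le ⟨_, hf⟩ _).trans (hG h).z0)
        rw [hexp, ← Finset.add_sum_erase _ _ (Finset.mem_univ h)]
        nlinarith
    · push Not at hcase
      have hsplit := Finset.sum_filter_add_sum_filter_not Finset.univ
        (fun i => P.n (j i) < ord P js) (fun i => s i * evalPair (opF P js M g) (z i))
      have h1 := hS (Finset.univ.filter fun i => ¬ P.n (j i) < ord P js) (fun i hi => by
        have h2 := not_lt.1 (Finset.mem_filter.1 hi).2
        rcases h2.lt_or_eq with h3 | h3
        · exact happ i (Or.inl h3)
        · exact happ i (Or.inr ⟨h3, hcase i h3⟩))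
      rw [hexp, ← hsplit]
      set H := Finset.univ.filter fun i => P.n (j i) < ord P js with hH
      rcases H.eq_empty_or_nonempty with hemp | ⟨i0, hi0⟩
      · rw [hemp, Finset.sum_empty]
        nlinarith
      · have hw : ∀ i ∈ H, 2 * (P.m (j i) : ℝ) ≤ wgt P js := fun i hi => by
          exact_mod_cast le_wgt_of_ord_gt (hj1 i) (hj2 i) (Finset.mem_filter.1 hi).2
        have hw4 : (4 : ℝ) ≤ wgt P js := by
          have h2 := hw i0 hi0
          have h3 : (2 : ℝ) ≤ P.m (j i0) := by exact_mod_cast m_ge_two P (j i0)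
          linarith
        have hq4 : (wgt P js : ℝ)⁻¹ * C ≤ 1 / 4 * C := by
          have : (wgt P js : ℝ)⁻¹ ≤ 1 / 4 := by rw [one_div]; gcongr
          gcongr
        have h2 : 3 * ∑ i ∈ H, (P.m (j i) : ℝ) ≤ 2 * wgt P js :=
          lacunary_sum H (fun i => Nat.cast_nonneg _) (fun i i' h => by exact_mod_cast hj4 i i' h)
            (by positivity) (fun i hi => by linarith [hw i hi])
        have h3 : ∑ i ∈ H, s i * evalPair (opF P js M g) (z i) ≤ 2 / 3 + l * δ := by
          calc ∑ i ∈ H, s i * evalPair (opF P js M g) (z i)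
              ≤ ∑ i ∈ H, ((P.m (j i) : ℝ) * (wgt P js : ℝ)⁻¹ + δ) :=
                Finset.sum_le_sum fun i hi => by
                  refine (le_abs_self _).trans ?_
                  rw [abs_mul]
                  have := (hG i).z1 _ _ hf
                  rw [wr_nat] at this
                  exact (mul_le_of_le_one_left (abs_nonneg _) (hs i)).trans this
            _ = (∑ i ∈ H, (P.m (j i) : ℝ)) * (wgt P js : ℝ)⁻¹ + H.card * δ := by
                rw [Finset.sum_add_distrib, Finset.sum_mul, Finset.sum_const, nsmul_eq_mul]
            _ ≤ 2 / 3 + l * δ := by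
                have h4 : H.card ≤ l := by simpa using Finset.card_le_univ H
                have h5 : (H.card : ℝ) ≤ l := by exact_mod_cast h4
                have h6 : (∑ i ∈ H, (P.m (j i) : ℝ)) * (wgt P js : ℝ)⁻¹ ≤ 2 / 3 := by
                  rw [← div_eq_mul_inv, div_le_iff₀ hw0]; linarith
                have : (H.card : ℝ) * δ ≤ l * δ := by gcongr
                linarith
        nlinarith
  have := iwNorm_le key
  rw [← hC] at this
  linarith

section Dual

variable {X : Type*} [NormedAddCommGroup X] [NormedSpace ℝ X] {e : ℕ → X}

/-- Infinite dimensional subspaces of the dual contain an array with asymptotic model `ℓ₁`: row `i`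
consists of functionals normed by exact vectors of index `J0 + 1 + i`. -/
theorem part_two (hX : IsIWRealization P X e) {Y : Submodule ℝ (X →L[ℝ] ℝ)}
    (hY : ¬ FiniteDimensional ℝ Y) :
    ∃ A : ℕ → ℕ → (X →L[ℝ] ℝ), (∀ i j, A i j ∈ Y) ∧
      (∀ i, Normalized (A i) ∧ WeaklyNull (A i)) ∧ GeneratesAsymptoticModel A l1Norm := by
  classical
  obtain ⟨J0, hJ0⟩ : ∃ J0, ∀ j ≥ J0, 4 * P.m j ≤ P.m (j + 1) := by
    have h := P.growth_ratio.eventually (gt_mem_nhds (show (0 : ℝ) < 1 / 4 by norm_num))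
    obtain ⟨J0, hJ0⟩ := eventually_atTop.1 h
    refine ⟨J0, fun j hj => ?_⟩
    have h1 := hJ0 j hj
    rw [div_lt_iff₀ (m_pos P (j + 1))] at h1
    have h2 : (4 * P.m j : ℝ) ≤ P.m (j + 1) := by linarith
    exact_mod_cast h2
  let jj : ℕ → ℕ := fun i => J0 + 1 + i
  have hjj1 : ∀ i, 1 ≤ jj i := fun i => by simp only [jj]; omega
  have hjj4 : ∀ i, 4 * P.m (jj i) ≤ P.m (jj i + 1) := fun i => hJ0 _ (by simp only [jj]; omega)
  have hjjlt : ∀ i i', i < i' → 4 * P.m (jj i) ≤ P.m (jj i') := fun i i' h =>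
    (hjj4 i).trans (P.m_mono.monotone (by simp only [jj]; omega))
  obtain ⟨aa, bb, y, hab, hsep, -, hy⟩ := block_seq
    (α := ℕ → (X →L[ℝ] ℝ) × (ℕ × ℕ) × c00 × c00)
    (R := fun k A B y => ∀ i, (y i).1 ∈ Y ∧ ‖(y i).1‖ = 1 ∧ (y i).2.1.1 ≤ (y i).2.1.2 ∧
      GoodZ P (jj i) A (y i).2.1.1 (y i).2.1.2 ((1 / 2) ^ k) (y i).2.2.1 ∧
      (y i).2.2.2 ∈ K P (y i).2.1.1 (y i).2.1.2 ∧
      Near P (pull e (y i).1) (y i).2.2.2 ((1 / 2) ^ k) ∧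
      1 - (1 / 2) ^ k ≤ pull e (y i).1 (y i).2.2.1 ∧ (i ≤ k → (y i).2.1.2 ≤ B)) (fun k A => by
      have h := fun i => exists_pair hX hY (hjj1 i) (δ := (1 / 2) ^ k) (by positivity)
        (pow_le_one₀ (by norm_num) (by norm_num)) A
      choose f hfY hf1 a b z v h1 h2 h3 h4 h5 using h
      refine ⟨max A ((Finset.range (k + 1)).sup b), le_max_left _ _,
        fun i => (f i, (a i, b i), z i, v i), fun i => ⟨hfY i, hf1 i, h1 i, h2 i, h3 i, h4 i, h5 i,
        fun hik => le_max_of_le_right (Finset.le_sup (f := b) ?_)⟩⟩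
      rw [Finset.mem_range]; omega)
  choose hyY hy1 hyab hyG hyv hyN hyz hyb using hy
  have haa : ∀ k, k ≤ aa k := fun k => (sep_strictMono hab hsep).le_apply
  have hcross : ∀ i i' k k', i ≤ k → k < k' → (y k i).2.1.2 < (y k' i').2.1.1 := by
    intro i i' k k' hik hk
    have h1 := hyb k i hik
    have h2 := hsep k k' hk
    have h3 := (hyG k' i').lt
    omega
  have hpow : Tendsto (fun k : ℕ => (1 / 2 : ℝ) ^ k) atTop (𝓝 0) :=
    tendsto_pow_atTop_nhds_zero_of_lt_one (by norm_num) (by norm_num)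
  refine ⟨fun i k => (y k i).1, fun i k => hyY k i, fun i => ⟨fun k => hy1 k i, ?_⟩, ?_⟩
  · -- the blocks of row `i` are successive from the position `i` on
    have hwn : WeaklyNull (fun k => (y (k + i) i).1) :=
      weaklyNull_of_near hX (v := fun k => (y (k + i) i).2.2.2)
        (a := fun k => (y (k + i) i).2.1.1) (b := fun k => (y (k + i) i).2.1.2)
        (δ := fun k => (1 / 2) ^ (k + i)) (fun k => hyv _ _) (fun k => hyab _ _)
        (fun k k' h => hcross _ _ _ _ (by omega) (by omega)) (fun k => hyN _ _)
        (fun k => by positivity) ((tendsto_add_atTop_iff_nat i).2 hpow)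
    intro F
    exact (tendsto_add_atTop_iff_nat i).1 (hwn F)
  · intro l c ε hε
    set S := ∑ i, |c i| with hS
    have hS0 : 0 ≤ S := Finset.sum_nonneg fun i _ => abs_nonneg _
    have hl0 : (0 : ℝ) ≤ l := Nat.cast_nonneg l
    obtain ⟨δ, hδ0, hδ1, hδε⟩ : ∃ δ : ℝ, 0 < δ ∧ δ ≤ 1 ∧ 14 * (l + 1) * δ * S < ε := by
      refine ⟨min 1 (ε / (14 * (l + 1) * (S + 1))), by positivity, min_le_left _ _, ?_⟩
      have h1 : min 1 (ε / (14 * (l + 1) * (S + 1))) ≤ ε / (14 * (l + 1) * (S + 1)) :=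
        min_le_right _ _
      rw [le_div_iff₀ (by positivity)] at h1
      have h2 : 0 < min 1 (ε / (14 * (l + 1) * (S + 1))) := by positivity
      have h3 : 0 < 14 * ((l : ℝ) + 1) * min 1 (ε / (14 * (l + 1) * (S + 1))) := by positivity
      nlinarith
    obtain ⟨N1, hN1⟩ := eventually_atTop.1 (hpow.eventually (gt_mem_nhds hδ0))
    obtain ⟨N2, hN2⟩ := exists_nat_gt (2 * (P.m (jj l) : ℝ) / δ)
    refine ⟨max (max N1 N2) (l + 1), fun k hk hkN => ?_⟩
    set N := max (max N1 N2) (l + 1) with hN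
    have hNpos : 0 < (N : ℝ) := by
      have : 0 < N := by omega
      exact_mod_cast this
    have hδk : ∀ i, (1 / 2 : ℝ) ^ (k i) ≤ δ := fun i =>
      (hN1 (k i) (by have := hkN i; omega)).le
    have hik : ∀ i : Fin l, (i : ℕ) ≤ k i := fun i => by
      have := hkN i; have := i.2; omega
    set f : Fin l → (X →L[ℝ] ℝ) := fun i => (y (k i) i).1 with hf
    set z : Fin l → c00 := fun i => (y (k i) i).2.2.1 with hz
    let s : Fin l → ℝ := fun i => if 0 ≤ c i then 1 else -1
    have hs : ∀ i, |s i| ≤ 1 := fun i => by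
      simp only [s]; split_ifs <;> simp
    have hcs : ∀ i, c i * s i = |c i| := fun i => by
      simp only [s]; split_ifs with h
      · rw [mul_one, abs_of_nonneg h]
      · rw [mul_neg_one, abs_of_neg (not_le.1 h)]
    have hZ := sum_norm_le (P := P) (j := fun i : Fin l => jj i) (N := fun i => aa (k i))
      (a := fun i => (y (k i) i).2.1.1) (b := fun i => (y (k i) i).2.1.2) (z := z) (s := s)
      (δ := δ) (α := N) (by omega)
      (fun i => by
        have h1 := (hyG (k i) i).lt
        have h2 := haa (k i)
        have h3 := hkN i
        omega) hδ0.le (fun i => hjj1 i) (fun i => by have := hjj4 i; omega)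
      (fun i i' h => hjjlt i i' h) (fun i => (hyG (k i) i).mono (hδk i))
      (fun i i' h => by
        have h1 := hyb (k i) i (hik i)
        have h2 := hsep _ _ (hk h)
        omega) hs
      (fun i => by
        rw [div_lt_iff₀ hδ0] at hN2
        rw [div_le_iff₀ hNpos]
        have h1 : (P.m (jj i) : ℝ) ≤ P.m (jj l) := by
          exact_mod_cast P.m_mono.monotone (by simp only [jj]; omega)
        have h2 : (N2 : ℝ) ≤ N := by
          have : N2 ≤ N := by omega
          exact_mod_cast this
        nlinarith)
    set Z := ∑ i, s i • z i with hZdef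
    have hdiag : ∀ i, 1 - δ ≤ pull e (f i) (z i) := fun i => by
      have := hyz (k i) i
      have := hδk i
      simp only [hf, hz]
      linarith
    have hoff : ∀ i i', i ≠ i' → |pull e (f i) (z i')| ≤ 5 * δ := by
      intro i i' hne
      have h0 : evalPair (y (k i) i).2.2.2 (z i') = 0 := by
        refine ev_eq_zero fun t ht => ?_
        by_contra hzt
        have h1 := K_supp (hyv (k i) i) t ht
        have h2 := (hyG (k i') i').supp t hzt
        rcases lt_or_gt_of_ne hne with hlt | hlt
        · have := hcross i i' _ _ (hik i) (hk hlt); omega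
        · have := hcross i' i _ _ (hik i') (hk hlt); omega
      have h1 := hyN (k i) i (z i')
      rw [h0, sub_zero] at h1
      refine h1.trans ?_
      have h2 := ((hyG (k i') i').mono (hδk i')).z0
      have h3 : iwNorm P (z i') ≤ 5 := by simp only [hz]; linarith
      calc (1 / 2 : ℝ) ^ (k i) * iwNorm P (z i') ≤ δ * 5 := by
            gcongr
            · exact iwNorm_nonneg _
            · exact hδk i
        _ = 5 * δ := by ring
    have hlow : S * (1 - 6 * (l + 1) * δ) ≤ pull e (∑ i, c i • f i) Z := by
      rw [pull_comb, hS, Finset.sum_mul]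
      refine Finset.sum_le_sum fun i _ => ?_
      have h1 : pull e (f i) Z = s i * pull e (f i) (z i) +
          ∑ i' ∈ Finset.univ.erase i, s i' * pull e (f i) (z i') := by
        rw [hZdef, map_sum, ← Finset.add_sum_erase _ _ (Finset.mem_univ i)]
        simp only [map_smul, smul_eq_mul]
      have h2 : |∑ i' ∈ Finset.univ.erase i, s i' * pull e (f i) (z i')| ≤ l * (5 * δ) := by
        calc |∑ i' ∈ Finset.univ.erase i, s i' * pull e (f i) (z i')|
            ≤ ∑ i' ∈ Finset.univ.erase i, |s i' * pull e (f i) (z i')| :=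
              Finset.abs_sum_le_sum_abs _ _
          _ ≤ ∑ _i' ∈ Finset.univ.erase i, 5 * δ := Finset.sum_le_sum fun i' hi' => by
              rw [abs_mul]
              exact (mul_le_of_le_one_left (abs_nonneg _) (hs i')).trans
                (hoff i i' (Finset.ne_of_mem_erase hi').symm)
          _ ≤ l * (5 * δ) := by
              rw [Finset.sum_const, nsmul_eq_mul]
              have h3 : (Finset.univ.erase i).card ≤ l := by
                simp
              have : ((Finset.univ.erase i).card : ℝ) ≤ l := by exact_mod_cast h3
              gcongr
      have h3 : |c i| * (1 - δ) ≤ |c i| * pull e (f i) (z i) := by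
        gcongr
        exact hdiag i
      have h4 : -(|c i| * (l * (5 * δ))) ≤
          c i * ∑ i' ∈ Finset.univ.erase i, s i' * pull e (f i) (z i') := by
        refine (neg_le_neg ?_).trans (neg_abs_le _)
        rw [abs_mul]
        gcongr
      rw [h1, mul_add (c i), ← mul_assoc (c i), hcs]
      have h5 : 0 ≤ |c i| * (l * δ) := by positivity
      have h6 : 0 ≤ |c i| * δ := by positivity
      nlinarith
    have hup : ‖∑ i, c i • f i‖ ≤ S := by
      refine (norm_sum_le _ _).trans (le_of_eq ?_)
      rw [hS]
      refine Finset.sum_congr rfl fun i _ => ?_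
      rw [norm_smul, Real.norm_eq_abs]
      simp only [hf, hy1, mul_one]
    have h1 := (le_abs_self _).trans (norm_ge_of_pull hX (g := ∑ i, c i • f i) hZ)
    change |‖∑ i, c i • f i‖ - S| < ε
    rw [abs_lt]
    have hT := norm_nonneg (∑ i, c i • f i)
    have hlδ : 0 ≤ (l + 1) * δ := by positivity
    constructor
    · nlinarith [mul_le_mul_of_nonneg_right hup hlδ]
    · linarith

end Dual
end IWDual

/-- The dual `X_iw^*` of the space `X_iw` satisfies: (i) every normalized
weakly null sequence in `X_iw^*` has a subsequence generating a spreading model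
4-equivalent to the unit vector basis of c₀; (ii) every infinite dimensional closed
subspace of `X_iw^*` contains an array of normalized weakly null sequences generating the
unit vector basis of ℓ₁ as an asymptotic model. -/
theorem statement2 (P : IWParams) (X : Type*) [NormedAddCommGroup X] [NormedSpace ℝ X]
    (e : ℕ → X) (hX : IsIWRealization P X e) :
    (∀ f : ℕ → (X →L[ℝ] ℝ), Normalized f → WeaklyNull f →
      ∃ φ : ℕ → ℕ, StrictMono φ ∧
        ∃ ν, GeneratesSpreadingModel (f ∘ φ) ν ∧ NormFamEquiv 4 supNorm ν) ∧
    (∀ Y : Submodule ℝ (X →L[ℝ] ℝ), IsClosed (Y : Set (X →L[ℝ] ℝ)) →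
      ¬ FiniteDimensional ℝ Y →
      ∃ A : ℕ → ℕ → (X →L[ℝ] ℝ), (∀ i j, A i j ∈ Y) ∧
        (∀ i, Normalized (A i) ∧ WeaklyNull (A i)) ∧
        GeneratesAsymptoticModel A l1Norm) := by
  exact ⟨fun _ h1 h2 => IWDual.part_one hX h1 h2, fun _ _ hY => IWDual.part_two hX hY⟩
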